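/- There exists a random point measure ξ which almost surely belongs to 𝒞₂, such that d₄(EM(W_N/N), ξ) → 0 in probability as N → ∞. Moreover, the distribution of ξ is determined by the discrete component ν_d of the spectral measure: if two processes satisfying the standing assumption have the same ν_d, the corresponding limits ξ have the same law. -/

import Mathlib

open MeasureTheory ProbabilityTheory Filter Real

noncomputable section

/-- The square `(-π, π]²` on which the spectral measure lives. -/
def specBox : Set (ℝ × ℝ) := Set.Ioc (-π) π ×ˢ Set.Ioc (-π) π

/-- `(1/N) ∑_j g(λ_j(A))`, the integral of `g` against the empirical spectral
distribution of a symmetric `N × N` real matrix `A` (junk value `0` if `A` is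
not symmetric). -/
def esdEval {N : ℕ} (A : Matrix (Fin N) (Fin N) ℝ) (g : ℝ → ℝ) : ℝ :=
  if hA : A.IsHermitian then (N : ℝ)⁻¹ * ∑ j, g (hA.eigenvalues j) else 0

/-- The (random) empirical spectral distributions of `A N` converge weakly in
probability to the probability measure `μ`: for every bounded continuous `g`,
`∫ g d(ESD(A N)) → ∫ g dμ` in probability. -/
def ESDTendstoInProb {Ω : Type*} [MeasurableSpace Ω] (P : Measure Ω)
    (A : (N : ℕ) → Ω → Matrix (Fin N) (Fin N) ℝ) (μ : Measure ℝ) : Prop :=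
  ∀ g : ℝ → ℝ, Continuous g → (∃ C, ∀ x, |g x| ≤ C) →
    ∀ ε > 0, Tendsto (fun N => P {ω | ε ≤ |esdEval (A N ω) g - ∫ x, g x ∂μ|})
      atTop (nhds 0)

/-- The symmetric matrix `W_N/√N`, where `W_N(i,j) = X_{i,j} + X_{j,i}`,
`1 ≤ i,j ≤ N`. -/
def scaledW {Ω : Type*} (X : ℤ → ℤ → Ω → ℝ) (N : ℕ) (ω : Ω) :
    Matrix (Fin N) (Fin N) ℝ :=
  fun i j => (Real.sqrt N)⁻¹ *
    (X ((i : ℕ) + 1) ((j : ℕ) + 1) ω + X ((j : ℕ) + 1) ((i : ℕ) + 1) ω)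

/-- A centered stationary Gaussian process indexed by `ℤ²` with positive
variance: every finite real linear combination is a centered Gaussian random
variable, and second moments are shift invariant. -/
structure StatGauss {Ω : Type*} [MeasurableSpace Ω] (P : Measure Ω)
    (X : ℤ → ℤ → Ω → ℝ) : Prop where
  meas : ∀ j k, Measurable (X j k)
  gauss : ∀ c : (ℤ × ℤ) →₀ ℝ, ∃ v : NNReal,
    P.map (fun ω => ∑ p ∈ c.support, c p * X p.1 p.2 ω) = gaussianReal 0 v
  var_pos : 0 < ∫ ω, (X 0 0 ω) ^ 2 ∂P
  stat : ∀ j k u v : ℤ,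
    ∫ ω, X j k ω * X (j + u) (k + v) ω ∂P = ∫ ω, X 0 0 ω * X u v ω ∂P

/-- The spectral measure `ν` of the process `X` (from the Herglotz
representation), together with the standing assumption of the paper:
`ν = ν_ac + ν_d`, where `ν_ac` is absolutely continuous with respect to
Lebesgue measure with density `f ≥ 0` and `ν_d = νd` is discrete (supported on
a countable set). -/
structure SpectralDecomp {Ω : Type*} [MeasurableSpace Ω] (P : Measure Ω)
    (X : ℤ → ℤ → Ω → ℝ) (ν νd : Measure (ℝ × ℝ)) (f : ℝ × ℝ → ℝ) : Prop where
  finite : IsFiniteMeasure ν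
  support : ν specBoxᶜ = 0
  herglotz : ∀ u v : ℤ,
    (∫ q, Complex.exp (Complex.I * ((u * q.1 + v * q.2 : ℝ) : ℂ)) ∂ν)
      = ((∫ ω, X 0 0 ω * X u v ω ∂P : ℝ) : ℂ)
  f_nonneg : ∀ q, 0 ≤ f q
  f_meas : Measurable f
  discrete : ∃ s : Set (ℝ × ℝ), s.Countable ∧ νd sᶜ = 0
  decomp : ν = (volume.restrict specBox).withDensity
      (fun q => ENNReal.ofReal (f q)) + νd

/-- A point configuration: the sequences `(α_1(ξ), α_2(ξ), …)` (nonnegative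
part) and `(α_{-1}(ξ), α_{-2}(ξ), …)` (nonpositive part) of a point measure
`ξ = ∞·δ_0 + ∑_{j≠0} δ_{α_j(ξ)}` in `𝒫`. -/
abbrev PtCfg : Type := (ℕ → ℝ) × (ℕ → ℝ)

/-- The eigen measure `EM(A) = ∞·δ_0 + ∑_j δ_{λ_j(A)}` of a symmetric matrix
`A`, recorded as a point configuration: the nonnegative parts of the
eigenvalues sorted in decreasing order (padded with `0`s) and the nonpositive
parts sorted in increasing order (padded with `0`s). -/
def EMcfg {N : ℕ} (A : Matrix (Fin N) (Fin N) ℝ) : PtCfg :=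
  if hA : A.IsHermitian then
    (fun n =>
      (List.insertionSort (· ≥ ·)
        ((List.ofFn hA.eigenvalues).map fun t => max t 0)).getD n 0,
     fun n =>
      (List.insertionSort (· ≤ ·)
        ((List.ofFn hA.eigenvalues).map fun t => min t 0)).getD n 0)
  else (fun _ => 0, fun _ => 0)

/-- `ξ ∈ 𝒞_p`: the point measure `ξ` satisfies `∑_{j≠0} |α_j(ξ)|^p < ∞`. -/
def MemC (p : ℕ) (ξ : PtCfg) : Prop :=
  Summable (fun n => |ξ.1 n| ^ p) ∧ Summable (fun n => |ξ.2 n| ^ p)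

/-- The distance `d_p(ξ₁, ξ₂) = (∑_{j≠0} |α_j(ξ₁) - α_j(ξ₂)|^p)^{1/p}` on
`𝒞_p`. -/
def dPt (p : ℕ) (ξ₁ ξ₂ : PtCfg) : ℝ :=
  ((∑' n, |ξ₁.1 n - ξ₂.1 n| ^ p) + ∑' n, |ξ₁.2 n - ξ₂.2 n| ^ p) ^ ((p : ℝ)⁻¹)

/-- The symmetric matrix `W_N/N`, where `W_N(i,j) = X_{i,j} + X_{j,i}`. -/
def scaledW1 {Ω : Type*} (X : ℤ → ℤ → Ω → ℝ) (N : ℕ) (ω : Ω) :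
    Matrix (Fin N) (Fin N) ℝ :=
  fun i j => (N : ℝ)⁻¹ *
    (X ((i : ℕ) + 1) ((j : ℕ) + 1) ω + X ((j : ℕ) + 1) ((i : ℕ) + 1) ω)

end
noncomputable section

def KC (C : ℝ) : Set PtCfg :=
  {s | Antitone s.1 ∧ Monotone s.2 ∧ (∀ n, 0 ≤ s.1 n) ∧ (∀ n, s.2 n ≤ 0) ∧
    (∀ n : ℕ, ((n : ℝ) + 1) * (s.1 n) ^ 4 ≤ C) ∧ (∀ n : ℕ, ((n : ℝ) + 1) * (s.2 n) ^ 4 ≤ C)}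

def mom (s : PtCfg) (j : ℕ) : ℝ := (∑' n, (s.1 n) ^ (8 + j)) + ∑' n, (s.2 n) ^ (8 + j)

lemma KC_mono {C C' : ℝ} (h : C ≤ C') : KC C ⊆ KC C' := by
  rintro s ⟨h1, h2, h3, h4, h5, h6⟩
  exact ⟨h1, h2, h3, h4, fun n => (h5 n).trans h, fun n => (h6 n).trans h⟩

lemma KC_closed (C : ℝ) : IsClosed (KC C) := by
  have c1 : ∀ n, Continuous fun s : PtCfg => s.1 n := fun n => (continuous_apply n).comp continuous_fst
  have c2 : ∀ n, Continuous fun s : PtCfg => s.2 n := fun n => (continuous_apply n).comp continuous_snd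
  simp only [KC, Antitone, Monotone, Set.ofPred_and, Set.ofPred_forall]
  refine IsClosed.inter ?_ <| IsClosed.inter ?_ <| IsClosed.inter ?_ <| IsClosed.inter ?_ <|
    IsClosed.inter ?_ ?_
  · exact isClosed_iInter fun a => isClosed_iInter fun b => isClosed_iInter fun _ =>
      isClosed_le (c1 _) (c1 _)
  · exact isClosed_iInter fun a => isClosed_iInter fun b => isClosed_iInter fun _ =>
      isClosed_le (c2 _) (c2 _)
  · exact isClosed_iInter fun a => isClosed_le continuous_const (c1 _)
  · exact isClosed_iInter fun a => isClosed_le (c2 _) continuous_const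
  · exact isClosed_iInter fun a => isClosed_le (continuous_const.mul ((c1 _).pow 4)) continuous_const
  · exact isClosed_iInter fun a => isClosed_le (continuous_const.mul ((c2 _).pow 4)) continuous_const

lemma abs_le_of_pow4 {C x : ℝ} {n : ℕ} (h : ((n : ℝ) + 1) * x ^ 4 ≤ C) : |x| ≤ max 1 C := by
  by_contra! hc
  have h1 : 1 < |x| := (le_max_left _ _).trans_lt hc
  have h2 : C < |x| := (le_max_right _ _).trans_lt hc
  have h3 : |x| ≤ |x| ^ 4 := le_self_pow₀ h1.le (by norm_num)
  have h4 : |x| ^ 4 = x ^ 4 := by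
    rw [← abs_pow]; exact abs_of_nonneg (by positivity)
  have h5 : x ^ 4 ≤ ((n : ℝ) + 1) * x ^ 4 := by
    have : 0 ≤ x ^ 4 := by positivity
    nlinarith [Nat.cast_nonneg (α := ℝ) n]
  linarith

lemma pow_bound {C x : ℝ} {n : ℕ} (h : ((n : ℝ) + 1) * x ^ 4 ≤ C) (j : ℕ) :
    ‖x ^ (8 + j)‖ ≤ (max 1 C) ^ j * C ^ 2 * (((n : ℝ) + 1) ^ 2)⁻¹ := by
  have hx := abs_le_of_pow4 h
  have hn : (0 : ℝ) < (n : ℝ) + 1 := by positivity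
  have hx4 : 0 ≤ x ^ 4 := by positivity
  have h4 : x ^ 4 ≤ C / ((n : ℝ) + 1) := by
    rw [le_div_iff₀ hn]; linarith
  have h8 : |x| ^ 8 ≤ C ^ 2 * (((n : ℝ) + 1) ^ 2)⁻¹ := by
    have : |x| ^ 8 = (x ^ 4) ^ 2 := by
      rw [← abs_pow, abs_of_nonneg (by positivity)]; ring
    rw [this]
    calc (x ^ 4) ^ 2 ≤ (C / ((n : ℝ) + 1)) ^ 2 := by gcongr
      _ = _ := by rw [div_pow, div_eq_mul_inv]
  rw [Real.norm_eq_abs, abs_pow, pow_add, mul_comm, mul_assoc]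
  gcongr

lemma summable_bd (c : ℝ) : Summable fun n : ℕ => c * (((n : ℝ) + 1) ^ 2)⁻¹ := by
  refine Summable.mul_left _ ?_
  have := (summable_nat_add_iff 1).2 (Real.summable_nat_pow_inv.2 (by norm_num : 1 < 2))
  simpa using this

lemma KC_summable1 {C : ℝ} {s : PtCfg} (hs : s ∈ KC C) (j : ℕ) :
    Summable fun n => s.1 n ^ (8 + j) :=
  Summable.of_norm_bounded (summable_bd _) fun n => pow_bound (hs.2.2.2.2.1 n) j

lemma KC_summable2 {C : ℝ} {s : PtCfg} (hs : s ∈ KC C) (j : ℕ) :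
    Summable fun n => s.2 n ^ (8 + j) :=
  Summable.of_norm_bounded (summable_bd _) fun n => pow_bound (hs.2.2.2.2.2 n) j

lemma KC_compact (C : ℝ) : IsCompact (KC C) := by
  have hK : IsCompact ((Set.univ.pi fun _ : ℕ => Set.Icc (-(max 1 C)) (max 1 C)) ×ˢ
      (Set.univ.pi fun _ : ℕ => Set.Icc (-(max 1 C)) (max 1 C))) :=
    (isCompact_univ_pi fun _ => isCompact_Icc).prod (isCompact_univ_pi fun _ => isCompact_Icc)
  refine hK.of_isClosed_subset (KC_closed C) ?_
  rintro s ⟨h1, h2, h3, h4, h5, h6⟩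
  exact ⟨fun n _ => abs_le.1 (abs_le_of_pow4 (h5 n)), fun n _ => abs_le.1 (abs_le_of_pow4 (h6 n))⟩

lemma mom_contOn (C : ℝ) : ContinuousOn mom (KC C) := by
  have c1 : ∀ n, Continuous fun s : PtCfg => s.1 n := fun n => (continuous_apply n).comp continuous_fst
  have c2 : ∀ n, Continuous fun s : PtCfg => s.2 n := fun n => (continuous_apply n).comp continuous_snd
  refine continuousOn_pi.2 fun j => ContinuousOn.add ?_ ?_
  · exact continuousOn_tsum (fun n => ((c1 n).pow _).continuousOn) (summable_bd _)
      fun n s hs => pow_bound (hs.2.2.2.2.1 n) j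
  · exact continuousOn_tsum (fun n => ((c2 n).pow _).continuousOn) (summable_bd _)
      fun n s hs => pow_bound (hs.2.2.2.2.2 n) j

/-- integral of `f(x) x^8` against a configuration -/
def wI (f : ℝ → ℝ) (s : PtCfg) : ℝ := (∑' n, f (s.1 n) * (s.1 n) ^ 8) + ∑' n, f (s.2 n) * (s.2 n) ^ 8

lemma wsum1 {C : ℝ} {s : PtCfg} (hs : s ∈ KC C) {f : ℝ → ℝ} {B : ℝ}
    (hf : ∀ x ∈ Set.Icc (-(max 1 C)) (max 1 C), |f x| ≤ B) :
    Summable fun n => f (s.1 n) * (s.1 n) ^ 8 := by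
  refine Summable.of_norm_bounded ((KC_summable1 hs 0).norm.mul_left B) fun n => ?_
  rw [norm_mul]
  gcongr
  · exact hf _ (abs_le.1 (abs_le_of_pow4 (hs.2.2.2.2.1 n)))

lemma wsum2 {C : ℝ} {s : PtCfg} (hs : s ∈ KC C) {f : ℝ → ℝ} {B : ℝ}
    (hf : ∀ x ∈ Set.Icc (-(max 1 C)) (max 1 C), |f x| ≤ B) :
    Summable fun n => f (s.2 n) * (s.2 n) ^ 8 := by
  refine Summable.of_norm_bounded ((KC_summable2 hs 0).norm.mul_left B) fun n => ?_
  rw [norm_mul]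
  gcongr
  · exact hf _ (abs_le.1 (abs_le_of_pow4 (hs.2.2.2.2.2 n)))

lemma wI_poly {C : ℝ} {s t : PtCfg} (hs : s ∈ KC C) (ht : t ∈ KC C) (h : mom s = mom t)
    (p : Polynomial ℝ) : wI (fun x => p.eval x) s = wI (fun x => p.eval x) t := by
  have key : ∀ s ∈ KC C, wI (fun x => p.eval x) s
      = ∑ i ∈ Finset.range (p.natDegree + 1), p.coeff i * mom s i := by
    intro s hs
    unfold wI mom
    simp_rw [Polynomial.eval_eq_sum_range, Finset.sum_mul]
    rw [Summable.tsum_finsetSum, Summable.tsum_finsetSum, ← Finset.sum_add_distrib]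
    · refine Finset.sum_congr rfl fun i _ => ?_
      rw [mul_add, ← tsum_mul_left, ← tsum_mul_left]
      congr 1 <;> (congr 1; ext n; ring)
    · intro i _
      refine ((KC_summable2 hs i).mul_left (p.coeff i)).congr fun n => by ring
    · intro i _
      refine ((KC_summable1 hs i).mul_left (p.coeff i)).congr fun n => by ring
  rw [key s hs, key t ht, h]

lemma wI_near {C : ℝ} {s : PtCfg} (hs : s ∈ KC C) {f g : ℝ → ℝ} {B ε : ℝ}
    (hf : ∀ x ∈ Set.Icc (-(max 1 C)) (max 1 C), |f x| ≤ B)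
    (hg : ∀ x ∈ Set.Icc (-(max 1 C)) (max 1 C), |g x| ≤ B)
    (hfg : ∀ x ∈ Set.Icc (-(max 1 C)) (max 1 C), |f x - g x| ≤ ε) :
    |wI f s - wI g s| ≤ ε * ((∑' n, (s.1 n) ^ 8) + ∑' n, (s.2 n) ^ 8) := by
  unfold wI
  have e : (∑' n, f (s.1 n) * (s.1 n) ^ 8) + (∑' n, f (s.2 n) * (s.2 n) ^ 8)
      - ((∑' n, g (s.1 n) * (s.1 n) ^ 8) + ∑' n, g (s.2 n) * (s.2 n) ^ 8)
      = (∑' n, (f (s.1 n) - g (s.1 n)) * (s.1 n) ^ 8) + ∑' n, (f (s.2 n) - g (s.2 n)) * (s.2 n) ^ 8 := by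
    simp_rw [sub_mul]
    rw [(wsum1 hs hf).tsum_sub (wsum1 hs hg), (wsum2 hs hf).tsum_sub (wsum2 hs hg)]
    ring
  rw [e, mul_add, ← tsum_mul_left, ← tsum_mul_left]
  refine (abs_add_le _ _).trans (add_le_add ?_ ?_)
  · rw [← Real.norm_eq_abs]
    refine tsum_of_norm_bounded (f := fun n => (f (s.1 n) - g (s.1 n)) * s.1 n ^ 8)
      (((KC_summable1 hs 0).mul_left ε).hasSum) fun n => ?_
    rw [norm_mul, Real.norm_eq_abs, Real.norm_eq_abs, abs_of_nonneg (a := s.1 n ^ 8) (by positivity)]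
    gcongr
    exact hfg _ (abs_le.1 (abs_le_of_pow4 (hs.2.2.2.2.1 n)))
  · rw [← Real.norm_eq_abs]
    refine tsum_of_norm_bounded (f := fun n => (f (s.2 n) - g (s.2 n)) * s.2 n ^ 8)
      (((KC_summable2 hs 0).mul_left ε).hasSum) fun n => ?_
    rw [norm_mul, Real.norm_eq_abs, Real.norm_eq_abs, abs_of_nonneg (a := s.2 n ^ 8) (by positivity)]
    gcongr
    exact hfg _ (abs_le.1 (abs_le_of_pow4 (hs.2.2.2.2.2 n)))

lemma wI_cont {C : ℝ} {s t : PtCfg} (hs : s ∈ KC C) (ht : t ∈ KC C) (h : mom s = mom t)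
    {f : ℝ → ℝ} (hf : Continuous f) : wI f s = wI f t := by
  obtain ⟨B, hB⟩ := (isCompact_Icc (a := -(max 1 C)) (b := max 1 C)).exists_bound_of_continuousOn hf.continuousOn
  set M : ℝ := ((∑' n, (s.1 n) ^ 8) + ∑' n, (s.2 n) ^ 8) + ((∑' n, (t.1 n) ^ 8) + ∑' n, (t.2 n) ^ 8)
  have key : ∀ ε ∈ Set.Ioo (0 : ℝ) 1, |wI f s - wI f t| ≤ ε * M := by
    intro ε hε
    obtain ⟨p, hp⟩ := exists_polynomial_near_of_continuousOn _ _ f hf.continuousOn ε hε.1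
    have hpB : ∀ x ∈ Set.Icc (-(max 1 C)) (max 1 C), |p.eval x| ≤ B + 1 := by
      intro x hx
      have h1 := hp x hx
      have h2 := hB x hx
      rw [Real.norm_eq_abs] at h2
      have := abs_add_le (p.eval x - f x) (f x)
      rw [sub_add_cancel] at this
      linarith [hε.2]
    have hfB : ∀ x ∈ Set.Icc (-(max 1 C)) (max 1 C), |f x| ≤ B + 1 := fun x hx =>
      (hB x hx).trans (by linarith)
    have hd : ∀ x ∈ Set.Icc (-(max 1 C)) (max 1 C), |f x - p.eval x| ≤ ε := fun x hx => by
      rw [abs_sub_comm]; exact (hp x hx).le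
    have a1 := wI_near hs hfB hpB hd
    have a2 := wI_near ht hfB hpB hd
    have a3 := wI_poly hs ht h p
    rw [abs_le] at a1 a2 ⊢
    simp only [M]
    constructor <;> nlinarith
  have hlim : Tendsto (fun ε : ℝ => ε * M) (nhdsWithin 0 (Set.Ioi 0)) (nhds 0) := by
    have : Tendsto (fun ε : ℝ => ε * M) (nhds 0) (nhds (0 * M)) := (continuous_id.mul continuous_const).tendsto 0
    rw [zero_mul] at this
    exact this.mono_left nhdsWithin_le_nhds
  have : |wI f s - wI f t| ≤ 0 := by
    refine ge_of_tendsto hlim ?_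
    filter_upwards [Ioo_mem_nhdsGT (show (0 : ℝ) < 1 by norm_num)] with ε hε using key ε hε
  exact sub_eq_zero.1 (abs_nonpos_iff.1 this)

lemma inj_aux1 {C : ℝ} {s t : PtCfg} (hs : s ∈ KC C) (ht : t ∈ KC C) (h : mom s = mom t) (n : ℕ)
    (ih : ∀ i < n, s.1 i = t.1 i) : s.1 n ≤ t.1 n := by
  by_contra! hc
  set c := t.1 n
  have hc0 : 0 ≤ c := ht.2.2.1 n
  have hf : Continuous fun x : ℝ => max (x - c) 0 := by fun_prop
  obtain ⟨B, hB⟩ := (isCompact_Icc (a := -(max 1 C)) (b := max 1 C)).exists_bound_of_continuousOn hf.continuousOn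
  have e := wI_cont hs ht h hf
  have z2 : ∀ u : PtCfg, u ∈ KC C → ∑' n, max (u.2 n - c) 0 * (u.2 n) ^ 8 = 0 := by
    intro u hu
    refine (tsum_congr fun k => ?_).trans tsum_zero
    rw [max_eq_right (by linarith [hu.2.2.2.1 k]), zero_mul]
  unfold wI at e
  rw [z2 s hs, z2 t ht, add_zero, add_zero] at e
  have z3 : ∑' k, max (t.1 k - c) 0 * (t.1 k) ^ 8
      = ∑ k ∈ Finset.range n, max (t.1 k - c) 0 * (t.1 k) ^ 8 := by
    refine tsum_eq_sum fun k hk => ?_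
    rw [Finset.mem_range, not_lt] at hk
    have := ht.1 hk
    rw [max_eq_right (by simp only [c]; linarith), zero_mul]
  have z4 : ∑ k ∈ Finset.range (n + 1), max (s.1 k - c) 0 * (s.1 k) ^ 8
      ≤ ∑' k, max (s.1 k - c) 0 * (s.1 k) ^ 8 :=
    (wsum1 hs hB).sum_le_tsum _ fun k _ => mul_nonneg (le_max_right _ _) (by positivity)
  rw [Finset.sum_range_succ, e, z3] at z4
  have z5 : ∑ k ∈ Finset.range n, max (s.1 k - c) 0 * (s.1 k) ^ 8
     = ∑ k ∈ Finset.range n, max (t.1 k - c) 0 * (t.1 k) ^ 8 :=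
    Finset.sum_congr rfl fun k hk => by rw [ih k (Finset.mem_range.1 hk)]
  have z6 : 0 < max (s.1 n - c) 0 * (s.1 n) ^ 8 :=
    mul_pos (lt_max_of_lt_left (by linarith)) (pow_pos (by linarith) _)
  linarith

lemma inj1 {C : ℝ} {s t : PtCfg} (hs : s ∈ KC C) (ht : t ∈ KC C) (h : mom s = mom t) : s.1 = t.1 := by
  ext n
  induction n using Nat.strong_induction_on with
  | _ n ih => exact le_antisymm (inj_aux1 hs ht h n ih) (inj_aux1 ht hs h.symm n fun i hi => (ih i hi).symm)

def flipC (s : PtCfg) : PtCfg := (fun n => - s.2 n, fun n => - s.1 n)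

lemma flip_mem {C : ℝ} {s : PtCfg} (hs : s ∈ KC C) : flipC s ∈ KC C := by
  obtain ⟨h1, h2, h3, h4, h5, h6⟩ := hs
  refine ⟨fun a b hab => neg_le_neg (h2 hab), fun a b hab => neg_le_neg (h1 hab),
    fun n => by simpa [flipC] using h4 n, fun n => by simpa [flipC] using h3 n, fun n => ?_, fun n => ?_⟩
  · simpa [flipC, Even.neg_pow (by decide : Even 4)] using h6 n
  · simpa [flipC, Even.neg_pow (by decide : Even 4)] using h5 n

lemma flip_mom (s : PtCfg) : mom (flipC s) = fun j => (-1) ^ j * mom s j := by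
  ext j
  simp only [mom, flipC]
  have : ∀ x : ℝ, (-x) ^ (8 + j) = (-1) ^ j * x ^ (8 + j) := by
    intro x; rw [neg_pow, pow_add (-1 : ℝ)]; norm_num
  simp_rw [this, tsum_mul_left]
  ring

lemma mom_inj {C : ℝ} {s t : PtCfg} (hs : s ∈ KC C) (ht : t ∈ KC C) (h : mom s = mom t) : s = t := by
  refine Prod.ext (inj1 hs ht h) ?_
  have := inj1 (flip_mem hs) (flip_mem ht) (by rw [flip_mom, flip_mom, h])
  ext n
  have := congrFun this n
  simpa [flipC] using this

lemma KC_tendsto {C : ℝ} {s : ℕ → PtCfg} (hs : ∀ i, s i ∈ KC C) {t : ℕ → ℝ}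
    (ht : ∀ j, Tendsto (fun i => mom (s i) j) atTop (nhds (t j))) :
    ∃ s₀ ∈ KC C, Tendsto s atTop (nhds s₀) ∧ mom s₀ = t := by
  have : CompactSpace (KC C) := isCompact_iff_compactSpace.1 (KC_compact C)
  have hc : Continuous fun x : KC C => mom x := continuousOn_iff_continuous_domRestrict.1 (mom_contOn C)
  have hi : Function.Injective fun x : KC C => mom x := fun x y hxy =>
    Subtype.ext (mom_inj x.2 y.2 hxy)
  have hemb := hc.isClosedEmbedding hi
  have ht' : Tendsto (fun i => mom (s i)) atTop (nhds t) := tendsto_pi_nhds.2 ht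
  have hmem : t ∈ Set.range fun x : KC C => mom x :=
    hemb.isClosed_range.mem_of_tendsto ht' (Eventually.of_forall fun i => ⟨⟨s i, hs i⟩, rfl⟩)
  obtain ⟨s₀, hs₀⟩ := hmem
  refine ⟨s₀, s₀.2, ?_, hs₀⟩
  have : Tendsto (fun i => (⟨s i, hs i⟩ : KC C)) atTop (nhds s₀) := by
    rw [hemb.isInducing.tendsto_nhds_iff]
    simp only at hs₀
    rw [hs₀]; exact ht'
  exact (continuous_subtype_val.tendsto s₀).comp this

def KU : Set PtCfg := ⋃ n : ℕ, KC n

lemma KC_sub_KU (C : ℝ) : KC C ⊆ KU := by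
  obtain ⟨n, hn⟩ := exists_nat_ge C
  exact (KC_mono hn).trans (Set.subset_iUnion (fun n : ℕ => KC n) n)

lemma exists_inv : ∃ g : (ℕ → ℝ) → PtCfg, Measurable g ∧ ∀ s ∈ KU, g (mom s) = s := by
  have hm : MeasurableSet KU := MeasurableSet.iUnion fun n => (KC_closed n).measurableSet
  have hmm : Measurable fun x : KU => mom x := by
    intro B hB
    have e : (fun x : KU => mom x) ⁻¹' B = Subtype.val ⁻¹' (⋃ n : ℕ, (KC n ∩ mom ⁻¹' B)) := by
      ext x
      have := x.2
      simp only [KU, Set.mem_iUnion] at this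
      simp only [Set.mem_preimage, Set.mem_iUnion, Set.mem_inter_iff]
      constructor
      · intro hx; obtain ⟨n, hn⟩ := this; exact ⟨n, hn, hx⟩
      · rintro ⟨n, _, h⟩; exact h
    rw [e]
    refine measurable_subtype_coe (MeasurableSet.iUnion fun n => ?_)
    have hr : Measurable ((KC (n : ℝ)).domRestrict mom) :=
      (continuousOn_iff_continuous_domRestrict.1 (mom_contOn n)).measurable
    have := (MeasurableEmbedding.subtype_coe (KC_closed (n : ℝ)).measurableSet).measurableSet_image' (hr hB)
    convert this using 1
    ext x
    simp [Set.domRestrict, and_comm]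
  have hinj : Function.Injective fun x : KU => mom x := by
    intro x y hxy
    obtain ⟨n, hn⟩ := Set.mem_iUnion.1 x.2
    obtain ⟨k, hk⟩ := Set.mem_iUnion.1 y.2
    exact Subtype.ext (mom_inj (KC_mono (le_max_left _ _) hn) (KC_mono (le_max_right _ _) hk) hxy)
  have : StandardBorelSpace KU := hm.standardBorel
  have hemb : MeasurableEmbedding fun x : KU => mom x := hmm.measurableEmbedding hinj
  obtain ⟨g, hg, hge⟩ := hemb.exists_measurable_extend measurable_subtype_coe (fun _ => ⟨0⟩)
  exact ⟨g, hg, fun s hs => congrFun hge ⟨s, hs⟩⟩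
end

noncomputable section

lemma hasSum_getD (l : List ℝ) (φ : ℝ → ℝ) (h0 : φ 0 = 0) :
    HasSum (fun n => φ (l.getD n 0)) ((l.map φ).sum) := by
  induction l with
  | nil => simp [h0]
  | cons a l ih =>
    rw [← hasSum_nat_add_iff' 1]
    simpa using ih

lemma hasSum_sorted (r : ℝ → ℝ → Prop) [DecidableRel r] {N : ℕ} (v : Fin N → ℝ) (c : ℝ → ℝ)
    (φ : ℝ → ℝ) (h0 : φ 0 = 0) :
    HasSum (fun n => φ ((List.insertionSort r ((List.ofFn v).map c)).getD n 0)) (∑ i, φ (c (v i))) := by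
  have := hasSum_getD (List.insertionSort r ((List.ofFn v).map c)) φ h0
  rw [((List.perm_insertionSort r ((List.ofFn v).map c)).map φ).sum_eq, List.map_map] at this
  convert this using 1
  rw [List.map_ofFn, List.sum_ofFn]
  rfl

lemma trace_pow_eig {N : ℕ} {A : Matrix (Fin N) (Fin N) ℝ} (hA : A.IsHermitian) (k : ℕ) :
    (A ^ k).trace = ∑ i, hA.eigenvalues i ^ k := by
  conv_lhs => rw [hA.spectral_theorem]
  rw [← map_pow, Unitary.conjStarAlgAut_apply, Matrix.trace_mul_comm, ← mul_assoc]
  simp [Matrix.diagonal_pow, Matrix.trace_diagonal]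

lemma EM_hasSum {N : ℕ} {A : Matrix (Fin N) (Fin N) ℝ} (hA : A.IsHermitian) {k : ℕ} (hk : k ≠ 0) :
    ∃ s1 s2 : ℝ, HasSum (fun n => (EMcfg A).1 n ^ k) s1 ∧ HasSum (fun n => (EMcfg A).2 n ^ k) s2 ∧
      s1 + s2 = (A ^ k).trace := by
  refine ⟨∑ i, (max (hA.eigenvalues i) 0) ^ k, ∑ i, (min (hA.eigenvalues i) 0) ^ k, ?_, ?_, ?_⟩
  · simp only [EMcfg, hA, dif_pos]
    exact hasSum_sorted _ _ _ (fun x => x ^ k) (zero_pow hk)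
  · simp only [EMcfg, hA, dif_pos]
    exact hasSum_sorted _ _ _ (fun x => x ^ k) (zero_pow hk)
  · rw [trace_pow_eig hA, ← Finset.sum_add_distrib]
    refine Finset.sum_congr rfl fun i _ => ?_
    rcases le_total (hA.eigenvalues i) 0 with h | h <;> simp [h, hk]

lemma EM_anti {N : ℕ} {A : Matrix (Fin N) (Fin N) ℝ} (hA : A.IsHermitian) :
    Antitone (EMcfg A).1 ∧ Monotone (EMcfg A).2 ∧ (∀ n, 0 ≤ (EMcfg A).1 n) ∧ (∀ n, (EMcfg A).2 n ≤ 0) := by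
  simp only [EMcfg, hA, dif_pos]
  set l1 := (List.ofFn hA.eigenvalues).map fun t => max t 0
  set l2 := (List.ofFn hA.eigenvalues).map fun t => min t 0
  have p1 : ∀ n, 0 ≤ (List.insertionSort (· ≥ ·) l1).getD n 0 := by
    intro n
    rcases lt_or_ge n (List.insertionSort (· ≥ ·) l1).length with h | h
    · rw [List.getD_eq_getElem _ _ h]
      have := List.getElem_mem h
      rw [List.mem_insertionSort] at this
      obtain ⟨x, _, hx⟩ := List.mem_map.1 this
      rw [← hx]; exact le_max_right _ _
    · rw [List.getD_eq_default _ _ h]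
  have p2 : ∀ n, (List.insertionSort (· ≤ ·) l2).getD n 0 ≤ 0 := by
    intro n
    rcases lt_or_ge n (List.insertionSort (· ≤ ·) l2).length with h | h
    · rw [List.getD_eq_getElem _ _ h]
      have := List.getElem_mem h
      rw [List.mem_insertionSort] at this
      obtain ⟨x, _, hx⟩ := List.mem_map.1 this
      rw [← hx]; exact min_le_right _ _
    · rw [List.getD_eq_default _ _ h]
  refine ⟨?_, ?_, p1, p2⟩
  · intro m n hmn
    rcases lt_or_ge n (List.insertionSort (· ≥ ·) l1).length with h | h
    · simp only [List.getD_eq_getElem _ _ h, List.getD_eq_getElem _ _ (hmn.trans_lt h)]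
      exact (List.sortedGE_insertionSort (l := l1)) (show (⟨m, hmn.trans_lt h⟩ : Fin _) ≤ ⟨n, h⟩ from hmn)
    · simp only [List.getD_eq_default _ _ h]
      exact p1 m
  · intro m n hmn
    rcases lt_or_ge n (List.insertionSort (· ≤ ·) l2).length with h | h
    · simp only [List.getD_eq_getElem _ _ h, List.getD_eq_getElem _ _ (hmn.trans_lt h)]
      exact (List.sortedLE_insertionSort (l := l2)) (show (⟨m, hmn.trans_lt h⟩ : Fin _) ≤ ⟨n, h⟩ from hmn)
    · simp only [List.getD_eq_default _ _ h]
      exact p2 m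

/-- decreasing nonnegative: `(n+1) x_n ≤ ∑ x` -/
lemma anti_bound {x : ℕ → ℝ} (hx : Antitone x) (h0 : ∀ n, 0 ≤ x n) {s : ℝ} (hs : HasSum x s) (n : ℕ) :
    ((n : ℝ) + 1) * x n ≤ s := by
  calc ((n : ℝ) + 1) * x n = ∑ i ∈ Finset.range (n + 1), x n := by simp
    _ ≤ ∑ i ∈ Finset.range (n + 1), x i := Finset.sum_le_sum fun i hi =>
        hx (Nat.lt_succ_iff.1 (Finset.mem_range.1 hi))
    _ ≤ s := sum_le_hasSum _ (fun i _ => h0 i) hs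

lemma EM_anti_pow {N : ℕ} {A : Matrix (Fin N) (Fin N) ℝ} (hA : A.IsHermitian) {k : ℕ} (hk : Even k) :
    Antitone (fun n => (EMcfg A).1 n ^ k) ∧ Antitone (fun n => (EMcfg A).2 n ^ k) := by
  obtain ⟨h1, h2, h3, h4⟩ := EM_anti hA
  refine ⟨fun m n hmn => pow_le_pow_left₀ (h3 n) (h1 hmn) k, fun m n hmn => ?_⟩
  simp only
  rw [← hk.neg_pow ((EMcfg A).2 n), ← hk.neg_pow ((EMcfg A).2 m)]
  exact pow_le_pow_left₀ (by linarith [h4 n]) (by linarith [h2 hmn]) k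

lemma EM_mem {N : ℕ} {A : Matrix (Fin N) (Fin N) ℝ} (hA : A.IsHermitian) :
    EMcfg A ∈ KC ((A ^ 4).trace) := by
  obtain ⟨h1, h2, h3, h4⟩ := EM_anti hA
  obtain ⟨s1, s2, hs1, hs2, hs⟩ := EM_hasSum hA (k := 4) (by norm_num)
  obtain ⟨q1, q2⟩ := EM_anti_pow hA (k := 4) (by decide)
  have z1 : 0 ≤ s1 := hs1.nonneg fun n => by positivity
  have z2 : 0 ≤ s2 := hs2.nonneg fun n => by positivity
  refine ⟨h1, h2, h3, h4, fun n => ?_, fun n => ?_⟩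
  · have := anti_bound q1 (fun n => by positivity) hs1 n
    linarith
  · have := anti_bound q2 (fun n => by positivity) hs2 n
    linarith

lemma EM_mom {N : ℕ} {A : Matrix (Fin N) (Fin N) ℝ} (hA : A.IsHermitian) (j : ℕ) :
    mom (EMcfg A) j = (A ^ (8 + j)).trace := by
  obtain ⟨s1, s2, hs1, hs2, hs⟩ := EM_hasSum hA (k := 8 + j) (by omega)
  rw [mom, hs1.tsum_eq, hs2.tsum_eq, hs]
end

noncomputable section

def fro {𝕜 : Type*} [RCLike 𝕜] {n : Type*} [Fintype n] (A : Matrix n n 𝕜) : ℝ :=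
  √(∑ i, ∑ j, ‖A i j‖ ^ 2)

section Fro
open scoped Matrix.Norms.Frobenius Matrix
variable {𝕜 : Type*} [RCLike 𝕜] {n : Type*} [Fintype n] [DecidableEq n]

lemma fro_eq (A : Matrix n n 𝕜) : fro A = ‖A‖ := by
  rw [fro, Matrix.frobenius_norm_def, Real.sqrt_eq_rpow]
  simp

lemma fro_nonneg (A : Matrix n n 𝕜) : 0 ≤ fro A := Real.sqrt_nonneg _

lemma fro_sq (A : Matrix n n 𝕜) : fro A ^ 2 = ∑ i, ∑ j, ‖A i j‖ ^ 2 :=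
  Real.sq_sqrt (by positivity)

lemma fro_mul_le (A B : Matrix n n 𝕜) : fro (A * B) ≤ fro A * fro B := by
  simp only [fro_eq]; exact Matrix.frobenius_norm_mul A B

lemma fro_add_le (A B : Matrix n n 𝕜) : fro (A + B) ≤ fro A + fro B := by
  simp only [fro_eq]; exact norm_add_le A B

lemma fro_star (A : Matrix n n 𝕜) : fro Aᴴ = fro A := by
  simp only [fro_eq]; exact Matrix.frobenius_norm_conjTranspose A

lemma trace_mul_le (A B : Matrix n n 𝕜) : ‖(A * B).trace‖ ≤ fro A * fro B := by
  have h1 : ‖(A * B).trace‖ ≤ ∑ p : n × n, ‖A p.1 p.2‖ * ‖B p.2 p.1‖ := by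
    rw [Matrix.trace, Fintype.sum_prod_type]
    simp only [Matrix.diag_apply, Matrix.mul_apply]
    refine (norm_sum_le _ _).trans (Finset.sum_le_sum fun i _ => (norm_sum_le _ _).trans
      (Finset.sum_le_sum fun j _ => (norm_mul _ _).le))
  refine h1.trans ((Real.sum_mul_le_sqrt_mul_sqrt _ _ _).trans (le_of_eq ?_))
  rw [fro, fro, Fintype.sum_prod_type, Fintype.sum_prod_type_right]

lemma fro_sq_trace (A : Matrix n n 𝕜) : ((fro A ^ 2 : ℝ) : 𝕜) = (Aᴴ * A).trace := by
  rw [fro_sq, Matrix.trace, Finset.sum_comm]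
  simp only [Matrix.diag_apply, Matrix.mul_apply, Matrix.conjTranspose_apply]
  push_cast
  refine Finset.sum_congr rfl fun i _ => Finset.sum_congr rfl fun j _ => ?_
  rw [RCLike.star_def, RCLike.conj_mul]

lemma fro_DA (D A : Matrix n n 𝕜) : fro (D * A) ^ 2 ≤ fro (Dᴴ * D) * fro A ^ 2 := by
  have h1 : fro (D * A) ^ 2 = ‖((D * A)ᴴ * (D * A)).trace‖ := by
    rw [← fro_sq_trace, RCLike.norm_ofReal, abs_of_nonneg (by positivity)]
  have h2 : ((D * A)ᴴ * (D * A)).trace = ((Dᴴ * D) * (A * Aᴴ)).trace := by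
    rw [Matrix.conjTranspose_mul, mul_assoc, Matrix.trace_mul_comm]
    simp only [mul_assoc]
  rw [h1, h2]
  refine (trace_mul_le _ _).trans ?_
  refine mul_le_mul_of_nonneg_left ?_ (fro_nonneg _)
  refine (fro_mul_le _ _).trans (le_of_eq ?_)
  rw [fro_star]; ring

lemma fro_DA' {D : Matrix n n 𝕜} (hD : D.IsHermitian) (A : Matrix n n 𝕜) {R δ : ℝ}
    (hA : fro A ≤ R) (hδ : fro (D * D) ≤ δ ^ 2) (hδ0 : 0 ≤ δ) : fro (D * A) ≤ R * δ := by
  have hR : 0 ≤ R := (fro_nonneg A).trans hA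
  refine (sq_le_sq₀ (fro_nonneg _) (by positivity)).1 ?_
  refine (fro_DA D A).trans ?_
  rw [hD.eq, mul_pow, mul_comm]
  have := fro_nonneg A
  have := fro_nonneg (D * D)
  gcongr

lemma fro_AD' {D : Matrix n n 𝕜} (hD : D.IsHermitian) (A : Matrix n n 𝕜) {R δ : ℝ}
    (hA : fro A ≤ R) (hδ : fro (D * D) ≤ δ ^ 2) (hδ0 : 0 ≤ δ) : fro (A * D) ≤ R * δ := by
  rw [← fro_star, Matrix.conjTranspose_mul, hD.eq]
  exact fro_DA' hD _ (by rwa [fro_star]) hδ hδ0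

lemma fro_pow_le {A : Matrix n n 𝕜} {R : ℝ} (hA : fro A ≤ R) (m : ℕ) : fro (A ^ (m + 1)) ≤ R ^ (m + 1) := by
  have hR : 0 ≤ R := (fro_nonneg A).trans hA
  induction m with
  | zero => simpa using hA
  | succ m ih =>
    rw [pow_succ, pow_succ R]
    exact (fro_mul_le _ _).trans (mul_le_mul ih hA (fro_nonneg _) (by positivity))

lemma fro_pow_sub {A B : Matrix n n 𝕜} {R ρ : ℝ} (hA : fro A ≤ R) (hB : fro B ≤ R)
    (h1 : fro ((A - B) * A) ≤ ρ) (h2 : fro (B * (A - B)) ≤ ρ) (m : ℕ) :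
    fro (A ^ (m + 2) - B ^ (m + 2)) ≤ (m + 2) * R ^ m * ρ := by
  have hR : 0 ≤ R := (fro_nonneg A).trans hA
  have hρ : 0 ≤ ρ := (fro_nonneg _).trans h1
  induction m with
  | zero =>
    have : A ^ (0 + 2) - B ^ (0 + 2) = (A - B) * A + B * (A - B) := by noncomm_ring
    rw [this]
    refine (fro_add_le _ _).trans ?_
    simp; linarith
  | succ m ih =>
    have : A ^ (m + 1 + 2) - B ^ (m + 1 + 2)
        = (A ^ (m + 2) - B ^ (m + 2)) * A + B ^ (m + 1) * (B * (A - B)) := by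
      rw [show m + 1 + 2 = (m + 2) + 1 by ring, pow_succ A, pow_succ B, ← mul_assoc, ← pow_succ B]
      noncomm_ring
    rw [this]
    refine (fro_add_le _ _).trans ?_
    have a1 : fro ((A ^ (m + 2) - B ^ (m + 2)) * A) ≤ ((m + 2) * R ^ m * ρ) * R :=
      (fro_mul_le _ _).trans (mul_le_mul ih hA (fro_nonneg _) (by positivity))
    have a2 : fro (B ^ (m + 1) * (B * (A - B))) ≤ R ^ (m + 1) * ρ :=
      (fro_mul_le _ _).trans (mul_le_mul (fro_pow_le hB m) h2 (fro_nonneg _) (by positivity))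
    push_cast
    refine (add_le_add a1 a2).trans (le_of_eq ?_)
    ring

lemma trace_pow_sub {A B : Matrix n n 𝕜} {R ρ : ℝ} (hA : fro A ≤ R) (hB : fro B ≤ R)
    (h1 : fro ((A - B) * A) ≤ ρ) (h2 : fro (B * (A - B)) ≤ ρ) (m : ℕ) :
    ‖(A ^ (m + 4)).trace - (B ^ (m + 4)).trace‖ ≤ (m + 4) * R ^ (m + 2) * ρ := by
  have hR : 0 ≤ R := (fro_nonneg A).trans hA
  have hρ : 0 ≤ ρ := (fro_nonneg _).trans h1
  have e : (A ^ (m + 4)).trace - (B ^ (m + 4)).trace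
      = ((A ^ (0 + 2) - B ^ (0 + 2)) * A ^ (m + 2)).trace
        + (B ^ (0 + 2) * (A ^ (m + 2) - B ^ (m + 2))).trace := by
    rw [← Matrix.trace_sub, ← Matrix.trace_add]
    congr 1
    rw [show m + 4 = (0 + 2) + (m + 2) by ring, pow_add A, pow_add B]
    noncomm_ring
  rw [e]
  refine (norm_add_le _ _).trans ?_
  have a1 : ‖((A ^ (0 + 2) - B ^ (0 + 2)) * A ^ (m + 2)).trace‖ ≤ (((0 : ℕ) + 2) * R ^ 0 * ρ) * R ^ (m + 2) :=
    (trace_mul_le _ _).trans (mul_le_mul (fro_pow_sub hA hB h1 h2 0) (fro_pow_le hA (m + 1))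
      (fro_nonneg _) (by positivity))
  have a2 : ‖(B ^ (0 + 2) * (A ^ (m + 2) - B ^ (m + 2))).trace‖ ≤ R ^ 2 * ((m + 2) * R ^ m * ρ) :=
    (trace_mul_le _ _).trans (mul_le_mul (fro_pow_le hB 1) (fro_pow_sub hA hB h1 h2 m)
      (fro_nonneg _) (by positivity))
  refine (add_le_add a1 a2).trans (le_of_eq ?_)
  push_cast
  ring

end Fro
end

noncomputable section

section hilb
variable {ι H₁ H₂ : Type*} [NormedAddCommGroup H₁] [InnerProductSpace ℂ H₁]
  [NormedAddCommGroup H₂] [InnerProductSpace ℂ H₂]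

/-- closed graph -/
def Gam (R : Type*) [Semiring R] [Module R H₁] [Module R H₂] [TopologicalSpace R]
  (e : ι → H₁) (x : ι → H₂) : Set (H₁ × H₂) :=
  closure (Submodule.span R (Set.range fun p => (e p, x p)) : Set (H₁ × H₂))

variable {e : ι → H₁} {x : ι → H₂}

lemma Gam_inner (h : ∀ p q, inner ℂ (e p) (e q) = inner ℂ (x p) (x q)) {z w : H₁ × H₂}
    (hz : z ∈ Gam ℂ e x) (hw : w ∈ Gam ℂ e x) :
    inner ℂ z.1 w.1 = inner ℂ z.2 w.2 := by
  have h1 : ∀ z ∈ Submodule.span ℂ (Set.range fun p => (e p, x p)),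
      ∀ w ∈ Submodule.span ℂ (Set.range fun p => (e p, x p)),
      inner ℂ z.1 w.1 = inner ℂ z.2 w.2 := by
    intro z hz w hw
    induction hz, hw using Submodule.span_induction₂ with
    | mem_mem a b ha hb =>
      obtain ⟨p, rfl⟩ := ha
      obtain ⟨q, rfl⟩ := hb
      exact h p q
    | zero_left => simp
    | zero_right => simp
    | add_left a b c _ _ _ h1 h2 => simp [inner_add_left, h1, h2]
    | add_right a b c _ _ _ h1 h2 => simp [inner_add_right, h1, h2]
    | smul_left r a b _ _ h1 => simp [inner_smul_left, h1]
    | smul_right r a b _ _ h1 => simp [inner_smul_right, h1]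
  have hc : ∀ z ∈ closure (Submodule.span ℂ (Set.range fun p => (e p, x p)) : Set (H₁ × H₂)),
      ∀ w ∈ Submodule.span ℂ (Set.range fun p => (e p, x p)),
      inner ℂ z.1 w.1 = inner ℂ z.2 w.2 := by
    intro z hz w hw
    have : IsClosed {z : H₁ × H₂ | inner ℂ z.1 w.1 = inner ℂ z.2 w.2} :=
      isClosed_eq (by fun_prop) (by fun_prop)
    exact closure_minimal (fun z hz => h1 z hz w hw) this hz
  have : IsClosed {w : H₁ × H₂ | inner ℂ z.1 w.1 = inner ℂ z.2 w.2} :=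
      isClosed_eq (by fun_prop) (by fun_prop)
  exact closure_minimal (fun w hw => hc z hz w hw) this hw

lemma Gam_norm (h : ∀ p q, inner ℂ (e p) (e q) = inner ℂ (x p) (x q)) {z : H₁ × H₂}
    (hz : z ∈ Gam ℂ e x) : ‖z.1‖ = ‖z.2‖ := by
  have := Gam_inner h hz hz
  rw [inner_self_eq_norm_sq_to_K, inner_self_eq_norm_sq_to_K] at this
  have h2 : ‖z.1‖ ^ 2 = ‖z.2‖ ^ 2 := by exact_mod_cast this
  exact (sq_eq_sq₀ (norm_nonneg _) (norm_nonneg _)).1 h2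

lemma Gam_real_sub [Module ℝ H₁] [IsScalarTower ℝ ℂ H₁] [Module ℝ H₂] [IsScalarTower ℝ ℂ H₂] :
    Gam ℝ e x ⊆ Gam ℂ e x := by
  refine closure_mono ?_
  intro z hz
  exact Submodule.span_le_restrictScalars ℝ ℂ _ hz

section
variable (R : Type*) [Ring R] [Module R H₁] [Module R H₂] [TopologicalSpace R]

lemma Gam_add {z w : H₁ × H₂} (hz : z ∈ Gam R e x) (hw : w ∈ Gam R e x) : z + w ∈ Gam R e x :=
  map_mem_closure₂ continuous_add hz hw fun _ ha _ hb => Submodule.add_mem _ ha hb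

lemma Gam_sub {z w : H₁ × H₂} (hz : z ∈ Gam R e x) (hw : w ∈ Gam R e x) : z - w ∈ Gam R e x :=
  map_mem_closure₂ continuous_sub hz hw fun _ ha _ hb => Submodule.sub_mem _ ha hb

lemma Gam_zero : (0 : H₁ × H₂) ∈ Gam R e x := subset_closure (Submodule.zero_mem _)

lemma Gam_smul [ContinuousConstSMul R H₁] [ContinuousConstSMul R H₂] (r : R) {z : H₁ × H₂}
    (hz : z ∈ Gam R e x) : r • z ∈ Gam R e x :=
  map_mem_closure (continuous_const_smul r) hz fun _ ha => Submodule.smul_mem _ _ ha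

lemma Gam_sum {κ : Type*} (s : Finset κ) (z : κ → H₁ × H₂)
    (hz : ∀ i ∈ s, z i ∈ Gam R e x) : ∑ i ∈ s, z i ∈ Gam R e x := by
  classical
  induction s using Finset.induction_on with
  | empty => simpa using Gam_zero R
  | insert a s ha ih =>
    rw [Finset.sum_insert ha]
    exact Gam_add R (hz _ (by simp)) (ih fun i hi => hz _ (by simp [hi]))

lemma Gam_gen (p : ι) : (e p, x p) ∈ Gam R e x :=
  subset_closure (Submodule.subset_span ⟨p, rfl⟩)

lemma Gam_exists [CompleteSpace H₂] (hR : Gam R e x ⊆ Gam ℂ e x)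
    (h : ∀ p q, inner ℂ (e p) (e q) = inner ℂ (x p) (x q)) {g : H₁}
    (hg : g ∈ closure (Submodule.span R (Set.range e) : Set H₁)) :
    ∃ y, (g, y) ∈ Gam R e x := by
  obtain ⟨u, hu, hug⟩ := mem_closure_iff_seq_limit.1 hg
  have h1 : ∀ n, ∃ y, (u n, y) ∈ Submodule.span R (Set.range fun p => (e p, x p)) := by
    intro n
    have : Submodule.span R (Set.range e)
      = (Submodule.span R (Set.range fun p => (e p, x p))).map (LinearMap.fst R H₁ H₂) := by
      rw [Submodule.map_span, ← Set.range_comp]; rfl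
    have h2 : u n ∈ Submodule.span R (Set.range e) := hu n
    rw [this] at h2
    obtain ⟨⟨a, b⟩, hab, h3⟩ := h2
    simp only [LinearMap.fst_apply] at h3
    exact ⟨b, by rw [← h3]; exact hab⟩
  choose y hy using h1
  have hc : CauchySeq y := by
    have hcu := hug.cauchySeq
    rw [Metric.cauchySeq_iff] at hcu ⊢
    intro ε hε
    obtain ⟨N, hN⟩ := hcu ε hε
    refine ⟨N, fun m hm n hn => ?_⟩
    have := hN m hm n hn
    rw [dist_eq_norm] at this ⊢
    have h3 : (u m, y m) - (u n, y n) ∈ Gam R e x :=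
      subset_closure (Submodule.sub_mem _ (hy m) (hy n))
    have h4 := Gam_norm h (hR h3)
    simp only [Prod.fst_sub, Prod.snd_sub] at h4
    rwa [← h4]
  obtain ⟨y₀, hy₀⟩ := cauchySeq_tendsto_of_complete hc
  exact ⟨y₀, mem_closure_of_tendsto (hug.prodMk_nhds hy₀) (Eventually.of_forall hy)⟩
end
end hilb
end

noncomputable section
set_option linter.unusedSectionVars false

def ee (p : ℤ × ℤ) (q : ℝ × ℝ) : ℂ :=
  Complex.exp (Complex.I * ((p.1 * q.1 + p.2 * q.2 : ℝ) : ℂ))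

lemma ee_cont (p : ℤ × ℤ) : Continuous (ee p) := by unfold ee; fun_prop

lemma ee_norm (p : ℤ × ℤ) (q : ℝ × ℝ) : ‖ee p q‖ = 1 := by
  unfold ee; rw [mul_comm]; exact Complex.norm_exp_ofReal_mul_I _

lemma ee_add (p p' : ℤ × ℤ) (q : ℝ × ℝ) : ee (p + p') q = ee p q * ee p' q := by
  unfold ee; rw [← Complex.exp_add]; congr 1; push_cast [Prod.fst_add, Prod.snd_add]; ring

lemma ee_neg (p : ℤ × ℤ) (q : ℝ × ℝ) : ee (-p) q = star (ee p q) := by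
  unfold ee
  change _ = (starRingEnd ℂ) _
  rw [← Complex.exp_conj]; congr 1
  simp only [map_mul, Complex.conj_I, Complex.conj_ofReal]
  push_cast [Prod.fst_neg, Prod.snd_neg]; ring

lemma ee_zero (q : ℝ × ℝ) : ee 0 q = 1 := by simp [ee]

lemma ee_sub_arg (p : ℤ × ℤ) (q q' : ℝ × ℝ) : ee p (q - q') = ee p q * ee (-p) q' := by
  unfold ee; rw [← Complex.exp_add]; congr 1
  push_cast [Prod.fst_sub, Prod.snd_sub, Prod.fst_neg, Prod.snd_neg]; ring

section fin
variable {R : Type*} [NormedField R] [NormedAlgebra R ℂ] (ν : Measure (ℝ × ℝ)) [IsFiniteMeasure ν]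

lemma memLp_ee (p : ℤ × ℤ) : MemLp (ee p) 2 ν :=
  MemLp.of_bound (ee_cont p).aestronglyMeasurable 1 (Eventually.of_forall fun q => (ee_norm p q).le)

def eL (p : ℤ × ℤ) : Lp ℂ 2 ν := (memLp_ee ν p).toLp (ee p)

variable (R) in
def TT : Submodule R (ℝ × ℝ → ℂ) := Submodule.span R (Set.range ee)

variable (R) in
def BB : Set (ℝ × ℝ → ℂ) :=
  {g | ∃ hg : MemLp g 2 ν, hg.toLp g ∈ closure (Submodule.span R (Set.range (eL ν)) : Set (Lp ℂ 2 ν))}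

lemma TT_sub_BB {g : ℝ × ℝ → ℂ} (hg : g ∈ TT R) :
    ∃ hg : MemLp g 2 ν, hg.toLp g ∈ Submodule.span R (Set.range (eL ν)) := by
  unfold TT at hg
  induction hg using Submodule.span_induction with
  | mem x hx =>
    obtain ⟨p, rfl⟩ := hx
    exact ⟨memLp_ee ν p, Submodule.subset_span ⟨p, rfl⟩⟩
  | zero => exact ⟨MemLp.zero, by rw [MemLp.toLp_zero]; exact Submodule.zero_mem _⟩
  | add x y hx hy h1 h2 =>
    obtain ⟨a, ha⟩ := h1
    obtain ⟨b, hb⟩ := h2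
    exact ⟨a.add b, by rw [MemLp.toLp_add a b]; exact Submodule.add_mem _ ha hb⟩
  | smul r x hx h1 =>
    obtain ⟨a, ha⟩ := h1
    exact ⟨a.const_smul r, by rw [MemLp.toLp_const_smul r a]; exact Submodule.smul_mem _ _ ha⟩

lemma BB_lim {g : ℕ → ℝ × ℝ → ℂ} {g₀ : ℝ × ℝ → ℂ} {C : ℝ} (hg : ∀ n, g n ∈ BB R ν)
    (hC : ∀ n q, ‖g n q‖ ≤ C) (hl : ∀ᵐ q ∂ν, Tendsto (fun n => g n q) atTop (nhds (g₀ q))) :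
    g₀ ∈ BB R ν := by
  choose hm hc using hg
  have hb : ∀ᵐ q ∂ν, ‖g₀ q‖ ≤ C := by
    filter_upwards [hl] with q hq
    exact le_of_tendsto hq.norm (Eventually.of_forall fun n => hC n q)
  have h0m : AEStronglyMeasurable g₀ ν :=
    aestronglyMeasurable_of_tendsto_ae atTop (fun n => (hm n).1) hl
  have h0 : MemLp g₀ 2 ν := MemLp.of_bound h0m C hb
  refine ⟨h0, ?_⟩
  rw [← closure_closure]
  refine mem_closure_of_tendsto (f := fun n => (hm n).toLp (g n)) (b := atTop) ?_
    (Eventually.of_forall hc)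
  rw [Lp.tendsto_Lp_iff_tendsto_eLpNorm'']
  have : Tendsto (fun n => ∫⁻ q, ‖(g n - g₀) q‖ₑ ^ (2:ℝ) ∂ν) atTop (nhds (∫⁻ q, 0 ∂ν)) := by
    refine tendsto_lintegral_of_dominated_convergence' (fun _ => ENNReal.ofReal (2 * C) ^ (2:ℝ)) ?_ ?_ ?_ ?_
    · intro n
      exact (((hm n).1.sub h0m).enorm).pow_const _
    · intro n
      filter_upwards [hb] with q hq
      gcongr
      rw [← ofReal_norm]
      apply ENNReal.ofReal_le_ofReal
      calc ‖(g n - g₀) q‖ ≤ ‖g n q‖ + ‖g₀ q‖ := norm_sub_le _ _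
        _ ≤ 2 * C := by linarith [hC n q]
    · rw [lintegral_const]
      exact ENNReal.mul_ne_top (ENNReal.rpow_ne_top_of_nonneg (by norm_num) ENNReal.ofReal_ne_top) (by simp)
    · filter_upwards [hl] with q hq
      have h1 : Tendsto (fun n => ‖(g n - g₀) q‖ₑ) atTop (nhds 0) := by
        have h3 : Tendsto (fun n => (g n - g₀) q) atTop (nhds 0) := by
          simpa using hq.sub_const (g₀ q)
        simpa using h3.enorm
      have := h1.ennrpow_const 2
      simpa using this
  simp only [lintegral_zero] at this
  simp_rw [eLpNorm_eq_lintegral_rpow_enorm_toReal (p := 2) (by norm_num) (by norm_num)]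
  have := this.ennrpow_const (1 / (2:ENNReal).toReal)
  simpa using this

lemma TT_mul {f g : ℝ × ℝ → ℂ} (hf : f ∈ TT R) (hg : g ∈ TT R) : f * g ∈ TT R := by
  have := Submodule.mul_mem_mul hf hg
  unfold TT at this ⊢
  rw [Submodule.span_mul_span] at this
  refine Submodule.span_mono ?_ this
  rintro _ ⟨_, ⟨p, rfl⟩, _, ⟨p', rfl⟩, rfl⟩
  exact ⟨p + p', funext fun q => ee_add p p' q⟩

lemma TT_one : (1 : ℝ × ℝ → ℂ) ∈ TT R :=
  Submodule.subset_span ⟨0, funext fun q => ee_zero q⟩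

lemma TT_pow {f : ℝ × ℝ → ℂ} (hf : f ∈ TT R) (n : ℕ) : f ^ n ∈ TT R := by
  induction n with
  | zero => simpa using TT_one
  | succ n ih => rw [pow_succ]; exact TT_mul ih hf
end fin

def KK (M : ℕ) (z : ℂ) : ℂ := (M : ℂ)⁻¹ * ∑ j ∈ Finset.range M, z ^ j

lemma KK_le (M : ℕ) {z : ℂ} (hz : ‖z‖ = 1) : ‖KK M z‖ ≤ 1 := by
  unfold KK
  rcases Nat.eq_zero_or_pos M with rfl | hM
  · simp
  rw [norm_mul, norm_inv, Complex.norm_natCast]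
  have : ‖∑ j ∈ Finset.range M, z ^ j‖ ≤ M := by
    refine (norm_sum_le _ _).trans ?_
    simp [hz]
  have h : (0:ℝ) < M := by exact_mod_cast hM
  rw [inv_mul_le_iff₀ h]; simpa using this

lemma KK_lim {z : ℂ} (hz : ‖z‖ = 1) [Decidable (z = 1)] :
    Tendsto (fun M => KK M z) atTop (nhds (if z = 1 then 1 else 0)) := by
  split_ifs with h
  · subst h
    refine tendsto_const_nhds.congr' ?_
    filter_upwards [eventually_gt_atTop 0] with M hM
    have : (M:ℂ) ≠ 0 := by exact_mod_cast hM.ne'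
    simp [KK, this]
  · rw [tendsto_zero_iff_norm_tendsto_zero]
    have h1 : Tendsto (fun M : ℕ => (M : ℝ)⁻¹ * (2 / ‖z - 1‖)) atTop (nhds 0) := by
      simpa using (tendsto_inv_atTop_nhds_zero_nat (𝕜 := ℝ)).mul_const (2 / ‖z - 1‖)
    refine squeeze_zero (fun _ => norm_nonneg _) (fun M => ?_) h1
    unfold KK
    rw [norm_mul, norm_inv, Complex.norm_natCast, geom_sum_eq h, norm_div]
    gcongr
    calc ‖z ^ M - 1‖ ≤ ‖z ^ M‖ + ‖(1:ℂ)‖ := norm_sub_le _ _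
      _ = 2 := by simp [hz]; norm_num

def AM (M : ℕ) (t : ℝ × ℝ) : ℂ :=
  KK M (Complex.exp (Complex.I * (t.1 : ℂ))) * KK M (Complex.exp (Complex.I * (t.2 : ℂ)))

lemma nI (x : ℝ) : ‖Complex.exp (Complex.I * (x : ℂ))‖ = 1 := by
  rw [mul_comm]; exact Complex.norm_exp_ofReal_mul_I _

lemma AM_le (M : ℕ) (t : ℝ × ℝ) : ‖AM M t‖ ≤ 1 := by
  unfold AM
  rw [norm_mul]
  exact mul_le_one₀ (KK_le M (nI _)) (norm_nonneg _) (KK_le M (nI _))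

lemma AM_cont (M : ℕ) : Continuous (AM M) := by
  unfold AM KK; fun_prop

lemma AM_eq (M : ℕ) (t : ℝ × ℝ) : AM M t = ∑ j ∈ Finset.range M, ∑ k ∈ Finset.range M,
    ((M : ℝ)⁻¹ ^ 2 : ℝ) * ee ((j : ℤ), (k : ℤ)) t := by
  unfold AM KK
  rw [mul_mul_mul_comm, Finset.sum_mul_sum, Finset.mul_sum]
  refine Finset.sum_congr rfl fun j _ => ?_
  rw [Finset.mul_sum]
  refine Finset.sum_congr rfl fun k _ => ?_
  rw [← Complex.exp_nat_mul, ← Complex.exp_nat_mul, ← Complex.exp_add]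
  unfold ee
  push_cast
  congr 1
  · ring
  · congr 1; ring

lemma exp_one_box {x y : ℝ} (hx : x ∈ Set.Ioc (-π) π) (hy : y ∈ Set.Ioc (-π) π) :
    Complex.exp (Complex.I * ((x - y : ℝ) : ℂ)) = 1 ↔ x = y := by
  constructor
  · intro h
    rw [Complex.exp_eq_one_iff] at h
    obtain ⟨n, hn⟩ := h
    have h1 : Complex.I * ((x - y : ℝ) : ℂ) = Complex.I * ((n * (2 * π) : ℝ) : ℂ) := by
      rw [hn]; push_cast; ring
    have h2 : x - y = n * (2 * π) := by
      exact_mod_cast mul_left_cancel₀ Complex.I_ne_zero h1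
    have hp := Real.pi_pos
    have h3 : (n : ℝ) < 1 := by
      by_contra hc; push Not at hc
      nlinarith [hx.1, hx.2, hy.1, hy.2]
    have h4 : (-1 : ℝ) < n := by
      by_contra hc; push Not at hc
      nlinarith [hx.1, hx.2, hy.1, hy.2]
    have h5 : n = 0 := by
      have : n < 1 := by exact_mod_cast h3
      have : -1 < n := by exact_mod_cast h4
      omega
    subst h5; simp at h2; linarith
  · rintro rfl; simp

lemma AM_lim {q a : ℝ × ℝ} (hq : q ∈ specBox) (ha : a ∈ specBox) :
    Tendsto (fun M => AM M (q - a)) atTop (nhds (({a} : Set (ℝ × ℝ)).indicator 1 q)) := by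
  classical
  have h1 := (KK_lim (nI (q - a).1)).mul (KK_lim (nI (q - a).2))
  have : (({a} : Set (ℝ × ℝ)).indicator 1 q : ℂ) =
    (if Complex.exp (Complex.I * ((q - a).1 : ℂ)) = 1 then 1 else 0) *
    (if Complex.exp (Complex.I * ((q - a).2 : ℂ)) = 1 then 1 else 0) := by
    rw [Prod.fst_sub, Prod.snd_sub]
    simp only [exp_one_box hq.1 ha.1, exp_one_box hq.2 ha.2]
    simp only [Set.indicator, Set.mem_singleton_iff, Prod.ext_iff, Pi.one_apply]
    split_ifs <;> simp_all
  rw [this]; exact h1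

section meas
variable (ν : Measure (ℝ × ℝ)) [IsFiniteMeasure ν]

lemma ae_box (hb : ν specBoxᶜ = 0) : ∀ᵐ q ∂ν, q ∈ specBox := hb

lemma BB_single (hb : ν specBoxᶜ = 0) {a : ℝ × ℝ} (ha : a ∈ specBox) :
    ({a} : Set (ℝ × ℝ)).indicator 1 ∈ BB ℂ ν := by
  refine BB_lim ν (g := fun M q => AM M (q - a)) (C := 1) ?_ (fun n q => AM_le _ _) ?_
  · intro M
    have : (fun q => AM M (q - a)) ∈ TT ℂ := by
      have h : (fun q => AM M (q - a)) = ∑ j ∈ Finset.range M, ∑ k ∈ Finset.range M,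
          (((M : ℝ)⁻¹ ^ 2 : ℝ) * ee (-((j : ℤ), (k : ℤ))) a : ℂ) • ee ((j : ℤ), (k : ℤ)) := by
        funext q
        rw [AM_eq]
        simp only [Finset.sum_apply, Pi.smul_apply, smul_eq_mul, ee_sub_arg]
        refine Finset.sum_congr rfl fun j _ => Finset.sum_congr rfl fun k _ => ?_
        ring
      rw [h]
      exact Submodule.sum_mem _ fun j _ => Submodule.sum_mem _ fun k _ =>
        Submodule.smul_mem _ _ (Submodule.subset_span ⟨_, rfl⟩)
    obtain ⟨h1, h2⟩ := TT_sub_BB ν this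
    exact ⟨h1, subset_closure h2⟩
  · filter_upwards [ae_box ν hb] with q hq
    exact AM_lim hq ha

def hM (M : ℕ) (q : ℝ × ℝ) : ℂ := ((ν.real Set.univ)⁻¹ : ℝ) * ∫ q', AM M (q' - q) ∂ν

lemma hM_le (M : ℕ) (q : ℝ × ℝ) : ‖hM ν M q‖ ≤ 1 := by
  unfold hM
  rw [norm_mul, Complex.norm_real, norm_inv, Real.norm_of_nonneg measureReal_nonneg]
  have : ‖∫ q', AM M (q' - q) ∂ν‖ ≤ 1 * ν.real Set.univ :=
    norm_integral_le_of_norm_le_const (Eventually.of_forall fun q' => AM_le _ _)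
  rcases eq_or_lt_of_le (measureReal_nonneg (μ := ν) (s := Set.univ)) with h | h
  · rw [← h]; simp
  · rw [inv_mul_le_iff₀ h]; linarith

lemma hM_TT {ρ : ℤ × ℤ → ℝ} (hρ : ∀ p, ∫ q, ee p q ∂ν = (ρ p : ℂ)) (M : ℕ) : hM ν M ∈ TT ℝ := by
  have h : hM ν M = ∑ j ∈ Finset.range M, ∑ k ∈ Finset.range M,
      ((ν.real Set.univ)⁻¹ * ((M : ℝ)⁻¹ ^ 2) * ρ ((j : ℤ), (k : ℤ))) • ee (-((j : ℤ), (k : ℤ))) := by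
    funext q
    unfold hM
    simp_rw [AM_eq]
    have hi : ∀ p, Integrable (fun q' => ee p (q' - q)) ν := by
      intro p
      refine Integrable.of_bound (C := 1) ?_ (Eventually.of_forall fun q' => (ee_norm _ _).le)
      exact ((ee_cont p).comp (continuous_sub_right q)).aestronglyMeasurable
    rw [integral_finsetSum _ (fun j _ => integrable_finsetSum _ fun k _ => (hi _).const_mul _),
      Finset.mul_sum, Finset.sum_apply]
    refine Finset.sum_congr rfl fun j _ => ?_
    rw [integral_finsetSum _ (fun k _ => (hi _).const_mul _),
      Finset.mul_sum, Finset.sum_apply]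
    refine Finset.sum_congr rfl fun k _ => ?_
    rw [integral_const_mul]
    simp_rw [ee_sub_arg]
    rw [integral_mul_const, hρ]
    simp only [Pi.smul_apply, Complex.real_smul]
    push_cast; ring
  rw [h]
  exact Submodule.sum_mem _ fun j _ => Submodule.sum_mem _ fun k _ =>
        Submodule.smul_mem _ _ (Submodule.subset_span ⟨_, rfl⟩)

lemma hM_lim (hb : ν specBoxᶜ = 0) {q : ℝ × ℝ} (hq : q ∈ specBox) :
    Tendsto (fun M => hM ν M q) atTop (nhds ((ν.real {q} / ν.real Set.univ : ℝ) : ℂ)) := by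
  have h1 : Tendsto (fun M => ∫ q', AM M (q' - q) ∂ν) atTop
      (nhds (∫ q', ({q} : Set (ℝ × ℝ)).indicator 1 q' ∂ν)) := by
    refine tendsto_integral_of_dominated_convergence (fun _ => 1) ?_ (integrable_const _) ?_ ?_
    · intro M
      exact ((AM_cont M).comp (continuous_sub_right q)).aestronglyMeasurable
    · intro M; exact Eventually.of_forall fun q' => AM_le _ _
    · filter_upwards [ae_box ν hb] with q' hq'
      exact AM_lim hq' hq
  have h2 : ∫ q', ({q} : Set (ℝ × ℝ)).indicator (1 : ℝ × ℝ → ℂ) q' ∂ν = (ν.real {q} : ℂ) := by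
    rw [integral_indicator (measurableSet_singleton q)]
    simp [measureReal_def]
  rw [h2] at h1
  have := h1.const_mul ((((ν.real Set.univ)⁻¹ : ℝ)) : ℂ)
  refine this.congr' ?_ |>.trans (le_of_eq ?_)
  · exact Eventually.of_forall fun M => rfl
  · congr 1; push_cast; ring

def atoms : Set (ℝ × ℝ) := {q | ν {q} ≠ 0}

lemma BB_atoms (hb : ν specBoxᶜ = 0) {ρ : ℤ × ℤ → ℝ} (hρ : ∀ p, ∫ q, ee p q ∂ν = (ρ p : ℂ))
    (p : ℤ × ℤ) : (atoms ν).indicator (ee p) ∈ BB ℝ ν := by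
  set g : ℝ × ℝ → ℝ := fun q => ν.real {q} / ν.real Set.univ with hg
  have g0 : ∀ q, 0 ≤ g q := fun q => by positivity
  have g1 : ∀ q, g q ≤ 1 := fun q =>
    div_le_one_of_le₀ (measureReal_mono (Set.subset_univ _)) measureReal_nonneg
  refine BB_lim ν (g := fun m q => (1 - (1 - (g q : ℂ)) ^ m) * ee p q) (C := 1) ?_ ?_ ?_
  · intro m
    refine BB_lim ν (g := fun M q => (1 - (1 - hM ν M q) ^ m) * ee p q) (C := 1 + 2 ^ m) ?_ ?_ ?_
    · intro M
      have : (fun q => (1 - (1 - hM ν M q) ^ m) * ee p q) ∈ TT ℝ :=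
        TT_mul (Submodule.sub_mem _ TT_one (TT_pow (Submodule.sub_mem _ TT_one (hM_TT ν hρ M)) m))
          (Submodule.subset_span ⟨p, rfl⟩)
      obtain ⟨h1, h2⟩ := TT_sub_BB ν this
      exact ⟨h1, subset_closure h2⟩
    · intro M q
      rw [norm_mul, ee_norm, mul_one]
      refine (norm_sub_le _ _).trans ?_
      rw [norm_pow, norm_one]
      gcongr
      refine (norm_sub_le _ _).trans ?_
      rw [norm_one]; linarith [hM_le ν M q]
    · filter_upwards [ae_box ν hb] with q hq
      have := hM_lim ν hb hq
      exact ((((this.const_sub 1).pow m).const_sub 1).mul_const _)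
  · intro m q
    rw [norm_mul, ee_norm, mul_one]
    have : (1 - (1 - (g q : ℂ)) ^ m) = ((1 - (1 - g q) ^ m : ℝ) : ℂ) := by push_cast; ring
    rw [this, Complex.norm_real, Real.norm_eq_abs, abs_le]
    have h1 : 0 ≤ (1 - g q) ^ m := pow_nonneg (by linarith [g1 q]) _
    have h2 : (1 - g q) ^ m ≤ 1 := pow_le_one₀ (by linarith [g1 q]) (by linarith [g0 q])
    constructor <;> linarith
  · refine Eventually.of_forall fun q => ?_
    by_cases hq : q ∈ atoms ν
    · rw [Set.indicator_of_mem hq]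
      have hpos : 0 < g q := by
        have h1 : 0 < ν.real {q} := by
          rw [measureReal_def]
          exact ENNReal.toReal_pos hq (measure_ne_top _ _)
        have h2 : 0 < ν.real Set.univ := lt_of_lt_of_le h1 (measureReal_mono (Set.subset_univ _))
        positivity
      have h3 : Tendsto (fun m => (1 - g q) ^ m) atTop (nhds 0) :=
        tendsto_pow_atTop_nhds_zero_of_lt_one (by linarith [g1 q]) (by linarith)
      have h4 : Tendsto (fun m => (((1 - g q) ^ m : ℝ) : ℂ)) atTop (nhds ((0:ℝ):ℂ)) :=
        (Complex.continuous_ofReal.tendsto _).comp h3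
      have h5 := (h4.const_sub 1).mul_const (ee p q)
      simp only [Complex.ofReal_zero, sub_zero, one_mul] at h5
      refine h5.congr fun m => ?_
      push_cast; rfl
    · rw [Set.indicator_of_notMem hq]
      have : g q = 0 := by
        simp only [atoms, Set.mem_ofPred_eq, not_not] at hq
        simp [hg, measureReal_def, hq]
      simp [this]

lemma atoms_countable : (atoms ν).Countable := by
  exact Measure.countable_meas_pos_of_disjoint_iUnion (μ := ν) (As := fun q : ℝ × ℝ => {q})
    (fun q => measurableSet_singleton q) (fun a b hab => by simpa using hab) |>.mono
      (fun q hq => pos_iff_ne_zero.2 hq)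
end meas
end

noncomputable section
set_option linter.unusedSectionVars false

lemma L2_norm_sq {α : Type*} [MeasurableSpace α] {μ : Measure α} (f : Lp ℂ 2 μ) :
    ‖f‖ ^ 2 = ∫ a, ‖f a‖ ^ 2 ∂μ := by
  have h := L2.inner_def (𝕜 := ℂ) f f
  rw [inner_self_eq_norm_sq_to_K] at h
  have : ∀ a, inner ℂ (f a) (f a) = ((‖f a‖ ^ 2 : ℝ) : ℂ) := by
    intro a; rw [inner_self_eq_norm_sq_to_K]; push_cast; rfl
  simp_rw [this] at h
  rw [integral_complex_ofReal] at h
  apply Complex.ofReal_injective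
  rw [← h]; push_cast; rfl

section prob
variable {Ω : Type} [MeasurableSpace Ω] {P : Measure Ω} [IsProbabilityMeasure P]
  {X : ℤ → ℤ → Ω → ℝ} (hX : StatGauss P X)

include hX

lemma memLp_comb (c : (ℤ × ℤ) →₀ ℝ) (r : NNReal) :
    MemLp (fun ω => ∑ p ∈ c.support, c p * X p.1 p.2 ω) r P := by
  obtain ⟨v, hv⟩ := hX.gauss c
  have hm : Measurable (fun ω => ∑ p ∈ c.support, c p * X p.1 p.2 ω) :=
    Finset.measurable_fun_sum _ fun p _ => (hX.meas _ _).const_mul _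
  have := memLp_id_gaussianReal (μ := 0) (v := v) r
  rw [← hv, memLp_map_measure_iff aestronglyMeasurable_id hm.aemeasurable] at this
  exact this

lemma memLp_X (p : ℤ × ℤ) (r : NNReal) : MemLp (X p.1 p.2) r P := by
  have := memLp_comb hX (Finsupp.single p 1) r
  rw [Finsupp.support_single _ one_ne_zero] at this
  simpa using this

lemma memLp_XC (p : ℤ × ℤ) : MemLp (fun ω => (X p.1 p.2 ω : ℂ)) 2 P := by
  have := (memLp_X hX p 2).ofReal (K := ℂ)
  exact_mod_cast this

def xL (p : ℤ × ℤ) : Lp ℂ 2 P := (memLp_XC hX p).toLp _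

variable {ν νd : Measure (ℝ × ℝ)} {f : ℝ × ℝ → ℝ} 

lemma inner_eq [IsFiniteMeasure ν] (hν : SpectralDecomp P X ν νd f) (p q : ℤ × ℤ) :
    inner ℂ (eL ν p) (eL ν q) = inner ℂ (xL hX p) (xL hX q) := by
  rw [L2.inner_def, L2.inner_def]
  have h1 : ∫ a, inner ℂ (eL ν p a) (eL ν q a) ∂ν = ∫ a, ee (q - p) a ∂ν := by
    refine integral_congr_ae ?_
    filter_upwards [(memLp_ee ν p).coeFn_toLp, (memLp_ee ν q).coeFn_toLp] with a ha hb
    rw [eL, eL, ha, hb, sub_eq_add_neg, ee_add, ee_neg]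
    rfl
  have h2 : ∫ ω, inner ℂ (xL hX p ω) (xL hX q ω) ∂P
      = ∫ ω, ((X p.1 p.2 ω * X q.1 q.2 ω : ℝ) : ℂ) ∂P := by
    refine integral_congr_ae ?_
    filter_upwards [(memLp_XC hX p).coeFn_toLp, (memLp_XC hX q).coeFn_toLp] with a ha hb
    rw [xL, xL, ha, hb]
    simp [mul_comm]
  rw [h1, h2, integral_complex_ofReal]
  have h3 := hν.herglotz (q - p).1 (q - p).2
  have h4 := hX.stat p.1 p.2 (q - p).1 (q - p).2
  rw [← h4] at h3
  simp only [Prod.fst_sub, Prod.snd_sub, add_sub_cancel] at h3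
  exact h3

abbrev GR (ν : Measure (ℝ × ℝ)) [IsFiniteMeasure ν] : Set (Lp ℂ 2 ν × Lp ℂ 2 P) :=
  Gam ℝ (eL ν) (xL hX)
abbrev GC (ν : Measure (ℝ × ℝ)) [IsFiniteMeasure ν] : Set (Lp ℂ 2 ν × Lp ℂ 2 P) :=
  Gam ℂ (eL ν) (xL hX)

variable [IsFiniteMeasure ν] (hν : SpectralDecomp P X ν νd f)

lemma GR_sub : GR hX ν ⊆ GC hX ν := Gam_real_sub

lemma span_rep {z : Lp ℂ 2 ν × Lp ℂ 2 P}
    (hz : z ∈ Submodule.span ℝ (Set.range fun p => (eL ν p, xL hX p))) :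
    ∃ c : (ℤ × ℤ) →₀ ℝ, z.2 =ᵐ[P] fun ω => ((∑ p ∈ c.support, c p * X p.1 p.2 ω : ℝ) : ℂ) := by
  rw [Finsupp.mem_span_range_iff_exists_finsupp] at hz
  obtain ⟨c, rfl⟩ := hz
  refine ⟨c, ?_⟩
  rw [Finsupp.sum, Prod.snd_sum]
  refine (Lp.coeFn_finsetSum _ _).trans ?_
  have h1 : ∀ᵐ ω ∂P, ∀ p : ℤ × ℤ, (c p • xL hX p : Lp ℂ 2 P) ω = ((c p * X p.1 p.2 ω : ℝ) : ℂ) := by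
    rw [ae_all_iff]
    intro p
    filter_upwards [Lp.coeFn_smul (c p) (xL hX p), (memLp_XC hX p).coeFn_toLp] with ω h1 h2
    rw [h1, Pi.smul_apply, xL, h2]; simp
  filter_upwards [h1] with ω h1
  rw [Finset.sum_apply]
  push_cast
  refine Finset.sum_congr rfl fun p hp => ?_
  rw [← Complex.ofReal_mul, ← h1 p]; rfl

lemma GR_real {z : Lp ℂ 2 ν × Lp ℂ 2 P} (hz : z ∈ GR hX ν) : ∀ᵐ ω ∂P, z.2 ω = ((z.2 ω).re : ℂ) := by
  have hc : IsClosed {z : Lp ℂ 2 ν × Lp ℂ 2 P | Complex.imCLM.compLpL 2 P z.2 = 0} :=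
    isClosed_eq (by fun_prop) continuous_const
  have : Complex.imCLM.compLpL 2 P z.2 = 0 := by
    refine closure_minimal ?_ hc hz
    intro z hz
    obtain ⟨c, hc⟩ := span_rep hX hz
    refine Lp.ext ?_
    filter_upwards [hc, Complex.imCLM.coeFn_compLpL (p := 2) (μ := P) z.2,
      Lp.coeFn_zero ℝ 2 P] with ω h1 h2 h3
    rw [h2, h1, h3]
    simp only [Complex.imCLM_apply, Complex.ofReal_im, Pi.zero_apply]
  filter_upwards [Complex.imCLM.coeFn_compLpL (p := 2) (μ := P) z.2, Lp.coeFn_zero ℝ 2 P] with ω h2 h3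
  rw [this, h3] at h2
  apply Complex.ext
  · simp
  · simpa using h2.symm

lemma gauss_sq {Y : Ω → ℝ} (hY : AEMeasurable Y P) {v : NNReal} (h : P.map Y = gaussianReal 0 v) :
    ∫ ω, Y ω ^ 2 ∂P = v := by
  have h1 : ∫ x, x ^ 2 ∂(P.map Y) = ∫ ω, Y ω ^ 2 ∂P :=
    integral_map hY (by fun_prop)
  rw [← h1, h]
  have := variance_fun_id_gaussianReal (μ := 0) (v := v)
  rw [variance_of_integral_eq_zero (by fun_prop) integral_id_gaussianReal] at this
  exact this

include hν in
lemma span_char {z : Lp ℂ 2 ν × Lp ℂ 2 P}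
    (hz : z ∈ Submodule.span ℝ (Set.range fun p => (eL ν p, xL hX p))) (t : ℝ) :
    ∫ ω, Complex.exp (t * ((z.2 ω).re : ℂ) * Complex.I) ∂P
      = Complex.exp (-((‖z.1‖ ^ 2 * t ^ 2 / 2 : ℝ) : ℂ)) := by
  obtain ⟨c, hc⟩ := span_rep hX hz
  obtain ⟨v, hv⟩ := hX.gauss c
  have hm : Measurable (fun ω => ∑ p ∈ c.support, c p * X p.1 p.2 ω) :=
    Finset.measurable_fun_sum _ fun p _ => (hX.meas _ _).const_mul _
  have h1 := Gam_norm (inner_eq hX hν) (GR_sub hX (subset_closure hz))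
  have h2 : ‖z.1‖ ^ 2 = v := by
    rw [h1, L2_norm_sq, ← gauss_sq hX hm.aemeasurable hv]
    refine integral_congr_ae ?_
    filter_upwards [hc] with ω h
    rw [h, Complex.norm_real, Real.norm_eq_abs, sq_abs]
  have h3 := charFun_gaussianReal (μ := 0) (v := v) t
  rw [← hv, charFun_apply_real, integral_map hm.aemeasurable (by fun_prop)] at h3
  rw [h2]
  calc _ = _ := by
        refine integral_congr_ae ?_
        filter_upwards [hc] with ω h
        rw [h, Complex.ofReal_re]
    _ = _ := h3
    _ = _ := by congr 1; push_cast; ring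

include hν in
lemma GR_char {z : Lp ℂ 2 ν × Lp ℂ 2 P} (hz : z ∈ GR hX ν) (t : ℝ) :
    ∫ ω, Complex.exp (t * ((z.2 ω).re : ℂ) * Complex.I) ∂P
      = Complex.exp (-((‖z.1‖ ^ 2 * t ^ 2 / 2 : ℝ) : ℂ)) := by
  obtain ⟨u, hu, hul⟩ := mem_closure_iff_seq_limit.1 hz
  have h2 : Tendsto (fun n => (u n).2) atTop (nhds z.2) := (continuous_snd.tendsto _).comp hul
  have h1 : Tendsto (fun n => (u n).1) atTop (nhds z.1) := (continuous_fst.tendsto _).comp hul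
  obtain ⟨ns, hns, hae⟩ := (tendstoInMeasure_of_tendsto_Lp h2).exists_seq_tendsto_ae
  have a1 : Tendsto (fun n => ∫ ω, Complex.exp (t * (((u (ns n)).2 ω).re : ℂ) * Complex.I) ∂P) atTop
      (nhds (∫ ω, Complex.exp (t * ((z.2 ω).re : ℂ) * Complex.I) ∂P)) := by
    refine tendsto_integral_of_dominated_convergence (fun _ => 1) ?_ (integrable_const _) ?_ ?_
    · intro n
      have hm := (Lp.stronglyMeasurable (u (ns n)).2).measurable
      have : Measurable fun ω => Complex.exp (t * (((u (ns n)).2 ω).re : ℂ) * Complex.I) := by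
        fun_prop
      exact this.aestronglyMeasurable
    · intro n
      refine Eventually.of_forall fun ω => ?_
      rw [← Complex.ofReal_mul, Complex.norm_exp_ofReal_mul_I]
    · filter_upwards [hae] with ω h
      have : Continuous fun w : ℂ => Complex.exp (t * (w.re : ℂ) * Complex.I) := by fun_prop
      exact (this.tendsto _).comp h
  have a2 : Tendsto (fun n => Complex.exp (-((‖(u (ns n)).1‖ ^ 2 * t ^ 2 / 2 : ℝ) : ℂ))) atTop
      (nhds (Complex.exp (-((‖z.1‖ ^ 2 * t ^ 2 / 2 : ℝ) : ℂ)))) := by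
    have : Continuous fun w : Lp ℂ 2 ν => Complex.exp (-((‖w‖ ^ 2 * t ^ 2 / 2 : ℝ) : ℂ)) := by fun_prop
    exact (this.tendsto _).comp (h1.comp hns.tendsto_atTop)
  refine tendsto_nhds_unique a1 (a2.congr fun n => ?_)
  exact (span_char hX hν (hu (ns n)) t).symm

include hν in
lemma GR_gauss {z : Lp ℂ 2 ν × Lp ℂ 2 P} (hz : z ∈ GR hX ν) :
    P.map (fun ω => (z.2 ω).re) = gaussianReal 0 (‖z.1‖₊ ^ 2) := by
  have hm : Measurable (fun ω => (z.2 ω).re) :=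
    Complex.measurable_re.comp (Lp.stronglyMeasurable z.2).measurable
  have := Measure.isProbabilityMeasure_map hm.aemeasurable (μ := P)
  apply Measure.ext_of_charFun
  funext t
  rw [charFun_apply_real, integral_map hm.aemeasurable (by fun_prop), GR_char hX hν hz,
    charFun_gaussianReal]
  congr 1
  simp
end prob
end

noncomputable section
set_option linter.unusedSectionVars false

section meas
variable {Ω : Type} [MeasurableSpace Ω] {P : Measure Ω} {X : ℤ → ℤ → Ω → ℝ}
  {ν νd : Measure (ℝ × ℝ)} {f : ℝ × ℝ → ℝ} [IsFiniteMeasure ν] (hν : SpectralDecomp P X ν νd f)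

def nuac (f : ℝ × ℝ → ℝ) : Measure (ℝ × ℝ) :=
  (volume.restrict specBox).withDensity (fun q => ENNReal.ofReal (f q))

lemma nuac_count {s : Set (ℝ × ℝ)} (hs : s.Countable) : nuac f s = 0 := by
  refine withDensity_absolutelyContinuous _ _ ?_
  refine Measure.restrict_le_self.absolutelyContinuous ?_
  exact hs.measure_zero _

include hν

lemma nud_le : νd ≤ ν := by
  rw [hν.decomp]; exact Measure.le_add_left le_rfl

lemma nud_fin : IsFiniteMeasure νd :=
  isFiniteMeasure_of_le ν (nud_le hν)

lemma nud_atoms : νd (atoms ν)ᶜ = 0 := by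
  obtain ⟨s, hs, h0⟩ := hν.discrete
  have h1 : νd (s ∩ (atoms ν)ᶜ) = 0 := by
    refine le_antisymm ((nud_le hν _).trans ?_) zero_le
    have : ν (⋃ q ∈ s ∩ (atoms ν)ᶜ, {q}) = 0 := by
      rw [measure_biUnion_null_iff (hs.mono Set.inter_subset_left)]
      rintro q ⟨_, hq⟩
      simpa [atoms] using hq
    rw [Set.biUnion_of_singleton] at this
    exact this.le
  refine measure_mono_null (t := sᶜ ∪ (s ∩ (atoms ν)ᶜ)) ?_ (measure_union_null h0 h1)
  intro q hq
  by_cases h : q ∈ s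
  · exact Or.inr ⟨h, hq⟩
  · exact Or.inl h

lemma restrict_atoms : ν.restrict (atoms ν) = νd := by
  have hS := atoms_countable ν
  have hSm := hS.measurableSet
  ext A hA
  rw [Measure.restrict_apply hA]
  have : ν (A ∩ atoms ν) = nuac f (A ∩ atoms ν) + νd (A ∩ atoms ν) := by
    exact congrArg (fun m : Measure (ℝ × ℝ) => m _) hν.decomp
  rw [this, nuac_count (hS.mono Set.inter_subset_right), zero_add]
  exact measure_inter_conull (nud_atoms hν)

lemma restrict_compl : ν.restrict (atoms ν)ᶜ = nuac f := by
  have hS := atoms_countable ν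
  have hSm := hS.measurableSet
  ext A hA
  rw [Measure.restrict_apply hA]
  have : ν (A ∩ (atoms ν)ᶜ) = nuac f (A ∩ (atoms ν)ᶜ) + νd (A ∩ (atoms ν)ᶜ) := by
    exact congrArg (fun m : Measure (ℝ × ℝ) => m _) hν.decomp
  rw [this, measure_mono_null Set.inter_subset_right (nud_atoms hν), add_zero]
  refine measure_inter_conull ?_
  rw [compl_compl]; exact nuac_count hS

end meas

lemma RL {f : ℝ × ℝ → ℝ} (hf : Measurable f) (hf0 : ∀ q, 0 ≤ f q) : Tendsto (fun p => ∫ q, ee p q ∂(nuac f)) cofinite (nhds 0) := by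
  have hbox : MeasurableSet specBox := measurableSet_Ioc.prod measurableSet_Ioc
  let w : ℤ × ℤ → StrongDual ℝ (ℝ × ℝ) := fun p =>
    (-(p.1 : ℝ) / (2 * π)) • ContinuousLinearMap.fst ℝ ℝ ℝ
      + (-(p.2 : ℝ) / (2 * π)) • ContinuousLinearMap.snd ℝ ℝ ℝ
  have hp := Real.pi_pos
  have hw : Tendsto w cofinite (cocompact _) := by
    rw [← Metric.cobounded_eq_cocompact, ← tendsto_norm_atTop_iff_cobounded, tendsto_atTop]
    intro C
    rw [eventually_cofinite]
    have hfin : (Set.Icc (-⌈2 * π * |C|⌉) ⌈2 * π * |C|⌉ ×ˢ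
      Set.Icc (-⌈2 * π * |C|⌉) ⌈2 * π * |C|⌉ : Set (ℤ × ℤ)).Finite :=
      (Set.finite_Icc _ _).prod (Set.finite_Icc _ _)
    refine hfin.subset ?_
    intro p hpC
    have hpC : ‖w p‖ < C := not_le.1 hpC
    have key : ∀ n : ℤ, |(n : ℝ)| / (2 * π) ≤ ‖w p‖ →
        n ∈ Set.Icc (-⌈2 * π * |C|⌉) ⌈2 * π * |C|⌉ := by
      intro n hn
      have h1 : |(n : ℝ)| ≤ 2 * π * |C| := by
        rw [div_le_iff₀ (by positivity)] at hn
        nlinarith [le_abs_self C]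
      have h2 : |(n : ℝ)| ≤ (⌈2 * π * |C|⌉ : ℝ) := h1.trans (Int.le_ceil _)
      rw [abs_le] at h2
      exact ⟨by exact_mod_cast h2.1, by exact_mod_cast h2.2⟩
    constructor
    · apply key
      have := (w p).le_opNorm (1, 0)
      simpa [w, Prod.norm_def, abs_div, abs_of_pos hp] using this
    · apply key
      have := (w p).le_opNorm (0, 1)
      simpa [w, Prod.norm_def, abs_div, abs_of_pos hp] using this
  have h := (tendsto_integral_exp_smul_cocompact
    (specBox.indicator fun q => (f q : ℂ)) (volume : Measure (ℝ × ℝ))).comp hw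
  refine h.congr fun p => ?_
  unfold nuac
  rw [integral_withDensity_eq_integral_toReal_smul (by fun_prop) (by simp), ← integral_indicator hbox]
  simp only [Function.comp]
  congr 1
  funext q
  by_cases hq : q ∈ specBox
  · rw [Set.indicator_of_mem hq, Set.indicator_of_mem hq, ENNReal.toReal_ofReal (hf0 q)]
    have : (Real.fourierChar (-(w p) q) : ℂ) = ee p q := by
      rw [Real.fourierChar_apply, ee, mul_comm]
      congr 3
      simp [w]; field_simp; ring
    rw [Circle.smul_def, this]
    simp [mul_comm]
  · rw [Set.indicator_of_notMem hq, Set.indicator_of_notMem hq, smul_zero]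

lemma exists_F (ν : Measure (ℝ × ℝ)) [IsFiniteMeasure ν] {ε : ENNReal} (hε : 0 < ε) :
    ∃ F : Finset (ℝ × ℝ), (F : Set (ℝ × ℝ)) ⊆ atoms ν ∧ ν (atoms ν \ F) ≤ ε := by
  classical
  have hS := atoms_countable ν
  have := hS.to_subtype
  have h1 : ∑' a : atoms ν, ν {(a : ℝ × ℝ)} ≠ ⊤ := by
    have := measure_biUnion (μ := ν) hS (f := fun q => {q})
      (fun a _ b _ hab => by simpa using hab) (fun q _ => measurableSet_singleton q)
    rw [← this]; exact measure_ne_top _ _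
  have h2 := ENNReal.tendsto_tsum_compl_atTop_zero h1
  obtain ⟨F, hF⟩ := ((h2.eventually (gt_mem_nhds hε)).exists)
  refine ⟨F.image Subtype.val, ?_, ?_⟩
  · intro q hq
    simp only [Finset.coe_image, Set.mem_image] at hq
    obtain ⟨a, _, rfl⟩ := hq
    exact a.2
  · refine le_trans ?_ hF.le
    refine (measure_mono (t := ⋃ b : { x // x ∉ F }, {((b : atoms ν) : ℝ × ℝ)}) ?_).trans
      (measure_iUnion_le _)
    rintro q ⟨h1, h2⟩
    simp only [Finset.coe_image, Set.mem_image, Finset.mem_coe, not_exists, not_and] at h2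
    refine Set.mem_iUnion.2 ⟨⟨⟨q, h1⟩, fun h => h2 _ h rfl⟩, rfl⟩
end

noncomputable section
set_option linter.unusedSectionVars false

lemma toLp_norm_sq {α : Type*} [MeasurableSpace α] {μ : Measure α} {g : α → ℂ} (f : Lp ℂ 2 μ)
    (h : f =ᵐ[μ] g) : ‖f‖ ^ 2 = ∫ a, ‖g a‖ ^ 2 ∂μ := by
  rw [L2_norm_sq]
  exact integral_congr_ae (by filter_upwards [h] with a ha; rw [ha])

lemma Lp_comb {α ι : Type*} [MeasurableSpace α] {μ : Measure α} [Countable ι]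
    {R : Type*} [NormedField R] [NormedAlgebra R ℂ] (s : Finset ι)
    (c : ι → R) (y : ι → Lp ℂ 2 μ) {g : ι → α → ℂ} (h : ∀ p, y p =ᵐ[μ] g p) :
    (∑ p ∈ s, c p • y p : Lp ℂ 2 μ) =ᵐ[μ] fun a => ∑ p ∈ s, c p • g p a := by
  refine (Lp.coeFn_finsetSum _ _).trans ?_
  have h1 : ∀ᵐ a ∂μ, ∀ p, (c p • y p : Lp ℂ 2 μ) a = c p • g p a := by
    rw [ae_all_iff]
    intro p
    filter_upwards [Lp.coeFn_smul (c p) (y p), h p] with a h1 h2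
    rw [h1, Pi.smul_apply, h2]
  filter_upwards [h1] with a h1
  rw [Finset.sum_apply]
  exact Finset.sum_congr rfl fun p _ => h1 p

/-- package -/
structure Dec {Ω : Type} [MeasurableSpace Ω] (P : Measure Ω) (X Xd : ℤ → ℤ → Ω → ℝ)
    (νd : Measure (ℝ × ℝ)) : Prop where
  meas : ∀ j k, Measurable (Xd j k)
  gaussd : ∀ c : (ℤ × ℤ) →₀ ℝ, P.map (fun ω => ∑ p ∈ c.support, c p * Xd p.1 p.2 ω)
    = gaussianReal 0 (∫ q, ‖∑ p ∈ c.support, c p • ee p q‖ ^ 2 ∂νd).toNNReal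
  gaussac : ∀ c : (ℤ × ℤ) →₀ ℝ, ∃ v : NNReal, P.map (fun ω => ∑ p ∈ c.support, c p *
    (X p.1 p.2 ω - Xd p.1 p.2 ω)) = gaussianReal 0 v
  cov : ∃ r : ℤ × ℤ → ℝ, Tendsto r cofinite (nhds 0) ∧ ∀ p q : ℤ × ℤ,
    ∫ ω, (X p.1 p.2 ω - Xd p.1 p.2 ω) * (X q.1 q.2 ω - Xd q.1 q.2 ω) ∂P = r (q - p)
  finr : ∀ ε : ℝ, 0 < ε → ∃ (F : Finset (ℝ × ℝ)) (Z : ℝ × ℝ → Ω → ℂ),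
    (∀ a, Measurable (Z a)) ∧ (∀ a, MemLp (Z a) 2 P) ∧ ∀ p : ℤ × ℤ,
      ∫ ω, ‖(Xd p.1 p.2 ω : ℂ) - ∑ a ∈ F, ee p a * Z a ω‖ ^ 2 ∂P ≤ ε

section prob
variable {Ω : Type} [MeasurableSpace Ω] {P : Measure Ω} [IsProbabilityMeasure P]
  {X : ℤ → ℤ → Ω → ℝ} (hX : StatGauss P X) {ν νd : Measure (ℝ × ℝ)} {f : ℝ × ℝ → ℝ}
  (hν : SpectralDecomp P X ν νd f)

include hX hν in
theorem Dec_exists : ∃ Xd, Dec P X Xd νd := by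
  classical
  have := hν.finite
  have hb := hν.support
  have hSm := (atoms_countable ν).measurableSet
  have hin := inner_eq hX hν
  set S := atoms ν with hS
  have hρ : ∀ p, ∫ q, ee p q ∂ν = ((∫ ω, X 0 0 ω * X p.1 p.2 ω ∂P : ℝ) : ℂ) := fun p =>
    hν.herglotz p.1 p.2
  choose m0 c0 using fun p => BB_atoms ν hb hρ p
  choose y hy using fun p => Gam_exists ℝ (GR_sub hX) hin (c0 p)
  have hym : ∀ p, Measurable fun ω => (y p ω).re := fun p =>
    Complex.measurable_re.comp (Lp.stronglyMeasurable (y p)).measurable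
  have hyr : ∀ p, y p =ᵐ[P] fun ω => ((y p ω).re : ℂ) := fun p => GR_real hX (hy p)
  have he : ∀ p, eL ν p =ᵐ[ν] ee p := fun p => (memLp_ee ν p).coeFn_toLp
  have hx : ∀ p, xL hX p =ᵐ[P] fun ω => (X p.1 p.2 ω : ℂ) := fun p => (memLp_XC hX p).coeFn_toLp
  have hac : ∀ p, (eL ν p, xL hX p) - ((m0 p).toLp _, y p) ∈ GR hX ν := fun p =>
    Gam_sub ℝ (Gam_gen ℝ p) (hy p)
  have hac1 : ∀ p, (eL ν p - (m0 p).toLp _ : Lp ℂ 2 ν) =ᵐ[ν] Sᶜ.indicator (ee p) := by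
    intro p
    filter_upwards [Lp.coeFn_sub (eL ν p) ((m0 p).toLp _), he p, (m0 p).coeFn_toLp] with q h1 h2 h3
    rw [h1, Pi.sub_apply, h2, h3]
    by_cases hq : q ∈ S <;> simp [hq, ← hS]
  have hac2 : ∀ p, (xL hX p - y p : Lp ℂ 2 P) =ᵐ[P]
      fun ω => ((X p.1 p.2 ω - (y p ω).re : ℝ) : ℂ) := by
    intro p
    filter_upwards [Lp.coeFn_sub (xL hX p) (y p), hx p, hyr p] with q h1 h2 h3
    rw [h1, Pi.sub_apply, h2, h3]
    push_cast; simp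
  refine ⟨fun j k ω => (y (j, k) ω).re, fun j k => hym _, ?_, ?_, ?_, ?_⟩
  · intro c
    have hz := Gam_sum ℝ c.support (fun p => c p • ((m0 p).toLp _, y p))
      (fun p _ => Gam_smul ℝ (c p) (hy p))
    have hg := GR_gauss hX hν hz
    have h2 := Lp_comb c.support c y hyr
    have h1 := Lp_comb c.support c (fun p => (m0 p).toLp _) (fun p => (m0 p).coeFn_toLp)
    rw [Prod.snd_sum, Prod.fst_sum] at hg
    have e1 : (fun ω => ((∑ p ∈ c.support, c p • y p : Lp ℂ 2 P) ω).re) =ᵐ[P]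
        fun ω => ∑ p ∈ c.support, c p * (y p ω).re := by
      filter_upwards [h2] with ω h
      rw [h]; simp
    refine (Measure.map_congr e1).symm.trans (hg.trans ?_)
    congr 1
    rw [← NNReal.coe_inj]
    push_cast
    rw [Real.coe_toNNReal _ (integral_nonneg fun q => by positivity)]
    refine (toLp_norm_sq _ h1).trans ?_
    rw [← restrict_atoms hν, ← integral_indicator hSm]
    congr 1
    funext q
    by_cases hq : q ∈ S
    · simp [hq, ← hS]
    · simp [hq, ← hS]
  · intro c
    have hz := Gam_sum ℝ c.support (fun p => c p • ((eL ν p, xL hX p) - ((m0 p).toLp _, y p)))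
      (fun p _ => Gam_smul ℝ (c p) (hac p))
    have hg := GR_gauss hX hν hz
    refine ⟨_, Eq.trans ?_ hg⟩
    refine Measure.map_congr ?_
    have h2 := Lp_comb c.support c (fun p => xL hX p - y p) hac2
    rw [Prod.snd_sum]
    filter_upwards [h2] with ω h
    refine Eq.trans ?_ (congrArg Complex.re h).symm
    simp
  · refine ⟨fun p => (∫ q, ee p q ∂(nuac f)).re, ?_, ?_⟩
    · have := RL hν.f_meas hν.f_nonneg
      have h := (Complex.continuous_re.tendsto _).comp this
      simp only [Complex.zero_re] at h
      exact h
    · intro p q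
      have h := Gam_inner hin (GR_sub hX (hac p)) (GR_sub hX (hac q))
      rw [L2.inner_def, L2.inner_def] at h
      have h1 : ∫ a, inner ℂ ((eL ν p - (m0 p).toLp _ : Lp ℂ 2 ν) a)
          ((eL ν q - (m0 q).toLp _ : Lp ℂ 2 ν) a) ∂ν = ∫ a, ee (q - p) a ∂(nuac f) := by
        rw [← restrict_compl hν, ← integral_indicator hSm.compl]
        refine integral_congr_ae ?_
        filter_upwards [hac1 p, hac1 q] with a h1 h2
        rw [h1, h2]
        by_cases hq : a ∈ S
        · simp [hq, ← hS]
        · simp only [← hS, Set.indicator_of_mem (show a ∈ Sᶜ from hq)]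
          rw [sub_eq_add_neg, ee_add, ee_neg]
          rfl
      have h2 : ∫ ω, inner ℂ ((xL hX p - y p : Lp ℂ 2 P) ω) ((xL hX q - y q : Lp ℂ 2 P) ω) ∂P
          = ∫ ω, (((X p.1 p.2 ω - (y p ω).re) * (X q.1 q.2 ω - (y q ω).re) : ℝ) : ℂ) ∂P := by
        refine integral_congr_ae ?_
        filter_upwards [hac2 p, hac2 q] with ω h1 h2
        rw [h1, h2]
        simp [mul_comm]
      have h3 := h1.symm.trans (h.trans h2)
      rw [integral_complex_ofReal] at h3
      simp only [h3, Complex.ofReal_re]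
  · intro ε hε
    obtain ⟨F, hFS, hF⟩ := exists_F ν (ENNReal.ofReal_pos.2 hε)
    have hFb : ∀ a : F, (a : ℝ × ℝ) ∈ specBox := by
      intro a
      by_contra hc
      have h1 : ν {(a : ℝ × ℝ)} = 0 :=
        measure_mono_null (Set.singleton_subset_iff.2 hc) hb
      exact hFS a.2 h1
    choose m1 c1 using fun a : F => BB_single ν hb (hFb a)
    choose z hz using fun a : F => Gam_exists ℂ subset_rfl hin (c1 a)
    refine ⟨F, fun a ω => if h : a ∈ F then z ⟨a, h⟩ ω else 0, ?_, ?_, ?_⟩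
    · intro a
      by_cases h : a ∈ F
      · simp only [h, dite_true]; exact (Lp.stronglyMeasurable _).measurable
      · simp only [h, dite_false]; exact measurable_const
    · intro a
      by_cases h : a ∈ F
      · simp only [h, dite_true]; exact Lp.memLp _
      · simp only [h, dite_false]; exact MemLp.zero
    · intro p
      have hzs := Gam_sub ℂ (GR_sub hX (hy p)) (Gam_sum ℂ Finset.univ
        (fun a : F => ee p a • ((m1 a).toLp _, z a)) (fun a _ => Gam_smul ℂ _ (hz a)))
      have hn := Gam_norm hin hzs
      simp only [Prod.fst_sub, Prod.snd_sub, Prod.fst_sum, Prod.snd_sum] at hn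
      have a1 := Lp_comb Finset.univ (fun a : F => ee p a) (fun a : F => (m1 a).toLp _)
        (fun a => (m1 a).coeFn_toLp)
      have a2 := Lp_comb Finset.univ (fun a : F => ee p a) z (fun a => ae_eq_refl _)
      have b2 : (y p - ∑ a : F, ee p a • z a : Lp ℂ 2 P) =ᵐ[P] fun ω => ((y p ω).re : ℂ)
          - ∑ a ∈ F, ee p a * (if h : a ∈ F then z ⟨a, h⟩ ω else 0) := by
        filter_upwards [Lp.coeFn_sub (y p) (∑ a : F, ee p a • z a), hyr p, a2] with ω h1 h2 h3
        rw [h1, Pi.sub_apply, h3, h2, ← Finset.sum_attach F]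
        simp
      have b1 : ((m0 p).toLp _ - ∑ a : F, ee p a • (m1 a).toLp _ : Lp ℂ 2 ν) =ᵐ[ν]
          (S \ F).indicator (ee p) := by
        filter_upwards [Lp.coeFn_sub ((m0 p).toLp _) (∑ a : F, ee p a • (m1 a).toLp _),
          (m0 p).coeFn_toLp, a1] with q h1 h2 h3
        rw [h1, Pi.sub_apply, h3, h2]
        have : ∑ a : F, ee p a • ({(a : ℝ × ℝ)} : Set (ℝ × ℝ)).indicator (1 : ℝ × ℝ → ℂ) q
            = (F : Set (ℝ × ℝ)).indicator (ee p) q := by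
          rw [Finset.univ_eq_attach, Finset.sum_attach F
            (fun a => ee p a • ({a} : Set (ℝ × ℝ)).indicator (1 : ℝ × ℝ → ℂ) q)]
          simp [Set.indicator_apply]
        rw [this]
        by_cases hq : q ∈ S
        · by_cases hq' : q ∈ F <;> simp [hq, hq', ← hS, Set.indicator_apply]
        · have hq' : q ∉ F := fun h => hq (hFS h)
          simp [hq, hq', ← hS, Set.indicator_apply]
      have hn2 : ‖(y p - ∑ a : F, ee p a • z a : Lp ℂ 2 P)‖ ^ 2
          = ‖((m0 p).toLp _ - ∑ a : F, ee p a • (m1 a).toLp _ : Lp ℂ 2 ν)‖ ^ 2 := by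
        congr 1; exact hn.symm
      rw [toLp_norm_sq _ b2, toLp_norm_sq _ b1] at hn2
      refine hn2.le.trans ?_
      have hm : MeasurableSet (S \ (F : Set (ℝ × ℝ))) := hSm.diff F.measurableSet
      have : ∀ q, ‖(S \ (F : Set (ℝ × ℝ))).indicator (ee p) q‖ ^ 2
          = (S \ (F : Set (ℝ × ℝ))).indicator (fun _ => (1:ℝ)) q := by
        intro q
        by_cases hq : q ∈ S \ (F : Set (ℝ × ℝ))
        · rw [Set.indicator_of_mem hq, Set.indicator_of_mem hq, ee_norm]; norm_num
        · rw [Set.indicator_of_notMem hq, Set.indicator_of_notMem hq]; norm_num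
      simp_rw [this]
      rw [integral_indicator hm]
      simp only [integral_const, smul_eq_mul, mul_one, measureReal_restrict_apply MeasurableSet.univ,
        Set.univ_inter]
      exact ENNReal.toReal_le_of_le_ofReal hε.le hF
end prob
end

noncomputable section
set_option linter.unusedSectionVars false

lemma gauss_fourth (v : NNReal) : ∫ x, x ^ 4 ∂(gaussianReal 0 v) = 3 * (v : ℝ) ^ 2 := by
  have h := iteratedDeriv_mgf_zero (X := id) (μ := gaussianReal 0 v)
    (by rw [integrableExpSet_id_gaussianReal]; simp) 4
  simp only [Pi.pow_apply, id] at h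
  rw [← h, mgf_id_gaussianReal]
  have e0 : (fun t : ℝ => rexp (0 * t + v * t ^ 2 / 2)) = fun t => 1 * rexp (v * t ^ 2 / 2) := by
    funext t; simp
  have hE : ∀ t : ℝ, HasDerivAt (fun t : ℝ => rexp (v * t ^ 2 / 2)) (rexp (v * t ^ 2 / 2) * (v * t)) t := by
    intro t
    refine HasDerivAt.exp ?_
    have := ((hasDerivAt_pow 2 t).const_mul (v : ℝ)).div_const 2
    refine this.congr_deriv ?_
    norm_num; ring
  have hd : ∀ p p' : ℝ → ℝ, (∀ t, HasDerivAt p (p' t) t) →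
      deriv (fun t : ℝ => p t * rexp (v * t ^ 2 / 2)) =
        fun t => (p' t + v * t * p t) * rexp (v * t ^ 2 / 2) := by
    intro p p' hp
    funext t
    have := ((hp t).mul (hE t)).deriv
    refine Eq.trans this ?_
    ring
  rw [e0, iteratedDeriv_succ', iteratedDeriv_succ', iteratedDeriv_succ', iteratedDeriv_succ', iteratedDeriv_zero]
  rw [hd (fun _ => 1) (fun _ => 0) (fun t => hasDerivAt_const _ _)]
  rw [hd _ (fun _ => v) (fun t => ?_)]
  rw [hd _ (fun t => 2 * v ^ 2 * t) (fun t => ?_)]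
  rw [hd _ (fun t => 3 * v ^ 2 + 3 * v ^ 3 * t ^ 2) (fun t => ?_)]
  · simp
  · have h1 := ((hasDerivAt_id t).const_mul (3 * (v : ℝ) ^ 2)).add
      ((hasDerivAt_pow 3 t).const_mul ((v : ℝ) ^ 3))
    refine (h1.congr_of_eventuallyEq (Eventually.of_forall fun s => ?_)).congr_deriv ?_
    · simp; ring
    · norm_num; ring
  · have h1 := (hasDerivAt_const t (v : ℝ)).add
      ((hasDerivAt_pow 2 t).const_mul ((v : ℝ) ^ 2))
    refine (h1.congr_of_eventuallyEq (Eventually.of_forall fun s => ?_)).congr_deriv ?_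
    · simp; ring
    · norm_num; ring
  · have h1 := (hasDerivAt_id t).const_mul (v : ℝ)
    refine (h1.congr_of_eventuallyEq (Eventually.of_forall fun s => ?_)).congr_deriv ?_
    · simp
    · simp

section four
variable {Ω : Type} [MeasurableSpace Ω] {P : Measure Ω} [IsProbabilityMeasure P]

lemma gauss_sq0 {Y : Ω → ℝ} (hY : AEMeasurable Y P) {v : NNReal} (h : P.map Y = gaussianReal 0 v) :
    ∫ ω, Y ω ^ 2 ∂P = v := by
  have h1 : ∫ x, x ^ 2 ∂(P.map Y) = ∫ ω, Y ω ^ 2 ∂P :=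
    integral_map hY (by fun_prop)
  rw [← h1, h]
  have := variance_fun_id_gaussianReal (μ := 0) (v := v)
  rw [variance_of_integral_eq_zero (by fun_prop) integral_id_gaussianReal] at this
  exact this


lemma gauss_four' {Y : Ω → ℝ} (hY : AEMeasurable Y P) {v : NNReal} (h : P.map Y = gaussianReal 0 v) :
    ∫ ω, Y ω ^ 4 ∂P = 3 * (∫ ω, Y ω ^ 2 ∂P) ^ 2 := by
  have h1 : ∫ x, x ^ 4 ∂(P.map Y) = ∫ ω, Y ω ^ 4 ∂P :=
    integral_map hY (by fun_prop)
  rw [gauss_sq0 hY h, ← h1, h, gauss_fourth]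

lemma gauss_memLp {Y : Ω → ℝ} (hY : AEMeasurable Y P) {v : NNReal} (h : P.map Y = gaussianReal 0 v)
    (r : NNReal) : MemLp Y r P := by
  have := memLp_id_gaussianReal (μ := 0) (v := v) r
  rw [← h, memLp_map_measure_iff (by fun_prop) hY] at this
  exact this

theorem isserlis {Y : Fin 4 → Ω → ℝ} (hm : ∀ i, Measurable (Y i))
    (hg : ∀ c : Fin 4 → ℝ, ∃ v : NNReal, P.map (fun ω => ∑ i, c i * Y i ω) = gaussianReal 0 v) :
    Integrable (fun ω => Y 0 ω * Y 1 ω * (Y 2 ω * Y 3 ω)) P ∧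
    ∫ ω, Y 0 ω * Y 1 ω * (Y 2 ω * Y 3 ω) ∂P =
      (∫ ω, Y 0 ω * Y 1 ω ∂P) * (∫ ω, Y 2 ω * Y 3 ω ∂P)
      + (∫ ω, Y 0 ω * Y 2 ω ∂P) * (∫ ω, Y 1 ω * Y 3 ω ∂P)
      + (∫ ω, Y 0 ω * Y 3 ω ∂P) * (∫ ω, Y 1 ω * Y 2 ω ∂P) := by
  have hLm : ∀ c : Fin 4 → ℝ, Measurable (fun ω => ∑ i, c i * Y i ω) := fun c =>
    Finset.measurable_fun_sum _ fun i _ => (hm i).const_mul _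
  have hL : ∀ (c : Fin 4 → ℝ) (r : NNReal), MemLp (fun ω => ∑ i, c i * Y i ω) r P := fun c r =>
    gauss_memLp (hLm c).aemeasurable (hg c).choose_spec r
  have hY2 : ∀ i, MemLp (Y i) 2 P := by
    intro i
    have := hL (Pi.single i 1) 2
    simpa [Pi.single_apply] using this
  have hYY : ∀ i j, Integrable (fun ω => Y i ω * Y j ω) P := fun i j => (hY2 i).integrable_mul (hY2 j)
  have h4i : ∀ c : Fin 4 → ℝ, Integrable (fun ω => (∑ i, c i * Y i ω) ^ 4) P := by
    intro c
    exact (hL c 4).integrable_norm_pow (by norm_num) |>.congr (ae_of_all _ fun ω => by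
      simp only [Real.norm_eq_abs]; exact Even.pow_abs (by decide) _)
  have h2 : ∀ c : Fin 4 → ℝ, ∫ ω, (∑ i, c i * Y i ω) ^ 2 ∂P
      = ∑ i, ∑ j, c i * c j * ∫ ω, Y i ω * Y j ω ∂P := by
    intro c
    have : ∀ ω, (∑ i, c i * Y i ω) ^ 2 = ∑ i, ∑ j, c i * c j * (Y i ω * Y j ω) := by
      intro ω
      rw [sq, Finset.sum_mul_sum]
      refine Finset.sum_congr rfl fun i _ => Finset.sum_congr rfl fun j _ => by ring
    simp_rw [this]
    rw [integral_finsetSum _ fun i _ => integrable_finsetSum _ fun j _ => (hYY i j).const_mul _]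
    refine Finset.sum_congr rfl fun i _ => ?_
    rw [integral_finsetSum _ fun j _ => (hYY i j).const_mul _]
    refine Finset.sum_congr rfl fun j _ => ?_
    rw [integral_const_mul]
  have h4 : ∀ c : Fin 4 → ℝ, ∫ ω, (∑ i, c i * Y i ω) ^ 4 ∂P
      = 3 * (∑ i, ∑ j, c i * c j * ∫ ω, Y i ω * Y j ω ∂P) ^ 2 := by
    intro c
    rw [gauss_four' (hLm c).aemeasurable (hg c).choose_spec, h2]
  have hid : ∀ ω, Y 0 ω * Y 1 ω * (Y 2 ω * Y 3 ω) = 192⁻¹ * (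
      (∑ i, ![1, 1, 1, 1] i * Y i ω) ^ 4 - (∑ i, ![1, 1, 1, -1] i * Y i ω) ^ 4
      - (∑ i, ![1, 1, -1, 1] i * Y i ω) ^ 4 + (∑ i, ![1, 1, -1, -1] i * Y i ω) ^ 4
      - (∑ i, ![1, -1, 1, 1] i * Y i ω) ^ 4 + (∑ i, ![1, -1, 1, -1] i * Y i ω) ^ 4
      + (∑ i, ![1, -1, -1, 1] i * Y i ω) ^ 4 - (∑ i, ![1, -1, -1, -1] i * Y i ω) ^ 4) := by
    intro ω
    simp only [Fin.sum_univ_four, Matrix.cons_val]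
    ring
  have hI := (((((((h4i ![1, 1, 1, 1]).sub (h4i ![1, 1, 1, -1])).sub (h4i ![1, 1, -1, 1])).add
    (h4i ![1, 1, -1, -1])).sub (h4i ![1, -1, 1, 1])).add (h4i ![1, -1, 1, -1])).add
    (h4i ![1, -1, -1, 1])).sub (h4i ![1, -1, -1, -1])
  simp_rw [hid]
  refine ⟨hI.const_mul _, ?_⟩
  rw [integral_const_mul]
  have e := integral_sub ((((((((h4i ![1, 1, 1, 1]).sub (h4i ![1, 1, 1, -1])).sub (h4i ![1, 1, -1, 1])).add
    (h4i ![1, 1, -1, -1])).sub (h4i ![1, -1, 1, 1])).add (h4i ![1, -1, 1, -1])).add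
    (h4i ![1, -1, -1, 1]))) (h4i ![1, -1, -1, -1])
  simp only [Pi.add_apply, Pi.sub_apply] at e
  rw [e, integral_add, integral_add, integral_sub, integral_add, integral_sub, integral_sub]
  · simp only [h4]
    have hs : ∀ i j, ∫ ω, Y i ω * Y j ω ∂P = ∫ ω, Y j ω * Y i ω ∂P := fun i j => by
      simp_rw [mul_comm]
    simp only [Fin.sum_univ_four, Matrix.cons_val]
    rw [hs 1 0, hs 2 0, hs 3 0, hs 2 1, hs 3 1, hs 3 2]
    ring
  all_goals first | exact h4i _ | skip
  · exact (h4i ![1, 1, 1, 1]).sub (h4i ![1, 1, 1, -1])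
  · exact ((h4i ![1, 1, 1, 1]).sub (h4i ![1, 1, 1, -1])).sub (h4i ![1, 1, -1, 1])
  · exact (((h4i ![1, 1, 1, 1]).sub (h4i ![1, 1, 1, -1])).sub (h4i ![1, 1, -1, 1])).add
      (h4i ![1, 1, -1, -1])
  · exact ((((h4i ![1, 1, 1, 1]).sub (h4i ![1, 1, 1, -1])).sub (h4i ![1, 1, -1, 1])).add
      (h4i ![1, 1, -1, -1])).sub (h4i ![1, -1, 1, 1])
  · exact (((((h4i ![1, 1, 1, 1]).sub (h4i ![1, 1, 1, -1])).sub (h4i ![1, 1, -1, 1])).add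
      (h4i ![1, 1, -1, -1])).sub (h4i ![1, -1, 1, 1])).add (h4i ![1, -1, 1, -1])
end four
end

noncomputable section
set_option linter.unusedSectionVars false

lemma card_diff (U : Finset ℤ) (N : ℕ) :
    ∑ i : Fin N, ∑ k : Fin N, (if ((k : ℤ) - (i : ℤ)) ∈ U then (1:ℝ) else 0) ≤ U.card * N := by
  have : ∀ i : Fin N, ∑ k : Fin N, (if ((k : ℤ) - (i : ℤ)) ∈ U then (1:ℝ) else 0) ≤ U.card := by
    intro i
    rw [Finset.sum_boole]
    refine Nat.cast_le.2 ?_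
    refine Finset.card_le_card_of_injOn (fun k : Fin N => (k : ℤ) - (i : ℤ)) ?_ ?_
    · intro k hk; simpa using hk
    · intro k _ l _ h
      simp only [sub_left_inj] at h
      exact Fin.ext (by exact_mod_cast h)
  refine (Finset.sum_le_sum fun i _ => this i).trans ?_
  simp [mul_comm]

def matY {Ω : Type} (Y : ℤ → ℤ → Ω → ℝ) (N : ℕ) (ω : Ω) : Matrix (Fin N) (Fin N) ℝ :=
  fun i j => Y ((i : ℕ) + 1) ((j : ℕ) + 1) ω

section
variable {Ω : Type} [MeasurableSpace Ω] {P : Measure Ω} [IsProbabilityMeasure P]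

lemma fro_YYt {N : ℕ} (Y : Matrix (Fin N) (Fin N) ℝ) : fro (Y * Y.transpose) ^ 2 =
    ∑ i, ∑ k, ∑ j, ∑ l, Y i j * Y k j * (Y i l * Y k l) := by
  rw [fro_sq]
  refine Finset.sum_congr rfl fun i _ => Finset.sum_congr rfl fun k _ => ?_
  rw [Real.norm_eq_abs, sq_abs, sq, Matrix.mul_apply, Finset.sum_mul_sum]
  rfl

lemma comb_gauss {Y : ℤ → ℤ → Ω → ℝ} 
    (hg : ∀ c : (ℤ × ℤ) →₀ ℝ, ∃ v : NNReal,
      P.map (fun ω => ∑ p ∈ c.support, c p * Y p.1 p.2 ω) = gaussianReal 0 v) 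
    (q : Fin 4 → ℤ × ℤ) (c : Fin 4 → ℝ) : ∃ v : NNReal,
      P.map (fun ω => ∑ i, c i * Y (q i).1 (q i).2 ω) = gaussianReal 0 v := by
  obtain ⟨v, hv⟩ := hg (∑ i, Finsupp.single (q i) (c i))
  refine ⟨v, hv ▸ ?_⟩
  congr 1
  funext ω
  change _ = Finsupp.sum (∑ i, Finsupp.single (q i) (c i)) (fun p c => c * Y p.1 p.2 ω)
  rw [← Finsupp.sum_finsetSum_index (by simp) (by intros; ring)]
  simp

theorem YYt_small {Y : ℤ → ℤ → Ω → ℝ} (hm : ∀ j k, Measurable (Y j k))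
    (hg : ∀ c : (ℤ × ℤ) →₀ ℝ, ∃ v : NNReal,
      P.map (fun ω => ∑ p ∈ c.support, c p * Y p.1 p.2 ω) = gaussianReal 0 v)
    {r : ℤ × ℤ → ℝ} (hr : Tendsto r cofinite (nhds 0))
    (hc : ∀ p q : ℤ × ℤ, ∫ ω, Y p.1 p.2 ω * Y q.1 q.2 ω ∂P = r (q - p)) :
    (∀ N, Integrable (fun ω => fro (matY Y N ω * (matY Y N ω).transpose) ^ 2) P) ∧
    ∀ ε > 0, ∀ᶠ N : ℕ in atTop,
      ∫ ω, fro (matY Y N ω * (matY Y N ω).transpose) ^ 2 ∂P ≤ ε * (N : ℝ) ^ 4 := by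
  have hI := fun q : Fin 4 → ℤ × ℤ => isserlis (P := P) (Y := fun i => Y (q i).1 (q i).2)
    (fun i => hm _ _) (comb_gauss hg q)
  have hII : ∀ (i k j l : ℤ), Integrable (fun ω => Y i j ω * Y k j ω * (Y i l ω * Y k l ω)) P ∧
      ∫ ω, Y i j ω * Y k j ω * (Y i l ω * Y k l ω) ∂P = r (k - i, 0) * r (k - i, 0)
        + r (0, l - j) * r (0, l - j) + r (k - i, l - j) * r (i - k, l - j) := by
    intro i k j l
    have h := hI ![(i, j), (k, j), (i, l), (k, l)]
    simp only [Matrix.cons_val] at h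
    refine ⟨h.1, h.2.trans ?_⟩
    rw [hc (i, j) (k, j), hc (i, l) (k, l), hc (i, j) (i, l), hc (k, j) (k, l), hc (i, j) (k, l),
      hc (k, j) (i, l)]
    simp
  obtain ⟨C, hC0, hC⟩ : ∃ C, 0 ≤ C ∧ ∀ p, |r p| ≤ C := by
    have h1 : {p | ¬ |r p| < 1}.Finite := by
      have := (tendsto_order.1 (tendsto_norm_zero.comp hr)).2 1 one_pos
      exact Filter.eventually_cofinite.1 this
    obtain ⟨C, hC⟩ := (h1.image (fun p => |r p|)).bddAbove
    refine ⟨max C 1, by positivity, fun p => ?_⟩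
    by_cases h : |r p| < 1
    · exact h.le.trans (le_max_right _ _)
    · exact (hC ⟨p, h, rfl⟩).trans (le_max_left _ _)
  simp_rw [fro_YYt]
  refine ⟨fun N => integrable_finsetSum _ fun i _ => integrable_finsetSum _ fun k _ =>
    integrable_finsetSum _ fun j _ => integrable_finsetSum _ fun l _ => (hII _ _ _ _).1, ?_⟩
  have hMI : ∀ (N : ℕ) (i k j l : Fin N), Integrable (fun ω => matY Y N ω i j * matY Y N ω k j *
      (matY Y N ω i l * matY Y N ω k l)) P := fun N i k j l => (hII _ _ _ _).1
  have hint : ∀ N : ℕ, ∫ ω, ∑ i, ∑ k, ∑ j, ∑ l, matY Y N ω i j * matY Y N ω k j *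
      (matY Y N ω i l * matY Y N ω k l) ∂P = ∑ i : Fin N, ∑ k : Fin N, ∑ j : Fin N, ∑ l : Fin N,
      (r ((k:ℤ) - i, 0) * r ((k:ℤ) - i, 0)
        + r (0, (l:ℤ) - j) * r (0, (l:ℤ) - j) + r ((k:ℤ) - i, (l:ℤ) - j) * r ((i:ℤ) - k, (l:ℤ) - j)) := by
    intro N
    rw [integral_finsetSum _ fun i _ => integrable_finsetSum _ fun k _ =>
      integrable_finsetSum _ fun j _ => integrable_finsetSum _ fun l _ => hMI N _ _ _ _]
    refine Finset.sum_congr rfl fun i _ => ?_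
    rw [integral_finsetSum _ fun k _ =>
      integrable_finsetSum _ fun j _ => integrable_finsetSum _ fun l _ => hMI N _ _ _ _]
    refine Finset.sum_congr rfl fun k _ => ?_
    rw [integral_finsetSum _ fun j _ => integrable_finsetSum _ fun l _ => hMI N _ _ _ _]
    refine Finset.sum_congr rfl fun j _ => ?_
    rw [integral_finsetSum _ fun l _ => hMI N _ _ _ _]
    refine Finset.sum_congr rfl fun l _ => ?_
    refine (hII _ _ _ _).2.trans ?_
    simp
  intro ε hε
  set η := ε / (2 * (3 * (C + 1))) with hη
  have hη0 : 0 < η := by positivity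
  obtain ⟨U, hU⟩ : ∃ U : Finset ℤ, ∀ p, |r p| ≤ η + C * (if p.1 ∈ U then 1 else 0) ∧
      |r p| ≤ η + C * (if p.2 ∈ U then 1 else 0) := by
    have h1 : {p | ¬ |r p| < η}.Finite := by
      have := (tendsto_order.1 (tendsto_norm_zero.comp hr)).2 η hη0
      exact Filter.eventually_cofinite.1 this
    refine ⟨h1.toFinset.image Prod.fst ∪ h1.toFinset.image Prod.snd, fun p => ?_⟩
    by_cases h : |r p| < η
    · constructor <;> refine h.le.trans ?_ <;> split_ifs <;> simp [hC0]
    · have m1 : p.1 ∈ h1.toFinset.image Prod.fst ∪ h1.toFinset.image Prod.snd :=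
        Finset.mem_union_left _ (Finset.mem_image_of_mem _ (by simpa using h))
      have m2 : p.2 ∈ h1.toFinset.image Prod.fst ∪ h1.toFinset.image Prod.snd :=
        Finset.mem_union_right _ (Finset.mem_image_of_mem _ (by simpa using h))
      rw [if_pos m1, if_pos m2]
      have := hC p
      constructor <;> linarith
  have hb : ∀ x y : ℝ, |y| ≤ C → x * y ≤ C * |x| := by
    intro x y hy
    calc x * y ≤ |x * y| := le_abs_self _
      _ = |x| * |y| := abs_mul _ _
      _ ≤ |x| * C := by gcongr
      _ = _ := mul_comm _ _
  have hbound : ∀ N : ℕ, ∑ i : Fin N, ∑ k : Fin N, ∑ j : Fin N, ∑ l : Fin N,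
      (r ((k:ℤ) - i, 0) * r ((k:ℤ) - i, 0)
        + r (0, (l:ℤ) - j) * r (0, (l:ℤ) - j) + r ((k:ℤ) - i, (l:ℤ) - j) * r ((i:ℤ) - k, (l:ℤ) - j))
      ≤ 3 * C * η * (N : ℝ) ^ 4 + 3 * C ^ 2 * U.card * (N : ℝ) ^ 3 := by
    intro N
    calc _ ≤ ∑ i : Fin N, ∑ k : Fin N, ∑ j : Fin N, ∑ l : Fin N,
        (3 * C * η + 2 * C ^ 2 * (if ((k : ℤ) - (i : ℤ)) ∈ U then (1:ℝ) else 0)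
          + C ^ 2 * (if ((l : ℤ) - (j : ℤ)) ∈ U then (1:ℝ) else 0)) := by
          refine Finset.sum_le_sum fun i _ => Finset.sum_le_sum fun k _ => Finset.sum_le_sum fun j _ => Finset.sum_le_sum fun l _ => ?_
          have a1 := hb _ (r ((k:ℤ) - i, 0)) (hC _) |>.trans
            (mul_le_mul_of_nonneg_left (hU ((k:ℤ) - i, 0)).1 hC0)
          have a2 := hb _ (r (0, (l:ℤ) - j)) (hC _) |>.trans
            (mul_le_mul_of_nonneg_left (hU (0, (l:ℤ) - j)).2 hC0)
          have a3 := hb _ (r ((i:ℤ) - k, (l:ℤ) - j)) (hC _) |>.trans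
            (mul_le_mul_of_nonneg_left (hU ((k:ℤ) - i, (l:ℤ) - j)).1 hC0)
          simp only at a1 a2 a3
          linarith
      _ = 3 * C * η * (N : ℝ) ^ 4 + (2 * C ^ 2 * (N : ℝ) ^ 2) * (∑ i : Fin N, ∑ k : Fin N, (if ((k : ℤ) - (i : ℤ)) ∈ U then (1:ℝ) else 0))
          + (C ^ 2 * (N : ℝ) ^ 2) * (∑ i : Fin N, ∑ k : Fin N, (if ((k : ℤ) - (i : ℤ)) ∈ U then (1:ℝ) else 0)) := by
          simp only [Finset.sum_add_distrib, Finset.sum_const, Finset.card_univ, Fintype.card_fin,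
            nsmul_eq_mul, ← Finset.mul_sum]
          ring
      _ ≤ 3 * C * η * (N : ℝ) ^ 4 + (2 * C ^ 2 * (N : ℝ) ^ 2) * (U.card * N)
          + (C ^ 2 * (N : ℝ) ^ 2) * (U.card * N) := by
          gcongr <;> exact card_diff U N
      _ = _ := by ring
  filter_upwards [eventually_ge_atTop (⌈3 * C ^ 2 * U.card / (ε / 2)⌉₊)] with N hN
  rw [hint]
  refine (hbound N).trans ?_
  have hN' : 3 * C ^ 2 * U.card ≤ (ε / 2) * N := by
    have := (Nat.le_ceil _).trans (Nat.cast_le (α := ℝ).2 hN)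
    rw [div_le_iff₀ (by positivity)] at this
    linarith
  have h1 : 3 * C * η ≤ ε / 2 := by
    rw [hη]
    rw [mul_div_assoc', div_le_div_iff₀ (by positivity) (by positivity)]
    nlinarith
  calc _ ≤ (ε / 2) * (N : ℝ) ^ 4 + (ε / 2) * N * (N : ℝ) ^ 3 := by gcongr
    _ = _ := by ring
end
end

noncomputable section
set_option linter.unusedSectionVars false

def sW {𝕜 : Type*} [RCLike 𝕜] (x : ℤ → ℤ → 𝕜) (N : ℕ) : Matrix (Fin N) (Fin N) 𝕜 :=
  fun i j => (N : 𝕜)⁻¹ * (x ((i : ℕ) + 1) ((j : ℕ) + 1) + x ((j : ℕ) + 1) ((i : ℕ) + 1))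

lemma scaledW1_eq {Ω : Type} (X : ℤ → ℤ → Ω → ℝ) (N : ℕ) (ω : Ω) :
    scaledW1 X N ω = sW (fun j k => X j k ω) N := rfl

lemma sW_sub {𝕜 : Type*} [RCLike 𝕜] (x y : ℤ → ℤ → 𝕜) (N : ℕ) :
    sW x N - sW y N = sW (fun j k => x j k - y j k) N := by
  ext i j; simp [sW]; ring

lemma sW_fro {𝕜 : Type*} [RCLike 𝕜] (x : ℤ → ℤ → 𝕜) (N : ℕ) :
    fro (sW x N) ^ 2 ≤ ∑ i : Fin N, ∑ j : Fin N, 4 * ((N : ℝ)⁻¹) ^ 2 * ‖x ((i : ℕ) + 1) ((j : ℕ) + 1)‖ ^ 2 := by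
  have h1 : fro (sW x N) ^ 2 ≤ ∑ i : Fin N, ∑ j : Fin N, (2 * ((N : ℝ)⁻¹) ^ 2 *
      ‖x ((i : ℕ) + 1) ((j : ℕ) + 1)‖ ^ 2 + 2 * ((N : ℝ)⁻¹) ^ 2 * ‖x ((j : ℕ) + 1) ((i : ℕ) + 1)‖ ^ 2) := by
    rw [fro_sq]
    refine Finset.sum_le_sum fun i _ => Finset.sum_le_sum fun j _ => ?_
    rw [sW, norm_mul, mul_pow, norm_inv, RCLike.norm_natCast]
    have := norm_add_le (x ((i : ℕ) + 1) ((j : ℕ) + 1)) (x ((j : ℕ) + 1) ((i : ℕ) + 1))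
    calc _ ≤ ((N : ℝ)⁻¹) ^ 2 * (‖x ((i : ℕ) + 1) ((j : ℕ) + 1)‖ + ‖x ((j : ℕ) + 1) ((i : ℕ) + 1)‖) ^ 2 := by
          gcongr
      _ ≤ ((N : ℝ)⁻¹) ^ 2 * (2 * (‖x ((i : ℕ) + 1) ((j : ℕ) + 1)‖ ^ 2 + ‖x ((j : ℕ) + 1) ((i : ℕ) + 1)‖ ^ 2)) := by
          gcongr; exact add_sq_le
      _ = _ := by ring
  refine h1.trans (le_of_eq ?_)
  simp_rw [Finset.sum_add_distrib]
  rw [add_comm, Finset.sum_comm, ← Finset.sum_add_distrib]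
  refine Finset.sum_congr rfl fun i _ => ?_
  rw [← Finset.sum_add_distrib]
  refine Finset.sum_congr rfl fun j _ => ?_
  ring

section
variable {Ω : Type} [MeasurableSpace Ω] {P : Measure Ω} [IsProbabilityMeasure P]

lemma sW_int {𝕜 : Type*} [RCLike 𝕜] {x : ℤ → ℤ → Ω → 𝕜} (hm : ∀ j k, MemLp (x j k) 2 P) {V : ℝ}
    (hV0 : 0 ≤ V) (hV : ∀ j k, ∫ ω, ‖x j k ω‖ ^ 2 ∂P ≤ V) (N : ℕ) :
    Integrable (fun ω => fro (sW (fun j k => x j k ω) N) ^ 2) P ∧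
      ∫ ω, fro (sW (fun j k => x j k ω) N) ^ 2 ∂P ≤ 4 * V := by
  have hi : ∀ j k, Integrable (fun ω => ‖x j k ω‖ ^ 2) P := fun j k =>
    (hm j k).integrable_norm_pow (by norm_num)
  have hI : Integrable (fun ω => fro (sW (fun j k => x j k ω) N) ^ 2) P := by
    simp_rw [fro_sq]
    refine integrable_finsetSum _ fun i _ => integrable_finsetSum _ fun j _ => ?_
    have := (((hm ((i : ℕ) + 1) ((j : ℕ) + 1)).add (hm ((j : ℕ) + 1) ((i : ℕ) + 1))).const_mul
      ((N : 𝕜)⁻¹)).integrable_norm_pow (p := 2) (by norm_num)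
    exact this
  refine ⟨hI, ?_⟩
  have hi2 : ∀ i j : Fin N, Integrable (fun ω => 4 * ((N : ℝ)⁻¹) ^ 2 *
    ‖x ((i : ℕ) + 1) ((j : ℕ) + 1) ω‖ ^ 2) P := fun i j => (hi _ _).const_mul _
  refine (integral_mono hI (integrable_finsetSum _ fun i _ => integrable_finsetSum _ fun j _ =>
    hi2 i j) fun ω => sW_fro _ N).trans ?_
  rw [integral_finsetSum _ fun i _ => integrable_finsetSum _ fun j _ => hi2 i j]
  calc _ ≤ ∑ i : Fin N, ∑ j : Fin N, 4 * ((N : ℝ)⁻¹) ^ 2 * V := by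
        refine Finset.sum_le_sum fun i _ => ?_
        rw [integral_finsetSum _ fun j _ => hi2 i j]
        refine Finset.sum_le_sum fun j _ => ?_
        rw [integral_const_mul]
        exact mul_le_mul_of_nonneg_left (hV _ _) (by positivity)
    _ = 4 * V * ((N : ℝ) * (N : ℝ)⁻¹) ^ 2 := by simp; ring
    _ ≤ 4 * V * 1 := by
        gcongr
        rcases eq_or_ne (N : ℝ) 0 with h | h
        · simp [h]
        · simp [h]
    _ = _ := by ring

lemma markov {g : Ω → ℝ} (hg : Integrable g P) (h0 : ∀ ω, 0 ≤ g ω) {c a : ℝ} (hc : ∫ ω, g ω ∂P ≤ c)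
    (ha : 0 < a) : P.real {ω | a ≤ g ω} ≤ c / a := by
  rw [le_div_iff₀ ha, mul_comm]
  exact (mul_meas_ge_le_integral_of_nonneg (ae_of_all _ h0) hg a).trans hc

theorem trace_comp (m : ℕ) {ε η V : ℝ} (hε : 0 < ε) (hη : 0 < η) (hV : 0 ≤ V) : ∃ τ > 0,
    ∀ {𝕜 : Type} [RCLike 𝕜] {N : ℕ} (A B : Ω → Matrix (Fin N) (Fin N) 𝕜) (s : Ω → ℝ),
    (Integrable (fun ω => fro (A ω) ^ 2) P) → (∫ ω, fro (A ω) ^ 2 ∂P ≤ V) →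
    (Integrable (fun ω => fro (B ω) ^ 2) P) → (∫ ω, fro (B ω) ^ 2 ∂P ≤ V) →
    (∀ ω, 0 ≤ s ω) → (∀ ω, fro ((A ω - B ω) * A ω) ≤ fro (A ω) * s ω) →
    (∀ ω, fro (B ω * (A ω - B ω)) ≤ fro (B ω) * s ω) → P.real {ω | τ ≤ s ω} ≤ τ →
    P.real {ω | ε ≤ ‖((A ω) ^ (m + 4)).trace - ((B ω) ^ (m + 4)).trace‖} ≤ η := by
  obtain ⟨R, hR1, hR⟩ : ∃ R : ℝ, 1 ≤ R ∧ V / R ^ 2 ≤ η / 3 := by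
    refine ⟨max 1 (3 * V / η), le_max_left _ _, ?_⟩
    set R := max 1 (3 * V / η) with hRR
    have h1 : 1 ≤ R := le_max_left _ _
    have h2 : 3 * V / η ≤ R := le_max_right _ _
    rw [div_le_iff₀ hη] at h2
    rw [div_le_iff₀ (by positivity)]
    nlinarith [mul_le_mul_of_nonneg_left h1 (show 0 ≤ R * η by positivity)]
  have hR0 : 0 < R := by linarith
  set K : ℝ := (m + 4) * R ^ (m + 2) * R with hK
  have hK0 : 0 < K := by positivity
  refine ⟨min (η / 3) (ε / (2 * K)), by positivity, ?_⟩
  intro 𝕜 _ N A B s hA hAV hB hBV hs h1 h2 hτ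
  set τ := min (η / 3) (ε / (2 * K)) with hτd
  have mA := markov hA (fun ω => by positivity) hAV (pow_pos hR0 2)
  have mB := markov hB (fun ω => by positivity) hBV (pow_pos hR0 2)
  have hsub : {ω | ε ≤ ‖((A ω) ^ (m + 4)).trace - ((B ω) ^ (m + 4)).trace‖} ⊆
      {ω | R ^ 2 ≤ fro (A ω) ^ 2} ∪ {ω | R ^ 2 ≤ fro (B ω) ^ 2} ∪ {ω | τ ≤ s ω} := by
    intro ω hω
    by_contra hc
    simp only [Set.mem_union, Set.mem_ofPred_eq, not_or, not_le] at hc hω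
    obtain ⟨⟨a1, a2⟩, a3⟩ := hc
    have b1 := (lt_of_pow_lt_pow_left₀ 2 hR0.le a1).le
    have b2 := (lt_of_pow_lt_pow_left₀ 2 hR0.le a2).le
    have := trace_pow_sub b1 b2 ((h1 ω).trans (mul_le_mul b1 a3.le (hs ω) hR0.le))
      ((h2 ω).trans (mul_le_mul b2 a3.le (hs ω) hR0.le)) m
    have h4 : K * τ < ε := by
      have : K * τ ≤ K * (ε / (2 * K)) := by gcongr; exact min_le_right _ _
      have h5 : K * (ε / (2 * K)) = ε / 2 := by field_simp
      linarith
    have h6 : (m + 4) * R ^ (m + 2) * (R * τ) = K * τ := by rw [hK]; ring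
    linarith
  have hτ3 : τ ≤ η / 3 := min_le_left _ _
  calc _ ≤ _ := measureReal_mono hsub
    _ ≤ _ := measureReal_union_le _ _
    _ ≤ _ := add_le_add_left (measureReal_union_le _ _) _
    _ ≤ η / 3 + η / 3 + η / 3 := by linarith
    _ = η := by ring
end
end

noncomputable section
set_option linter.unusedSectionVars false

lemma trace_pow_comm {m n : Type*} [Fintype m] [Fintype n] [DecidableEq m] [DecidableEq n]
    (U : Matrix m n ℂ) (V : Matrix n m ℂ) (k : ℕ) :
    ((U * V) ^ (k + 1)).trace = ((V * U) ^ (k + 1)).trace := by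
  have h : ∀ k : ℕ, (U * V) ^ (k + 1) = U * (V * U) ^ k * V := by
    intro k
    induction k with
    | zero => simp
    | succ k ih =>
      rw [pow_succ, ih, pow_succ (V * U)]
      simp only [Matrix.mul_assoc]
  rw [h, Matrix.trace_mul_comm, ← Matrix.mul_assoc, ← pow_succ']

theorem TF_conv (F : Finset (ℝ × ℝ)) (z : ℝ × ℝ → ℂ) (k : ℕ) : ∃ l : ℂ,
    Tendsto (fun N : ℕ => ((sW (fun j k => ∑ a ∈ F, ee (j, k) a * z a) N) ^ (k + 1)).trace)
      atTop (nhds l) := by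
  classical
  let s : F × Bool → ℝ := fun b => if b.2 then (b.1 : ℝ × ℝ).1 else (b.1 : ℝ × ℝ).2
  let t : F × Bool → ℝ := fun b => if b.2 then (b.1 : ℝ × ℝ).2 else (b.1 : ℝ × ℝ).1
  let e : ℝ → ℂ := fun x => Complex.exp (Complex.I * x)
  let U : (N : ℕ) → Matrix (Fin N) (F × Bool) ℂ := fun N j b =>
    (N : ℂ)⁻¹ * (e (s b)) ^ ((j : ℕ) + 1) * z b.1
  let V : (N : ℕ) → Matrix (F × Bool) (Fin N) ℂ := fun N b j => (e (t b)) ^ ((j : ℕ) + 1)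
  have hee : ∀ (j k : ℕ) (a : ℝ × ℝ), ee (((j:ℤ) + 1, (k:ℤ) + 1)) a = e a.1 ^ (j + 1) * e a.2 ^ (k + 1) := by
    intro j k a
    simp only [e, ← Complex.exp_nat_mul, ← Complex.exp_add, ee]
    congr 1
    push_cast
    ring
  have hUV : ∀ N, sW (fun j k => ∑ a ∈ F, ee (j, k) a * z a) N = U N * V N := by
    intro N
    ext i j
    rw [Matrix.mul_apply, Fintype.sum_prod_type, sW]
    simp only [hee, ← Finset.sum_add_distrib, Finset.mul_sum]
    rw [← Finset.sum_attach F]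
    refine Finset.sum_congr rfl fun a _ => ?_
    simp [U, V, s, t]
    ring
  have hVU : ∀ N b b', (V N * U N) b b' = e (t b + s b') * KK N (e (t b + s b')) * z b'.1 := by
    intro N b b'
    rw [Matrix.mul_apply]
    simp only [U, V, KK]
    rw [Finset.mul_sum, Finset.mul_sum, Finset.sum_mul, Finset.sum_range]
    refine Finset.sum_congr rfl fun j _ => ?_
    have : e (t b + s b') = e (t b) * e (s b') := by
      simp only [e, ← Complex.exp_add]; congr 1; push_cast; ring
    rw [this]
    ring
  have hT : ∀ N, ((sW (fun j k => ∑ a ∈ F, ee (j, k) a * z a) N) ^ (k + 1)).trace = ((V N * U N) ^ (k + 1)).trace := by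
    intro N; rw [hUV, trace_pow_comm]
  simp_rw [hT]
  let L : Matrix (F × Bool) (F × Bool) ℂ := fun b b' =>
    e (t b + s b') * (if e (t b + s b') = 1 then 1 else 0) * z b'.1
  have hL : Tendsto (fun N => V N * U N) atTop (nhds L) := by
    refine tendsto_pi_nhds.2 fun b => tendsto_pi_nhds.2 fun b' => ?_
    simp_rw [hVU]
    exact ((KK_lim (nI _)).const_mul _).mul_const _
  have hc : Continuous fun M : Matrix (F × Bool) (F × Bool) ℂ => (M ^ (k + 1)).trace := by fun_prop
  exact ⟨_, (hc.tendsto L).comp hL⟩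

lemma sW_herm (x : ℤ → ℤ → ℝ) (N : ℕ) : (sW x N).IsHermitian := by
  ext i j
  simp [sW, add_comm]

lemma fro_transpose_mul {N : ℕ} (Y : Matrix (Fin N) (Fin N) ℝ) :
    fro (Y.transpose * Y) = fro (Y * Y.transpose) := by
  refine (sq_eq_sq₀ (fro_nonneg _) (fro_nonneg _)).1 ?_
  have h1 := fro_sq_trace (Y.transpose * Y)
  have h2 := fro_sq_trace (Y * Y.transpose)
  simp only [Matrix.conjTranspose_eq_transpose_of_trivial, Matrix.transpose_mul,
    Matrix.transpose_transpose] at h1 h2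
  have : (Y.transpose * Y * (Y.transpose * Y)).trace = (Y * Y.transpose * (Y * Y.transpose)).trace := by
    rw [Matrix.mul_assoc, Matrix.trace_mul_comm]
    simp only [Matrix.mul_assoc]
  rw [← h1, ← h2] at this
  exact_mod_cast this

lemma fro_mul_self {N : ℕ} (Y : Matrix (Fin N) (Fin N) ℝ) : fro (Y * Y) ≤ fro (Y * Y.transpose) := by
  refine (sq_le_sq₀ (fro_nonneg _) (fro_nonneg _)).1 ?_
  have h1 := fro_sq_trace (Y * Y)
  simp only [Matrix.conjTranspose_eq_transpose_of_trivial, Matrix.transpose_mul] at h1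
  have h2 : (Y.transpose * Y.transpose * (Y * Y)).trace = ((Y.transpose * Y) * (Y * Y.transpose)).trace := by
    rw [Matrix.mul_assoc, Matrix.trace_mul_comm]
    simp only [Matrix.mul_assoc]
  rw [h2] at h1
  have h3 := trace_mul_le (Y.transpose * Y) (Y * Y.transpose)
  rw [← h1, fro_transpose_mul] at h3
  simp at h3
  calc fro (Y * Y) ^ 2 ≤ _ := h3
    _ = _ := by ring

lemma fro_transpose {N : ℕ} (Y : Matrix (Fin N) (Fin N) ℝ) : fro Y.transpose = fro Y := by
  rw [← Matrix.conjTranspose_eq_transpose_of_trivial, fro_star]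

lemma fro_smul {N : ℕ} (c : ℝ) (hc : 0 ≤ c) (Y : Matrix (Fin N) (Fin N) ℝ) : fro (c • Y) = c * fro Y := by
  refine (sq_eq_sq₀ (fro_nonneg _) (mul_nonneg hc (fro_nonneg _))).1 ?_
  rw [mul_pow, fro_sq, fro_sq]
  simp [Finset.mul_sum, mul_pow]

lemma sW_sq {Ω : Type} (Y : ℤ → ℤ → Ω → ℝ) (N : ℕ) (ω : Ω) :
    fro (sW (fun j k => Y j k ω) N * sW (fun j k => Y j k ω) N) ≤
      ((N : ℝ)⁻¹) ^ 2 * (4 * fro (matY Y N ω * (matY Y N ω).transpose)) := by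
  set M := matY Y N ω with hM
  have h : sW (fun j k => Y j k ω) N = (N : ℝ)⁻¹ • (M + M.transpose) := by
    ext i j; simp [sW, M, matY]
  rw [h, smul_mul_smul_comm, fro_smul _ (by positivity), ← sq]
  refine mul_le_mul_of_nonneg_left ?_ (by positivity)
  have e : (M + M.transpose) * (M + M.transpose) = (M * M + M * M.transpose) + (M.transpose * M + M.transpose * M.transpose) := by
    noncomm_ring
  rw [e]
  have a1 := fro_add_le (M * M + M * M.transpose) (M.transpose * M + M.transpose * M.transpose)
  have a2 := fro_add_le (M * M) (M * M.transpose)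
  have a3 := fro_add_le (M.transpose * M) (M.transpose * M.transpose)
  have a4 := fro_mul_self M
  have a5 : fro (M.transpose * M.transpose) = fro (M * M) := by
    rw [← Matrix.transpose_mul, fro_transpose]
  rw [fro_transpose_mul] at a3
  linarith
end

noncomputable section
set_option linter.unusedSectionVars false

lemma sW_ofReal (x : ℤ → ℤ → ℝ) (N k : ℕ) :
    ((sW (fun j k => (x j k : ℂ)) N) ^ k).trace = (((sW x N) ^ k).trace : ℝ) := by
  have h : sW (fun j k => (x j k : ℂ)) N = (Complex.ofRealHom.mapMatrix (sW x N)) := by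
    ext i j; simp [sW]
  rw [h, ← map_pow]
  simp [Matrix.trace]

section
variable {Ω : Type} [MeasurableSpace Ω] {P : Measure Ω} [IsProbabilityMeasure P]
  {X Xd : ℤ → ℤ → Ω → ℝ} {νd : Measure (ℝ × ℝ)}

lemma Dec_Xd (h : Dec P X Xd νd) : ∃ V, 0 ≤ V ∧ (∀ j k, MemLp (Xd j k) 2 P) ∧
    ∀ j k, ∫ ω, ‖Xd j k ω‖ ^ 2 ∂P ≤ V := by
  refine ⟨(∫ q : ℝ × ℝ, (1:ℝ) ∂νd), integral_nonneg fun _ => zero_le_one, ?_⟩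
  have h1 : ∀ j k, P.map (Xd j k) = gaussianReal 0 (∫ q : ℝ × ℝ, (1:ℝ) ∂νd).toNNReal := by
    intro j k
    have := h.gaussd (Finsupp.single (j, k) 1)
    rw [Finsupp.support_single _ one_ne_zero] at this
    simpa [ee_norm] using this
  refine ⟨fun j k => gauss_memLp (h.meas j k).aemeasurable (h1 j k) 2, fun j k => ?_⟩
  simp only [Real.norm_eq_abs, sq_abs]
  rw [gauss_sq0 (h.meas j k).aemeasurable (h1 j k), Real.coe_toNNReal _ (integral_nonneg fun _ => zero_le_one)]

lemma X_sq (hX : StatGauss P X) : ∃ V, 0 ≤ V ∧ (∀ j k, MemLp (X j k) 2 P) ∧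
    ∀ j k, ∫ ω, ‖X j k ω‖ ^ 2 ∂P ≤ V := by
  refine ⟨∫ ω, X 0 0 ω * X 0 0 ω ∂P, integral_nonneg fun _ => mul_self_nonneg _,
    fun j k => memLp_X hX (j, k) 2, fun j k => ?_⟩
  have := hX.stat j k 0 0
  simp only [add_zero] at this
  rw [← this]
  simp [sq]

theorem comp_d (hX : StatGauss P X) (h : Dec P X Xd νd) (m : ℕ) {ε η : ℝ} (hε : 0 < ε) (hη : 0 < η) :
    ∀ᶠ N in atTop, P.real {ω | ε ≤ |((scaledW1 X N ω) ^ (m + 4)).trace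
      - ((scaledW1 Xd N ω) ^ (m + 4)).trace|} ≤ η := by
  obtain ⟨V1, hV1, m1, b1⟩ := X_sq hX
  obtain ⟨V2, hV2, m2, b2⟩ := Dec_Xd h
  obtain ⟨τ, hτ, H⟩ := trace_comp (P := P) m hε hη (show 0 ≤ 4 * (V1 + V2) by positivity)
  obtain ⟨r, hr, hc⟩ := h.cov
  set Y : ℤ → ℤ → Ω → ℝ := fun j k ω => X j k ω - Xd j k ω with hY
  obtain ⟨hi, hs⟩ := YYt_small (Y := Y) (P := P) (fun j k => (hX.meas j k).sub (h.meas j k)) h.gaussac hr hc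
  filter_upwards [hs (τ ^ 5 / 16) (by positivity), eventually_gt_atTop 0] with N hN hN0
  have i1 := sW_int m1 hV1 b1 N
  have i2 := sW_int m2 hV2 b2 N
  have hD : ∀ ω, scaledW1 X N ω - scaledW1 Xd N ω = sW (fun j k => Y j k ω) N := fun ω => by
    rw [scaledW1_eq, scaledW1_eq, sW_sub]
  refine H (fun ω => scaledW1 X N ω) (fun ω => scaledW1 Xd N ω)
    (fun ω => √(fro (sW (fun j k => Y j k ω) N * sW (fun j k => Y j k ω) N)))
    i1.1 (i1.2.trans (by linarith)) i2.1 (i2.2.trans (by linarith)) (fun ω => Real.sqrt_nonneg _) ?_ ?_ ?_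
  · intro ω
    rw [hD]
    exact fro_DA' (sW_herm _ _) _ le_rfl (Real.sq_sqrt (fro_nonneg _)).ge (Real.sqrt_nonneg _)
  · intro ω
    rw [hD]
    exact fro_AD' (sW_herm _ _) _ le_rfl (Real.sq_sqrt (fro_nonneg _)).ge (Real.sqrt_nonneg _)
  · have hmk := markov (hi N) (fun ω => by positivity) hN (a := (τ ^ 2 * (N:ℝ) ^ 2 / 4) ^ 2) (by positivity)
    have e : τ ^ 5 / 16 * (N:ℝ) ^ 4 / (τ ^ 2 * (N:ℝ) ^ 2 / 4) ^ 2 = τ := by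
      have : (N:ℝ) ≠ 0 := by positivity
      field_simp
      norm_num
    rw [e] at hmk
    refine le_trans (measureReal_mono ?_) hmk
    intro ω hω
    simp only [Set.mem_ofPred_eq] at hω ⊢
    have h1 := (Real.le_sqrt' hτ).1 hω
    have h2 := h1.trans (sW_sq Y N ω)
    refine pow_le_pow_left₀ (by positivity) ?_ 2
    have : (N:ℝ) ^ 2 * (((N : ℝ)⁻¹) ^ 2 * (4 * fro (matY Y N ω * (matY Y N ω).transpose)))
        = 4 * fro (matY Y N ω * (matY Y N ω).transpose) := by
      have : (N:ℝ) ≠ 0 := by positivity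
      field_simp
    have h3 := mul_le_mul_of_nonneg_left h2 (show 0 ≤ (N:ℝ) ^ 2 by positivity)
    rw [this] at h3
    linarith

theorem comp_F (h : Dec P X Xd νd) (m : ℕ) {ε η : ℝ} (hε : 0 < ε) (hη : 0 < η) :
    ∃ (F : Finset (ℝ × ℝ)) (Z : ℝ × ℝ → Ω → ℂ), (∀ a, Measurable (Z a)) ∧
    ∀ N, P.real {ω | ε ≤ ‖((((scaledW1 Xd N ω) ^ (m + 4)).trace : ℝ) : ℂ)
      - ((sW (fun j k => ∑ a ∈ F, ee (j, k) a * Z a ω) N) ^ (m + 4)).trace‖} ≤ η := by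
  obtain ⟨V2, hV2, m2, b2⟩ := Dec_Xd h
  obtain ⟨τ, hτ, H⟩ := trace_comp (P := P) m hε hη (show 0 ≤ 4 * (2 * V2 + 2) by positivity)
  obtain ⟨F, Z, hZm, hZ, hF⟩ := h.finr (min 1 (τ ^ 3 / 4)) (by positivity)
  refine ⟨F, Z, hZm, fun N => ?_⟩
  have mF : ∀ j k : ℤ, MemLp (fun ω => ∑ a ∈ F, ee (j, k) a * Z a ω) 2 P := fun j k =>
    memLp_finset_sum _ fun a _ => (hZ a).const_mul _
  have mC : ∀ j k : ℤ, MemLp (fun ω => (Xd j k ω : ℂ)) 2 P := fun j k => by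
    have := (m2 j k).ofReal (K := ℂ)
    exact_mod_cast this
  have mD : ∀ j k : ℤ, MemLp (fun ω => (Xd j k ω : ℂ) - ∑ a ∈ F, ee (j, k) a * Z a ω) 2 P := fun j k =>
    (mC j k).sub (mF j k)
  have bC : ∀ j k : ℤ, ∫ ω, ‖(Xd j k ω : ℂ)‖ ^ 2 ∂P ≤ V2 := fun j k => by
    simpa using b2 j k
  have bF : ∀ j k : ℤ, ∫ ω, ‖∑ a ∈ F, ee (j, k) a * Z a ω‖ ^ 2 ∂P ≤ 2 * V2 + 2 := by
    intro j k
    have iC := (mC j k).integrable_norm_pow (p := 2) (by norm_num)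
    have iD := (mD j k).integrable_norm_pow (p := 2) (by norm_num)
    have iF := (mF j k).integrable_norm_pow (p := 2) (by norm_num)
    have hd := (hF (j, k)).trans (min_le_left _ _)
    have := integral_mono iF ((iC.const_mul 2).add (iD.const_mul 2)) (fun ω => by
      simp only [Pi.add_apply]
      have e : ∑ a ∈ F, ee (j, k) a * Z a ω = (Xd j k ω : ℂ) - ((Xd j k ω : ℂ) - ∑ a ∈ F, ee (j, k) a * Z a ω) := by ring
      have hh := norm_sub_le (Xd j k ω : ℂ) ((Xd j k ω : ℂ) - ∑ a ∈ F, ee (j, k) a * Z a ω)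
      rw [← e] at hh
      calc _ ≤ (‖(Xd j k ω : ℂ)‖ + ‖(Xd j k ω : ℂ) - ∑ a ∈ F, ee (j, k) a * Z a ω‖) ^ 2 := by gcongr
        _ ≤ 2 * (‖(Xd j k ω : ℂ)‖ ^ 2 + ‖(Xd j k ω : ℂ) - ∑ a ∈ F, ee (j, k) a * Z a ω‖ ^ 2) := add_sq_le
        _ = _ := by ring)
    simp only [Pi.add_apply] at this
    rw [integral_add (iC.const_mul 2) (iD.const_mul 2), integral_const_mul, integral_const_mul] at this
    have := bC j k
    simp only at hd
    linarith
  have iA := sW_int mC hV2 bC N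
  have iB := sW_int mF (by positivity) bF N
  have iD := sW_int mD (V := min 1 (τ ^ 3 / 4)) (by positivity) (fun j k => hF (j, k)) N
  have hD : ∀ ω, sW (fun j k => (Xd j k ω : ℂ)) N - sW (fun j k => ∑ a ∈ F, ee (j, k) a * Z a ω) N
    = sW (fun j k => (Xd j k ω : ℂ) - ∑ a ∈ F, ee (j, k) a * Z a ω) N := fun ω => sW_sub _ _ _
  have := H (fun ω => sW (fun j k => (Xd j k ω : ℂ)) N) (fun ω => sW (fun j k => ∑ a ∈ F, ee (j, k) a * Z a ω) N)
    (fun ω => fro (sW (fun j k => (Xd j k ω : ℂ) - ∑ a ∈ F, ee (j, k) a * Z a ω) N))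
    iA.1 (iA.2.trans (by linarith)) iB.1 iB.2 (fun ω => fro_nonneg _)
    (fun ω => by simp only [hD]; rw [mul_comm]; exact fro_mul_le _ _)
    (fun ω => by simp only [hD]; exact fro_mul_le _ _) ?_
  · simp_rw [sW_ofReal] at this
    exact this
  · have hmk := markov iD.1 (fun ω => by positivity) iD.2 (pow_pos hτ 2)
    refine le_trans (measureReal_mono ?_) (hmk.trans ?_)
    · intro ω hω
      exact pow_le_pow_left₀ hτ.le hω 2
    · rw [div_le_iff₀ (by positivity)]
      have := min_le_right 1 (τ ^ 3 / 4)
      nlinarith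
end
end

noncomputable section
set_option linter.unusedSectionVars false

section
variable {Ω : Type} [MeasurableSpace Ω] {P : Measure Ω} [IsProbabilityMeasure P]

lemma tim_iff {f : ℕ → Ω → ℝ} {g : Ω → ℝ} : TendstoInMeasure P f atTop g ↔
    ∀ ε > 0, ∀ η > 0, ∀ᶠ N in atTop, P.real {ω | ε ≤ |f N ω - g ω|} ≤ η := by
  rw [tendstoInMeasure_iff_measureReal_norm]
  refine forall₂_congr fun ε hε => ?_
  constructor
  · intro h η hη
    exact ((tendsto_order.1 h).2 η hη).mono fun N hN => hN.le
  · intro h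
    refine tendsto_order.2 ⟨fun a ha => Eventually.of_forall fun N => ha.trans_le measureReal_nonneg,
      fun a ha => ?_⟩
    exact (h (a / 2) (by positivity)).mono fun N hN => lt_of_le_of_lt hN (by linarith)

lemma BC {s : ℕ → Set Ω} {i₀ : ℕ} (h : ∀ i, i₀ ≤ i → P.real (s i) ≤ (1 / 2 : ℝ) ^ i) :
    ∀ᵐ ω ∂P, ∀ᶠ i in atTop, ω ∉ s i := by
  have h1 : ∀ᵐ ω ∂P, ∀ᶠ i in atTop, ω ∉ s (i + i₀) := by
    refine ae_eventually_notMem ?_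
    have : ∀ i, P (s (i + i₀)) ≤ ENNReal.ofReal ((1 / 2 : ℝ) ^ i) := by
      intro i
      rw [← ofReal_measureReal]
      refine ENNReal.ofReal_le_ofReal ((h _ (by omega)).trans ?_)
      exact pow_le_pow_of_le_one (by norm_num) (by norm_num) (by omega)
    refine ne_top_of_le_ne_top ?_ (ENNReal.tsum_le_tsum this)
    rw [← ENNReal.ofReal_tsum_of_nonneg (fun i => by positivity) summable_geometric_two]
    exact ENNReal.ofReal_ne_top
  filter_upwards [h1] with ω hω
  obtain ⟨a, ha⟩ := eventually_atTop.1 hω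
  refine eventually_atTop.2 ⟨a + i₀, fun i hi => ?_⟩
  have := ha (i - i₀) (by omega)
  rwa [Nat.sub_add_cancel (by omega)] at this

theorem common_sub {f : ℕ → ℕ → Ω → ℝ} {T : ℕ → Ω → ℝ}
    (h : ∀ m, TendstoInMeasure P (f m) atTop (T m)) :
    ∃ ns : ℕ → ℕ, StrictMono ns ∧ ∀ᵐ ω ∂P, ∀ m, Tendsto (fun i => f m (ns i) ω) atTop (nhds (T m ω)) := by
  have h1 : ∀ i : ℕ, ∀ᶠ N in atTop, ∀ m ≤ i, P.real {ω | (1 / 2 : ℝ) ^ i ≤ |f m N ω - T m ω|} ≤ (1 / 2 : ℝ) ^ i := by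
    intro i
    exact (Set.finite_Iic i).eventually_all.2 fun m _ => tim_iff.1 (h m) _ (by positivity) _ (by positivity)
  obtain ⟨ns, hns, H⟩ := extraction_forall_of_eventually h1
  refine ⟨ns, hns, ae_all_iff.2 fun m => ?_⟩
  have := BC (P := P) (s := fun i => {ω | (1 / 2 : ℝ) ^ i ≤ |f m (ns i) ω - T m ω|}) (i₀ := m)
    (fun i hi => H i m hi)
  filter_upwards [this] with ω hω
  rw [tendsto_iff_norm_sub_tendsto_zero]
  refine squeeze_zero' (Eventually.of_forall fun i => norm_nonneg _) (hω.mono fun i hi => ?_)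
    (tendsto_pow_atTop_nhds_zero_of_lt_one (r := (1/2:ℝ)) (by norm_num) (by norm_num))
  simp only [Set.mem_ofPred_eq, not_le] at hi
  exact hi.le

def CIM (P : Measure Ω) (f : ℕ → Ω → ℝ) : Prop := ∀ ε > 0, ∀ η > 0, ∃ N₀, ∀ N ≥ N₀, ∀ M ≥ N₀,
  P.real {ω | ε ≤ |f N ω - f M ω|} ≤ η

theorem CIM_lim {f : ℕ → Ω → ℝ} (hm : ∀ N, Measurable (f N)) (h : CIM P f) :
    ∃ T : Ω → ℝ, Measurable T ∧ TendstoInMeasure P f atTop T := by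
  have h1 : ∀ i : ℕ, ∀ᶠ N in atTop, ∀ M ≥ N, P.real {ω | (1 / 2 : ℝ) ^ i ≤ |f N ω - f M ω|} ≤ (1 / 2 : ℝ) ^ i := by
    intro i
    obtain ⟨N₀, hN⟩ := h ((1/2:ℝ)^i) (by positivity) ((1/2:ℝ)^i) (by positivity)
    exact eventually_atTop.2 ⟨N₀, fun N hN' M hM => hN N hN' M (le_trans hN' hM)⟩
  obtain ⟨ns, hns, H⟩ := extraction_forall_of_eventually h1
  have hb := BC (P := P) (s := fun i => {ω | (1 / 2 : ℝ) ^ i ≤ |f (ns i) ω - f (ns (i+1)) ω|}) (i₀ := 0)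
    (fun i _ => H i _ (hns (Nat.lt_succ_self i)).le)
  have hl : ∀ᵐ ω ∂P, ∃ l, Tendsto (fun i => f (ns i) ω) atTop (nhds l) := by
    filter_upwards [hb] with ω hω
    obtain ⟨a, ha⟩ := eventually_atTop.1 hω
    have hc : CauchySeq (fun i => f (ns (i + a)) ω) := by
      refine cauchySeq_of_le_geometric (1/2) 1 (by norm_num) fun i => ?_
      have := ha (i + a) (by omega)
      simp only [Set.mem_ofPred_eq, not_le] at this
      rw [Real.dist_eq, show i + 1 + a = i + a + 1 by ring]
      refine this.le.trans ?_
      rw [one_mul]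
      exact pow_le_pow_of_le_one (by norm_num) (by norm_num) (by omega)
    obtain ⟨l, hl⟩ := cauchySeq_tendsto_of_complete hc
    exact ⟨l, (tendsto_add_atTop_iff_nat a).1 hl⟩
  obtain ⟨T, hT, hTl⟩ := measurable_limit_of_tendsto_metrizable_ae (fun i => (hm (ns i)).aemeasurable) hl
  refine ⟨T, hT, ?_⟩
  have hmT := tendstoInMeasure_of_tendsto_ae (fun i => (hm (ns i)).aestronglyMeasurable) hTl
  rw [tim_iff] at hmT ⊢
  intro ε hε η hη
  obtain ⟨N₀, hN⟩ := h (ε/2) (by positivity) (η/2) (by positivity)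
  obtain ⟨i, hi1, hi2⟩ := ((hmT (ε/2) (by positivity) (η/2) (by positivity)).and
    (hns.tendsto_atTop.eventually_ge_atTop N₀)).exists
  filter_upwards [eventually_ge_atTop N₀] with N hN'
  have hsub : {ω | ε ≤ |f N ω - T ω|} ⊆ {ω | ε/2 ≤ |f N ω - f (ns i) ω|} ∪ {ω | ε/2 ≤ |f (ns i) ω - T ω|} := by
    intro ω hω
    by_contra hc
    simp only [Set.mem_union, Set.mem_ofPred_eq, not_or, not_le] at hc hω
    have := abs_sub_le (f N ω) (f (ns i) ω) (T ω)
    linarith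
  refine (measureReal_mono hsub).trans ((measureReal_union_le _ _).trans ?_)
  have := hN N hN' _ hi2
  linarith

lemma meas_W {X : ℤ → ℤ → Ω → ℝ} (hX : ∀ j k, Measurable (X j k)) (k N : ℕ) :
    Measurable fun ω => ((scaledW1 X N ω) ^ k).trace := by
  have h : ∀ k (i j : Fin N), Measurable fun ω => ((scaledW1 X N ω) ^ k) i j := by
    intro k
    induction k with
    | zero => intro i j; simp only [pow_zero]; exact measurable_const
    | succ k ih =>
      intro i j
      simp only [pow_succ, Matrix.mul_apply]
      refine Finset.measurable_fun_sum _ fun l _ => (ih i l).mul ?_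
      exact ((hX _ _).add (hX _ _)).const_mul _
  exact Finset.measurable_fun_sum _ fun i _ => h k i i

lemma sW_meas {x : ℤ → ℤ → Ω → ℂ} (hx : ∀ j k, Measurable (x j k)) (k N : ℕ) :
    Measurable fun ω => ((sW (fun j k => x j k ω) N) ^ k).trace := by
  have h : ∀ k (i j : Fin N), Measurable fun ω => ((sW (fun j k => x j k ω) N) ^ k) i j := by
    intro k
    induction k with
    | zero => intro i j; simp only [pow_zero]; exact measurable_const
    | succ k ih =>
      intro i j
      simp only [pow_succ, Matrix.mul_apply]
      refine Finset.measurable_fun_sum _ fun l _ => (ih i l).mul ?_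
      exact ((hx _ _).add (hx _ _)).const_mul _
  exact Finset.measurable_fun_sum _ fun i _ => h k i i

theorem Td_CIM {X Xd : ℤ → ℤ → Ω → ℝ} {νd : Measure (ℝ × ℝ)} (h : Dec P X Xd νd) (m : ℕ) :
    CIM P (fun N ω => ((scaledW1 Xd N ω) ^ (m + 4)).trace) := by
  intro ε hε η hη
  obtain ⟨F, Z, hZ, hF⟩ := comp_F h m (show 0 < ε / 4 by positivity) (show 0 < η / 4 by positivity)
  choose l hl using fun ω => TF_conv F (fun a => Z a ω) (m + 3)
  have hmeas : ∀ N, Measurable fun ω => ((sW (fun j k => ∑ a ∈ F, ee (j, k) a * Z a ω) N) ^ (m + 4)).trace :=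
    fun N => sW_meas (x := fun j k ω => ∑ a ∈ F, ee (j, k) a * Z a ω)
      (fun j k => Finset.measurable_fun_sum _ fun a _ => (hZ a).const_mul _) (m + 4) N
  have hT := tendstoInMeasure_of_tendsto_ae (μ := P) (fun N => (hmeas N).aestronglyMeasurable)
    (ae_of_all _ hl)
  rw [tendstoInMeasure_iff_measureReal_norm] at hT
  have := (tendsto_order.1 (hT (ε/4) (by positivity))).2 (η/4) (by positivity)
  obtain ⟨N₀, hN₀⟩ := eventually_atTop.1 this
  refine ⟨N₀, fun N hN M hM => ?_⟩
  have a1 := (hN₀ N hN).le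
  have a2 := (hN₀ M hM).le
  have a3 := hF N
  have a4 := hF M
  refine (measureReal_mono (s₂ := ({ω | ε / 4 ≤ ‖((((scaledW1 Xd N ω) ^ (m + 4)).trace : ℝ) : ℂ)
      - ((sW (fun j k => ∑ a ∈ F, ee (j, k) a * Z a ω) N) ^ (m + 4)).trace‖} ∪
      {ω | ε / 4 ≤ ‖((((scaledW1 Xd M ω) ^ (m + 4)).trace : ℝ) : ℂ)
      - ((sW (fun j k => ∑ a ∈ F, ee (j, k) a * Z a ω) M) ^ (m + 4)).trace‖}) ∪
      ({ω | ε / 4 ≤ ‖((sW (fun j k => ∑ a ∈ F, ee (j, k) a * Z a ω) N) ^ (m + 4)).trace - l ω‖} ∪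
      {ω | ε / 4 ≤ ‖((sW (fun j k => ∑ a ∈ F, ee (j, k) a * Z a ω) M) ^ (m + 4)).trace - l ω‖})) ?_).trans ?_
  · intro ω hω
    by_contra hc
    simp only [Set.mem_union, Set.mem_ofPred_eq, not_or, not_le] at hc hω
    set tN := ((sW (fun j k => ∑ a ∈ F, ee (j, k) a * Z a ω) N) ^ (m + 4)).trace
    set tM := ((sW (fun j k => ∑ a ∈ F, ee (j, k) a * Z a ω) M) ^ (m + 4)).trace
    set uN := ((scaledW1 Xd N ω) ^ (m + 4)).trace
    set uM := ((scaledW1 Xd M ω) ^ (m + 4)).trace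
    obtain ⟨⟨c1, c2⟩, c3, c4⟩ := hc
    have e1 : ((uN - uM : ℝ) : ℂ) = (uN - tN) - (uM - tM) + ((tN - l ω) - (tM - l ω)) := by
      push_cast; ring
    have e2 : |uN - uM| = ‖((uN - uM : ℝ) : ℂ)‖ := by
      rw [Complex.norm_real, Real.norm_eq_abs]
    rw [e2, e1] at hω
    have := norm_add_le ((uN - tN : ℂ) - (uM - tM)) ((tN - l ω) - (tM - l ω))
    have := norm_sub_le (uN - tN : ℂ) (uM - tM)
    have := norm_sub_le (tN - l ω) (tM - l ω)
    linarith
  · refine (measureReal_union_le _ _).trans ((add_le_add (measureReal_union_le _ _) (measureReal_union_le _ _)).trans ?_)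
    linarith

/-- the limits of the traces -/
theorem T_exists {X Xd : ℤ → ℤ → Ω → ℝ} {νd : Measure (ℝ × ℝ)} (hX : StatGauss P X) (h : Dec P X Xd νd) :
    ∃ T : ℕ → Ω → ℝ, (∀ m, Measurable (T m)) ∧
      (∀ m, TendstoInMeasure P (fun N ω => ((scaledW1 Xd N ω) ^ (m + 4)).trace) atTop (T m)) ∧
      (∀ m, TendstoInMeasure P (fun N ω => ((scaledW1 X N ω) ^ (m + 4)).trace) atTop (T m)) := by
  choose T hT1 hT2 using fun m => CIM_lim (P := P) (fun N => meas_W h.meas (m + 4) N) (Td_CIM h m)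
  refine ⟨T, hT1, hT2, fun m => ?_⟩
  have h2 := hT2 m
  rw [tim_iff] at h2 ⊢
  intro ε hε η hη
  filter_upwards [h2 (ε/2) (by positivity) (η/2) (by positivity),
    comp_d hX h m (show 0 < ε/2 by positivity) (show 0 < η/2 by positivity)] with N h3 h4
  refine (measureReal_mono (s₂ := {ω | ε/2 ≤ |((scaledW1 X N ω) ^ (m + 4)).trace
      - ((scaledW1 Xd N ω) ^ (m + 4)).trace|} ∪ {ω | ε/2 ≤ |((scaledW1 Xd N ω) ^ (m + 4)).trace - T m ω|}) ?_).trans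
    ((measureReal_union_le _ _).trans ?_)
  · intro ω hω
    by_contra hc
    simp only [Set.mem_union, Set.mem_ofPred_eq, not_or, not_le] at hc hω
    have := abs_sub_le ((scaledW1 X N ω) ^ (m + 4)).trace ((scaledW1 Xd N ω) ^ (m + 4)).trace (T m ω)
    linarith
  · linarith
end
end

noncomputable section
set_option linter.unusedSectionVars false

section
variable {Ω : Type} [MeasurableSpace Ω] {P : Measure Ω} [IsProbabilityMeasure P]

structure MomConv (P : Measure Ω) (E : ℕ → Ω → PtCfg) (f : ℕ → ℕ → Ω → ℝ) (T : ℕ → Ω → ℝ) : Prop where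
  fm : ∀ m N, Measurable (f m N)
  Tm : ∀ m, Measurable (T m)
  EK : ∀ N ω, E N ω ∈ KC (f 0 N ω)
  mo : ∀ N ω j, mom (E N ω) j = f (j + 4) N ω
  cv : ∀ m, TendstoInMeasure P (f m) atTop (T m)

def xig (g : (ℕ → ℝ) → PtCfg) (T : ℕ → Ω → ℝ) (ω : Ω) : PtCfg := g (fun j => T (j + 4) ω)

lemma xig_meas {g : (ℕ → ℝ) → PtCfg} (hg : Measurable g) {T : ℕ → Ω → ℝ} (hT : ∀ m, Measurable (T m)) :
    Measurable (xig g T) := hg.comp (measurable_pi_lambda _ fun j => hT _)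

variable {E : ℕ → Ω → PtCfg} {f : ℕ → ℕ → Ω → ℝ} {T : ℕ → Ω → ℝ} {g : (ℕ → ℝ) → PtCfg}

lemma MomConv.sub (h : MomConv P E f T) (hg : ∀ s ∈ KU, g (mom s) = s) {σ : ℕ → ℕ} (hσ : StrictMono σ) :
    ∃ ns : ℕ → ℕ, StrictMono ns ∧ ∀ᵐ ω ∂P, Tendsto (fun i => E (σ (ns i)) ω) atTop (nhds (xig g T ω)) ∧
      ∃ C, xig g T ω ∈ KC C := by
  obtain ⟨ns, hns, H⟩ := common_sub (P := P) (f := fun m i => f m (σ i)) (T := T)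
    (fun m => (h.cv m).comp hσ.tendsto_atTop)
  refine ⟨ns, hns, ?_⟩
  filter_upwards [H] with ω hω
  obtain ⟨C, hC⟩ := (hω 0).bddAbove_range
  have h1 : ∀ i, E (σ (ns i)) ω ∈ KC C := fun i => KC_mono (hC ⟨i, rfl⟩) (h.EK _ _)
  obtain ⟨s₀, hs, ht, hm⟩ := KC_tendsto h1 (t := fun j => T (j + 4) ω) (fun j => by
    simp only [h.mo]; exact hω (j + 4))
  have : xig g T ω = s₀ := by
    rw [xig, ← hm, hg _ (KC_sub_KU C hs)]
  rw [this]
  exact ⟨ht, C, hs⟩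

lemma MomConv.E_meas (h : MomConv P E f T) (hgm : Measurable g) (hg : ∀ s ∈ KU, g (mom s) = s) (N : ℕ) :
    Measurable (E N) := by
  have : E N = fun ω => g (fun j => f (j + 4) N ω) := by
    funext ω
    rw [← hg _ (KC_sub_KU _ (h.EK N ω))]
    congr 1
    funext j; rw [h.mo]
  rw [this]
  exact hgm.comp (measurable_pi_lambda _ fun j => h.fm _ _)

lemma MomConv.coord (h : MomConv P E f T) (hgm : Measurable g) (hg : ∀ s ∈ KU, g (mom s) = s)
    (q : PtCfg → ℝ) (hq : Continuous q) :
    TendstoInMeasure P (fun N ω => q (E N ω)) atTop (fun ω => q (xig g T ω)) := by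
  rw [exists_seq_tendstoInMeasure_atTop_iff]
  · intro σ hσ
    obtain ⟨ns, hns, H⟩ := h.sub hg hσ
    refine ⟨ns, hns, ?_⟩
    filter_upwards [H] with ω hω
    exact (hq.tendsto _).comp hω.1
  · intro N
    exact (hq.measurable.comp (h.E_meas hgm hg N)).aestronglyMeasurable

lemma tail_bound {x y : ℕ → ℝ} {R δ : ℝ} {M : ℕ} (hδ : 0 ≤ δ)
    (hx : Summable fun n => x n ^ 2) (hy : Summable fun n => y n ^ 2)
    (hxR : ∑' n, x n ^ 2 ≤ R) (hyR : ∑' n, y n ^ 2 ≤ R)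
    (hx1 : ∀ n : ℕ, ((n : ℝ) + 1) * x n ^ 2 ≤ R) (hy1 : ∀ n : ℕ, ((n : ℝ) + 1) * y n ^ 2 ≤ R)
    (h : ∀ n < M, |x n - y n| ≤ δ) :
    ∑' n, |x n - y n| ^ 4 ≤ M * δ ^ 4 + 16 * R ^ 2 / (M + 1) := by
  have hR : 0 ≤ R := (tsum_nonneg fun n => by positivity).trans hxR
  have key : ∀ n, |x n - y n| ^ 4 ≤ (if n ∈ Finset.range M then δ ^ 4 else 0) +
      8 * R / (M + 1) * (x n ^ 2 + y n ^ 2) := by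
    intro n
    split_ifs with hn
    · have := pow_le_pow_left₀ (abs_nonneg _) (h n (Finset.mem_range.1 hn)) 4
      have : 0 ≤ 8 * R / (M + 1) * (x n ^ 2 + y n ^ 2) := by positivity
      linarith
    · have hn' : (M : ℝ) ≤ n := by
        rw [Finset.mem_range, not_lt] at hn; exact_mod_cast hn
      have e : |x n - y n| ^ 4 = (x n - y n) ^ 4 := by
        rw [← abs_pow]; exact abs_of_nonneg (by positivity)
      have a1 : x n ^ 2 ≤ R / (M + 1) := by
        rw [le_div_iff₀ (by positivity)]
        nlinarith [hx1 n, sq_nonneg (x n)]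
      have a2 : y n ^ 2 ≤ R / (M + 1) := by
        rw [le_div_iff₀ (by positivity)]
        nlinarith [hy1 n, sq_nonneg (y n)]
      have a3 : (x n - y n) ^ 4 ≤ 8 * (x n ^ 4 + y n ^ 4) := by
        have b1 : (x n - y n) ^ 2 ≤ 2 * (x n ^ 2 + y n ^ 2) := by nlinarith [sq_nonneg (x n + y n)]
        have b2 : ((x n - y n) ^ 2) ^ 2 ≤ (2 * (x n ^ 2 + y n ^ 2)) ^ 2 :=
          pow_le_pow_left₀ (sq_nonneg _) b1 2
        nlinarith [sq_nonneg (x n ^ 2 - y n ^ 2)]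
      rw [e]
      have c1 := mul_le_mul_of_nonneg_right a1 (sq_nonneg (x n))
      have c2 := mul_le_mul_of_nonneg_right a2 (sq_nonneg (y n))
      have : 8 * R / (M + 1) * (x n ^ 2 + y n ^ 2) =
        8 * (R / (M + 1) * x n ^ 2 + R / (M + 1) * y n ^ 2) := by ring
      rw [this]
      nlinarith
  have s1 : Summable fun n => (if n ∈ Finset.range M then δ ^ 4 else 0) :=
    summable_of_ne_finset_zero (s := Finset.range M) fun n hn => by rw [if_neg hn]
  have s2 : Summable fun n => 8 * R / (M + 1) * (x n ^ 2 + y n ^ 2) := (hx.add hy).mul_left _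
  have s3 : Summable fun n => |x n - y n| ^ 4 :=
    Summable.of_nonneg_of_le (fun n => by positivity) key (s1.add s2)
  refine (s3.tsum_le_tsum key (s1.add s2)).trans ?_
  rw [s1.tsum_add s2, tsum_mul_left, hx.tsum_add hy]
  have : (∑' n, (if n ∈ Finset.range M then δ ^ 4 else 0)) = M * δ ^ 4 := by
    rw [tsum_eq_sum (s := Finset.range M) (fun n hn => by rw [if_neg hn])]
    rw [Finset.sum_congr rfl (fun n hn => if_pos hn)]
    simp
  rw [this]
  have : 8 * R / (M + 1) * (∑' n, x n ^ 2 + ∑' n, y n ^ 2) ≤ 8 * R / (M + 1) * (R + R) := by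
    gcongr
  have e : 8 * R / ((M:ℝ) + 1) * (R + R) = 16 * R ^ 2 / (M + 1) := by ring
  linarith
end
end

noncomputable section
set_option linter.unusedSectionVars false

def S2 (s : PtCfg) : ENNReal := (∑' n, ENNReal.ofReal (s.1 n ^ 2)) + ∑' n, ENNReal.ofReal (s.2 n ^ 2)

lemma S2_lsc : LowerSemicontinuous S2 := by
  refine LowerSemicontinuous.add ?_ ?_
  · exact lowerSemicontinuous_tsum fun n => Continuous.lowerSemicontinuous (ENNReal.continuous_ofReal.comp (by fun_prop))
  · exact lowerSemicontinuous_tsum fun n => Continuous.lowerSemicontinuous (ENNReal.continuous_ofReal.comp (by fun_prop))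

lemma S2_meas : Measurable S2 := S2_lsc.measurable

lemma summable_of_ofReal {x : ℕ → ℝ} (hx : ∀ n, 0 ≤ x n) {R : ℝ} (hR : 0 ≤ R)
    (h : ∑' n, ENNReal.ofReal (x n) ≤ ENNReal.ofReal R) : Summable x ∧ ∑' n, x n ≤ R := by
  have h1 : Summable x := by
    have := ENNReal.summable_toReal (ne_top_of_le_ne_top ENNReal.ofReal_ne_top h)
    simpa [ENNReal.toReal_ofReal (hx _)] using this
  refine ⟨h1, ?_⟩
  rw [← ENNReal.ofReal_tsum_of_nonneg hx h1] at h
  exact (ENNReal.ofReal_le_ofReal_iff hR).1 h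

lemma S2_one {s : PtCfg} {R : ℝ} (hR : 0 ≤ R) (h : S2 s ≤ ENNReal.ofReal R) :
    (Summable fun n => s.1 n ^ 2) ∧ (∑' n, s.1 n ^ 2) ≤ R ∧ (Summable fun n => s.2 n ^ 2) ∧ (∑' n, s.2 n ^ 2) ≤ R := by
  have h1 := summable_of_ofReal (x := fun n => s.1 n ^ 2) (fun n => sq_nonneg _) hR (le_self_add.trans h)
  have h2 := summable_of_ofReal (x := fun n => s.2 n ^ 2) (fun n => sq_nonneg _) hR (le_add_self.trans h)
  exact ⟨h1.1, h1.2, h2.1, h2.2⟩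

lemma S2_KC {s : PtCfg} {R C : ℝ} (hR : 0 ≤ R) (hs : s ∈ KC C) (h : S2 s ≤ ENNReal.ofReal R) :
    (∀ n : ℕ, ((n : ℝ) + 1) * s.1 n ^ 2 ≤ R) ∧ (∀ n : ℕ, ((n : ℝ) + 1) * s.2 n ^ 2 ≤ R) := by
  obtain ⟨h1, h2, h3, h4⟩ := S2_one hR h
  constructor
  · intro n
    refine (anti_bound (x := fun n => s.1 n ^ 2) ?_ (fun n => sq_nonneg _) h1.hasSum n).trans h2
    intro a b hab
    exact pow_le_pow_left₀ (hs.2.2.1 b) (hs.1 hab) 2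
  · intro n
    refine (anti_bound (x := fun n => s.2 n ^ 2) ?_ (fun n => sq_nonneg _) h3.hasSum n).trans h4
    intro a b hab
    have := hs.2.1 hab
    have := hs.2.2.2.1 b
    show s.2 b ^ 2 ≤ s.2 a ^ 2
    nlinarith

lemma dPt_le {s t : PtCfg} {R C C' δ : ℝ} {M : ℕ} (hR : 0 ≤ R) (hδ : 0 ≤ δ) (hs : s ∈ KC C) (ht : t ∈ KC C')
    (h : S2 s ≤ ENNReal.ofReal R) (h' : S2 t ≤ ENNReal.ofReal R)
    (h1 : ∀ n < M, |s.1 n - t.1 n| ≤ δ) (h2 : ∀ n < M, |s.2 n - t.2 n| ≤ δ) :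
    dPt 4 s t ^ 4 ≤ 2 * M * δ ^ 4 + 32 * R ^ 2 / (M + 1) := by
  have a := S2_one hR h
  have b := S2_one hR h'
  have a' := S2_KC hR hs h
  have b' := S2_KC hR ht h'
  have e1 := tail_bound hδ a.1 b.1 a.2.1 b.2.1 a'.1 b'.1 h1
  have e2 := tail_bound hδ a.2.2.1 b.2.2.1 a.2.2.2 b.2.2.2 a'.2 b'.2 h2
  have : dPt 4 s t ^ 4 = (∑' n, |s.1 n - t.1 n| ^ 4) + ∑' n, |s.2 n - t.2 n| ^ 4 := by
    rw [dPt, ← Real.rpow_natCast, ← Real.rpow_mul (add_nonneg (tsum_nonneg fun n => by positivity) (tsum_nonneg fun n => by positivity))]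
    norm_num
  rw [this]
  have : 32 * R ^ 2 / ((M:ℝ) + 1) = 16 * R ^ 2 / ((M:ℝ) + 1) + 16 * R ^ 2 / ((M:ℝ) + 1) := by ring
  linarith

lemma dPt_nonneg (s t : PtCfg) : 0 ≤ dPt 4 s t :=
  Real.rpow_nonneg (add_nonneg (tsum_nonneg fun n => by positivity) (tsum_nonneg fun n => by positivity)) _

section
variable {Ω : Type} [MeasurableSpace Ω] {P : Measure Ω} [IsProbabilityMeasure P]
variable {E : ℕ → Ω → PtCfg} {f : ℕ → ℕ → Ω → ℝ} {T : ℕ → Ω → ℝ} {g : (ℕ → ℝ) → PtCfg}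

lemma MomConv.fatou (h : MomConv P E f T) (hgm : Measurable g) (hg : ∀ s ∈ KU, g (mom s) = s) {K : ENNReal}
    (hK : ∀ N, ∫⁻ ω, S2 (E N ω) ∂P ≤ K) : ∫⁻ ω, S2 (xig g T ω) ∂P ≤ K := by
  obtain ⟨ns, hns, H⟩ := h.sub hg strictMono_id
  have h1 : ∫⁻ ω, S2 (xig g T ω) ∂P ≤ ∫⁻ ω, liminf (fun i => S2 (E (ns i) ω)) atTop ∂P := by
    refine lintegral_mono_ae ?_
    filter_upwards [H] with ω hω
    have h2 := S2_lsc.le_liminf (xig g T ω)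
    refine h2.trans ?_
    have : liminf (fun i => S2 (E (ns i) ω)) atTop = liminf S2 (map (fun i => E (ns i) ω) atTop) := rfl
    rw [this]
    exact liminf_le_liminf_of_le hω.1
  refine h1.trans ((lintegral_liminf_le fun i => S2_meas.comp (h.E_meas hgm hg _)).trans ?_)
  refine liminf_le_of_frequently_le' ?_
  exact Frequently.of_forall fun i => hK _

lemma MomConv.dconv (h : MomConv P E f T) (hgm : Measurable g) (hg : ∀ s ∈ KU, g (mom s) = s) {K : ℝ} (hK0 : 0 ≤ K)
    (hK : ∀ N, ∫⁻ ω, S2 (E N ω) ∂P ≤ ENNReal.ofReal K) {ε : ℝ} (hε : 0 < ε) :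
    Tendsto (fun N => P {ω | ε ≤ dPt 4 (E N ω) (xig g T ω)}) atTop (nhds 0) := by
  have hK' := h.fatou hgm hg hK
  have mk : ∀ {F : Ω → PtCfg}, Measurable F → ∫⁻ ω, S2 (F ω) ∂P ≤ ENNReal.ofReal K → ∀ {R : ℝ}, 0 < R →
      P {ω | ENNReal.ofReal R ≤ S2 (F ω)} ≤ ENNReal.ofReal (K / R) := by
    intro F hF hFK R hR
    rw [ENNReal.ofReal_div_of_pos hR]
    refine (meas_ge_le_lintegral_div (S2_meas.comp hF).aemeasurable (by simpa using hR) ENNReal.ofReal_ne_top).trans ?_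
    exact ENNReal.div_le_div_right hFK _
  have goal : ∀ η > 0, ∀ᶠ N in atTop, P.real {ω | ε ≤ dPt 4 (E N ω) (xig g T ω)} ≤ η := by
    intro η hη
    obtain ⟨R, hR, hKR⟩ : ∃ R : ℝ, 0 < R ∧ K / R ≤ η / 4 := by
      refine ⟨4 * (K + 1) / η, by positivity, ?_⟩
      rw [div_le_iff₀ (by positivity)]
      field_simp
      linarith
    obtain ⟨M, hM⟩ : ∃ M : ℕ, 32 * R ^ 2 / (M + 1) < ε ^ 4 / 2 := by
      obtain ⟨M, hM⟩ := exists_nat_gt (64 * R ^ 2 / ε ^ 4)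
      refine ⟨M, ?_⟩
      rw [div_lt_iff₀ (by positivity)] at hM ⊢
      nlinarith [show 0 < ε ^ 4 by positivity]
    obtain ⟨δ, hδ, hMδ⟩ : ∃ δ : ℝ, 0 < δ ∧ 2 * M * δ ^ 4 < ε ^ 4 / 2 := by
      have : Tendsto (fun δ : ℝ => 2 * (M:ℝ) * δ ^ 4) (nhds 0) (nhds (2 * (M:ℝ) * 0 ^ 4)) :=
        Continuous.tendsto (by fun_prop) 0
      have h2 := (tendsto_order.1 this).2 (ε ^ 4 / 2) (by simp; positivity)
      obtain ⟨δ, h3, h4⟩ := ((h2.filter_mono (nhdsWithin_le_nhds (s := Set.Ioi 0))).and self_mem_nhdsWithin).exists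
      exact ⟨δ, h4, h3⟩
    have ev : ∀ (q : ℕ → PtCfg → ℝ), (∀ n, Continuous (q n)) → ∀ᶠ N in atTop, ∀ n ∈ Finset.range M,
        P.real {ω | δ ≤ |q n (E N ω) - q n (xig g T ω)|} ≤ η / (4 * (M + 1)) := by
      intro q hq
      rw [eventually_all_finset]
      intro n _
      exact tim_iff.1 (h.coord hgm hg (q n) (hq n)) δ hδ _ (by positivity)
    have hKC : ∀ᵐ ω ∂P, ∃ C, xig g T ω ∈ KC C := by
      obtain ⟨ns, hns, H⟩ := h.sub hg strictMono_id
      exact H.mono fun ω hω => hω.2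
    have hMM : (M:ℝ) * (η / (4 * (M + 1))) ≤ η / 4 := by
      rw [mul_div_assoc', div_le_div_iff₀ (by positivity) (by positivity)]
      nlinarith
    have uni : ∀ (q : ℕ → PtCfg → ℝ) N, (∀ n ∈ Finset.range M,
        P.real {ω | δ ≤ |q n (E N ω) - q n (xig g T ω)|} ≤ η / (4 * (M + 1))) →
        P.real (⋃ n ∈ Finset.range M, {ω | δ ≤ |q n (E N ω) - q n (xig g T ω)|}) ≤ η / 4 := by
      intro q N hq
      refine (measureReal_biUnion_finset_le _ _).trans ((Finset.sum_le_sum hq).trans ?_)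
      simpa using hMM
    filter_upwards [ev (fun n s => s.1 n) (fun n => by fun_prop), ev (fun n s => s.2 n) (fun n => by fun_prop)] with N h1 h2
    have u1 := uni (fun n s => s.1 n) N h1
    have u2 := uni (fun n s => s.2 n) N h2
    have mkr : ∀ {F : Ω → PtCfg}, Measurable F → ∫⁻ ω, S2 (F ω) ∂P ≤ ENNReal.ofReal K →
        P.real {ω | ENNReal.ofReal R ≤ S2 (F ω)} ≤ η / 4 := by
      intro F hF hFK
      refine le_trans ?_ hKR
      exact ENNReal.toReal_le_of_le_ofReal (by positivity) (mk hF hFK hR)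
    have u3 := mkr (h.E_meas hgm hg N) (hK N)
    have u4 := mkr (xig_meas hgm h.Tm) hK'
    have sub : P.real {ω | ε ≤ dPt 4 (E N ω) (xig g T ω)} ≤
      P.real (((⋃ n ∈ Finset.range M, {ω | δ ≤ |(E N ω).1 n - (xig g T ω).1 n|}) ∪
        (⋃ n ∈ Finset.range M, {ω | δ ≤ |(E N ω).2 n - (xig g T ω).2 n|})) ∪
        ({ω | ENNReal.ofReal R ≤ S2 (E N ω)} ∪ {ω | ENNReal.ofReal R ≤ S2 (xig g T ω)})) := by
      refine ENNReal.toReal_mono (measure_ne_top _ _) (measure_mono_ae ?_)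
      filter_upwards [hKC] with ω hω hd
      obtain ⟨C, hC⟩ := hω
      by_contra hn
      have hn' : ω ∉ ((⋃ n ∈ Finset.range M, {ω | δ ≤ |(E N ω).1 n - (xig g T ω).1 n|}) ∪
        (⋃ n ∈ Finset.range M, {ω | δ ≤ |(E N ω).2 n - (xig g T ω).2 n|})) ∪
        ({ω | ENNReal.ofReal R ≤ S2 (E N ω)} ∪ {ω | ENNReal.ofReal R ≤ S2 (xig g T ω)}) := hn
      have hd' : ε ≤ dPt 4 (E N ω) (xig g T ω) := hd
      simp only [Set.mem_union, Set.mem_iUnion, Set.mem_ofPred_eq, not_or, not_exists, not_le, Finset.mem_range] at hn'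
      obtain ⟨⟨n1, n2⟩, n3, n4⟩ := hn'
      have := dPt_le hR.le hδ.le (h.EK N ω) hC n3.le n4.le (fun n hn => (n1 n hn).le) (fun n hn => (n2 n hn).le)
      have h5 := pow_le_pow_left₀ hε.le hd' 4
      linarith
    refine sub.trans ((measureReal_union_le _ _).trans ?_)
    have w1 := measureReal_union_le (μ := P) (⋃ n ∈ Finset.range M, {ω | δ ≤ |(E N ω).1 n - (xig g T ω).1 n|})
        (⋃ n ∈ Finset.range M, {ω | δ ≤ |(E N ω).2 n - (xig g T ω).2 n|})
    have w2 := measureReal_union_le (μ := P) {ω | ENNReal.ofReal R ≤ S2 (E N ω)} {ω | ENNReal.ofReal R ≤ S2 (xig g T ω)}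
    linarith
  have : Tendsto (fun N => P.real {ω | ε ≤ dPt 4 (E N ω) (xig g T ω)}) atTop (nhds 0) := by
    refine tendsto_order.2 ⟨fun a ha => Eventually.of_forall fun N => ha.trans_le measureReal_nonneg,
      fun a ha => ?_⟩
    exact (goal (a / 2) (by positivity)).mono fun N hN => lt_of_le_of_lt hN (by linarith)
  simp_rw [measureReal_def] at this
  exact (ENNReal.tendsto_toReal_zero_iff (fun _ ↦ measure_ne_top _ _)).1 this
end
end

noncomputable section
set_option linter.unusedSectionVars false

lemma S2_EM {N : ℕ} {A : Matrix (Fin N) (Fin N) ℝ} (hA : A.IsHermitian) :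
    S2 (EMcfg A) = ENNReal.ofReal (fro A ^ 2) := by
  obtain ⟨s1, s2, h1, h2, h3⟩ := EM_hasSum hA (k := 2) (by norm_num)
  have h4 := fro_sq_trace A
  rw [hA.eq, ← sq, ← h3] at h4
  have h4' : fro A ^ 2 = s1 + s2 := h4
  rw [h4', ENNReal.ofReal_add (h1.nonneg fun n => sq_nonneg _) (h2.nonneg fun n => sq_nonneg _), S2,
    ← h1.tsum_eq, ← h2.tsum_eq, ENNReal.ofReal_tsum_of_nonneg (fun n => sq_nonneg _) h1.summable,
    ENNReal.ofReal_tsum_of_nonneg (fun n => sq_nonneg _) h2.summable]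

section
variable {Ω : Type} [MeasurableSpace Ω] {P : Measure Ω} [IsProbabilityMeasure P] {X Xd : ℤ → ℤ → Ω → ℝ}
  {νd : Measure (ℝ × ℝ)}

abbrev trW (X : ℤ → ℤ → Ω → ℝ) (m N : ℕ) (ω : Ω) : ℝ := ((scaledW1 X N ω) ^ (m + 4)).trace

lemma W_herm (X : ℤ → ℤ → Ω → ℝ) (N : ℕ) (ω : Ω) : (scaledW1 X N ω).IsHermitian := by
  rw [scaledW1_eq]; exact sW_herm _ _

lemma MomConv_X (hX : StatGauss P X) {T : ℕ → Ω → ℝ} (hT : ∀ m, Measurable (T m))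
    (hc : ∀ m, TendstoInMeasure P (trW X m) atTop (T m)) :
    MomConv P (fun N ω => EMcfg (scaledW1 X N ω)) (trW X) T where
  fm := fun m N => meas_W hX.meas _ _
  Tm := hT
  EK := fun N ω => EM_mem (W_herm X N ω)
  mo := fun N ω j => by rw [EM_mom (W_herm X N ω), trW]; congr 2; omega
  cv := hc

lemma S2_X (hX : StatGauss P X) : ∃ K : ℝ, 0 ≤ K ∧ ∀ N, ∫⁻ ω, S2 (EMcfg (scaledW1 X N ω)) ∂P ≤ ENNReal.ofReal K := by
  obtain ⟨V, hV0, hm, hV⟩ := X_sq hX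
  refine ⟨4 * V, by positivity, fun N => ?_⟩
  obtain ⟨h1, h2⟩ := sW_int hm hV0 hV N
  simp_rw [S2_EM (W_herm X N _), scaledW1_eq]
  rw [← ofReal_integral_eq_lintegral_ofReal h1 (Eventually.of_forall fun ω => sq_nonneg _)]
  exact ENNReal.ofReal_le_ofReal h2

lemma memC_ae {F : Ω → PtCfg} (hF : Measurable F) {K : ℝ} (h : ∫⁻ ω, S2 (F ω) ∂P ≤ ENNReal.ofReal K) :
    ∀ᵐ ω ∂P, MemC 2 (F ω) := by
  have := ae_lt_top (S2_meas.comp hF) (ne_top_of_le_ne_top ENNReal.ofReal_ne_top h)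
  filter_upwards [this] with ω hω
  have := S2_one (s := F ω) (R := (S2 (F ω)).toReal) ENNReal.toReal_nonneg (by
    rw [ENNReal.ofReal_toReal]; exact (show S2 (F ω) < ⊤ from hω).ne)
  simp only [MemC, sq_abs]
  exact ⟨this.1, this.2.2.1⟩

lemma coord_le {s t : PtCfg} (hs : MemC 4 s) (ht : MemC 2 t) (n : ℕ) :
    |s.1 n - t.1 n| ≤ dPt 4 s t ∧ |s.2 n - t.2 n| ≤ dPt 4 s t := by
  have sm : ∀ {x y : ℕ → ℝ}, (Summable fun n => |x n| ^ 4) → (Summable fun n => |y n| ^ 2) →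
      Summable fun n => |x n - y n| ^ 4 := by
    intro x y hx hy
    have hy4 : Summable fun n => |y n| ^ 4 := by
      refine Summable.of_norm_bounded_eventually_nat hy ?_
      filter_upwards [(tendsto_order.1 hy.tendsto_atTop_zero).2 1 one_pos] with n hn
      rw [norm_pow, Real.norm_eq_abs, abs_abs, show |y n| ^ 4 = |y n| ^ 2 * |y n| ^ 2 by ring]
      nlinarith [sq_nonneg |y n|]
    refine Summable.of_nonneg_of_le (fun n => by positivity) (fun n => ?_) ((hx.add hy4).mul_left 8)
    have b0 : |x n - y n| ≤ |x n| + |y n| := abs_sub _ _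
    have b1 := pow_le_pow_left₀ (abs_nonneg _) b0 4
    refine b1.trans ?_
    have b2 : (|x n| + |y n|) ^ 2 ≤ 2 * (|x n| ^ 2 + |y n| ^ 2) := by nlinarith [sq_nonneg (|x n| - |y n|)]
    have b3 : ((|x n| + |y n|) ^ 2) ^ 2 ≤ (2 * (|x n| ^ 2 + |y n| ^ 2)) ^ 2 :=
      pow_le_pow_left₀ (sq_nonneg _) b2 2
    nlinarith [sq_nonneg (|x n| ^ 2 - |y n| ^ 2)]
  have s1 := sm hs.1 ht.1
  have s2 := sm hs.2 ht.2
  have e : dPt 4 s t ^ 4 = (∑' n, |s.1 n - t.1 n| ^ 4) + ∑' n, |s.2 n - t.2 n| ^ 4 := by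
    rw [dPt, ← Real.rpow_natCast, ← Real.rpow_mul (add_nonneg (tsum_nonneg fun n => by positivity) (tsum_nonneg fun n => by positivity))]
    norm_num
  have l1 := s1.le_tsum n fun m _ => by positivity
  have l2 := s2.le_tsum n fun m _ => by positivity
  have z1 : 0 ≤ ∑' n, |s.1 n - t.1 n| ^ 4 := tsum_nonneg fun n => by positivity
  have z2 : 0 ≤ ∑' n, |s.2 n - t.2 n| ^ 4 := tsum_nonneg fun n => by positivity
  constructor
  · exact le_of_pow_le_pow_left₀ (n := 4) (by norm_num) (dPt_nonneg s t) (by rw [e]; linarith)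
  · exact le_of_pow_le_pow_left₀ (n := 4) (by norm_num) (dPt_nonneg s t) (by rw [e]; linarith)

lemma EM_memC {N : ℕ} {A : Matrix (Fin N) (Fin N) ℝ} (hA : A.IsHermitian) : MemC 4 (EMcfg A) := by
  obtain ⟨s1, s2, h1, h2, h3⟩ := EM_hasSum hA (k := 4) (by norm_num)
  have ab : ∀ x : ℝ, |x| ^ 4 = x ^ 4 := fun x => by
    rw [← abs_pow]; exact abs_of_nonneg (by positivity)
  simp only [MemC, ab]
  exact ⟨h1.summable, h2.summable⟩

/-- uniqueness of the limit -/
lemma xi_unique (hX : StatGauss P X) {T : ℕ → Ω → ℝ} (hT : ∀ m, Measurable (T m))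
    (hc : ∀ m, TendstoInMeasure P (trW X m) atTop (T m))
    {g : (ℕ → ℝ) → PtCfg} (hgm : Measurable g) (hg : ∀ s ∈ KU, g (mom s) = s)
    {ξ : Ω → PtCfg} (h2 : ∀ᵐ ω ∂P, MemC 2 (ξ ω))
    (hcv : ∀ ε > 0, Tendsto (fun N => P {ω | ε ≤ dPt 4 (EMcfg (scaledW1 X N ω)) (ξ ω)}) atTop (nhds 0)) :
    ξ =ᵐ[P] xig g T := by
  have H := MomConv_X hX hT hc
  have key : ∀ q : PtCfg → ℝ, Continuous q → (∀ s t, MemC 4 s → MemC 2 t → |q s - q t| ≤ dPt 4 s t) →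
      (fun ω => q (ξ ω)) =ᵐ[P] fun ω => q (xig g T ω) := by
    intro q hq hqd
    refine tendstoInMeasure_ae_unique (u := atTop) (f := fun N ω => q (EMcfg (scaledW1 X N ω))) ?_ (H.coord hgm hg q hq)
    rw [tendstoInMeasure_iff_norm]
    intro ε hε
    refine tendsto_of_tendsto_of_tendsto_of_le_of_le tendsto_const_nhds (hcv ε hε) (fun _ => zero_le) fun N => ?_
    refine measure_mono_ae ?_
    filter_upwards [h2] with ω hω h3
    exact le_trans (show ε ≤ _ from h3) (hqd _ _ (EM_memC (W_herm X N ω)) hω)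
  have k1 : ∀ n, (fun ω => (ξ ω).1 n) =ᵐ[P] fun ω => (xig g T ω).1 n := fun n =>
    key (fun s => s.1 n) (by fun_prop) fun s t hs ht => (coord_le hs ht n).1
  have k2 : ∀ n, (fun ω => (ξ ω).2 n) =ᵐ[P] fun ω => (xig g T ω).2 n := fun n =>
    key (fun s => s.2 n) (by fun_prop) fun s t hs ht => (coord_le hs ht n).2
  filter_upwards [ae_all_iff.2 k1, ae_all_iff.2 k2] with ω h3 h4
  exact Prod.ext (funext h3) (funext h4)

end
end

noncomputable section
set_option linter.unusedSectionVars false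

section
variable {Ω : Type} [MeasurableSpace Ω] {P : Measure Ω} [IsProbabilityMeasure P] {X Xd : ℤ → ℤ → Ω → ℝ}
  {νd : Measure (ℝ × ℝ)}
variable {Ω' : Type} [MeasurableSpace Ω'] {P' : Measure Ω'} [IsProbabilityMeasure P'] {X' Xd' : ℤ → ℤ → Ω' → ℝ}

def vecN (Y : ℤ → ℤ → Ω → ℝ) (N : ℕ) (ω : Ω) : Fin N × Fin N → ℝ :=
  fun p => Y ((p.1 : ℕ) + 1) ((p.2 : ℕ) + 1) ω

def coefN {N : ℕ} (a : Fin N × Fin N → ℝ) : (ℤ × ℤ) →₀ ℝ :=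
  ∑ p : Fin N × Fin N, Finsupp.single ((((p.1 : ℕ) : ℤ) + 1, ((p.2 : ℕ) : ℤ) + 1) : ℤ × ℤ) (a p)

lemma coefN_sum {N : ℕ} (a : Fin N × Fin N → ℝ) (Y : ℤ → ℤ → Ω → ℝ) (ω : Ω) :
    ∑ p ∈ (coefN a).support, coefN a p * Y p.1 p.2 ω = ∑ p, a p * vecN Y N ω p := by
  have : ∑ p ∈ (coefN a).support, coefN a p * Y p.1 p.2 ω =
      Finsupp.linearCombination ℝ (fun p : ℤ × ℤ => Y p.1 p.2 ω) (coefN a) := by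
    rw [Finsupp.linearCombination_apply, Finsupp.sum]; rfl
  rw [this, coefN, map_sum]
  refine Finset.sum_congr rfl fun p _ => ?_
  rw [Finsupp.linearCombination_single]
  rfl

lemma vecN_meas (h : ∀ j k, Measurable (Xd j k)) (N : ℕ) : Measurable (vecN Xd N) :=
  measurable_pi_lambda _ fun p => h _ _

lemma vec_law (h : Dec P X Xd νd) (h' : Dec P' X' Xd' νd) (N : ℕ) :
    P.map (vecN Xd N) = P'.map (vecN Xd' N) := by
  haveI := Measure.isProbabilityMeasure_map (μ := P) (vecN_meas h.meas N).aemeasurable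
  haveI := Measure.isProbabilityMeasure_map (μ := P') (vecN_meas h'.meas N).aemeasurable
  refine Measure.ext_of_charFunDual ?_
  funext L
  rw [charFunDual_eq_charFun_map_one, charFunDual_eq_charFun_map_one,
    Measure.map_map L.continuous.measurable (vecN_meas h.meas N),
    Measure.map_map L.continuous.measurable (vecN_meas h'.meas N)]
  have hL : ∀ v : Fin N × Fin N → ℝ, L v = ∑ p, L (Pi.single p 1) * v p := by
    intro v
    conv_lhs => rw [pi_eq_sum_univ' v, map_sum]
    refine Finset.sum_congr rfl fun p _ => ?_
    rw [map_smul, smul_eq_mul, mul_comm]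
  have e1 : L ∘ vecN Xd N = fun ω => ∑ p ∈ (coefN fun p => L (Pi.single p 1)).support,
      coefN (fun p => L (Pi.single p 1)) p * Xd p.1 p.2 ω := by
    funext ω; rw [coefN_sum]; exact hL _
  have e2 : L ∘ vecN Xd' N = fun ω => ∑ p ∈ (coefN fun p => L (Pi.single p 1)).support,
      coefN (fun p => L (Pi.single p 1)) p * Xd' p.1 p.2 ω := by
    funext ω; rw [coefN_sum]; exact hL _
  rw [e1, e2, h.gaussd, h'.gaussd]

def PhiN (N : ℕ) (v : Fin N × Fin N → ℝ) (m : ℕ) : ℝ :=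
  ((Matrix.of fun i j : Fin N => (N : ℝ)⁻¹ * (v (i, j) + v (j, i))) ^ (m + 4)).trace

lemma PhiN_cont (N : ℕ) : Continuous (PhiN N) := by
  refine continuous_pi fun m => ?_
  refine Continuous.matrix_trace (Continuous.pow ?_ _)
  exact continuous_matrix fun i j => by simp only [Matrix.of_apply]; fun_prop

lemma trW_eq (N : ℕ) (ω : Ω) : (fun m => trW Xd m N ω) = PhiN N (vecN Xd N ω) := rfl

lemma T_law (h : Dec P X Xd νd) (h' : Dec P' X' Xd' νd) {T : ℕ → Ω → ℝ} {T' : ℕ → Ω' → ℝ}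
    (hT : ∀ m, Measurable (T m)) (hT' : ∀ m, Measurable (T' m))
    (hc : ∀ m, TendstoInMeasure P (trW Xd m) atTop (T m))
    (hc' : ∀ m, TendstoInMeasure P' (trW Xd' m) atTop (T' m)) :
    P.map (fun ω m => T m ω) = P'.map (fun ω m => T' m ω) := by
  have hTm : Measurable (fun ω m => T m ω) := measurable_pi_lambda _ hT
  have hTm' : Measurable (fun ω m => T' m ω) := measurable_pi_lambda _ hT'
  haveI := Measure.isProbabilityMeasure_map (μ := P) hTm.aemeasurable
  haveI := Measure.isProbabilityMeasure_map (μ := P') hTm'.aemeasurable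
  obtain ⟨ns, hns, H⟩ := common_sub hc
  obtain ⟨ms, hms, H'⟩ := common_sub (P := P') (f := fun m i => trW Xd' m (ns i)) (T := T')
    (fun m => (hc' m).comp hns.tendsto_atTop)
  refine ext_of_forall_integral_eq_of_IsFiniteMeasure fun φ => ?_
  rw [integral_map hTm.aemeasurable φ.continuous.aestronglyMeasurable,
    integral_map hTm'.aemeasurable φ.continuous.aestronglyMeasurable]
  have c1 : Tendsto (fun i => ∫ ω, φ (fun m => trW Xd m (ns (ms i)) ω) ∂P) atTop (nhds (∫ ω, φ (fun m => T m ω) ∂P)) := by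
    refine tendsto_integral_of_dominated_convergence (fun _ => ‖φ‖) (fun i => ?_) (integrable_const _)
      (fun i => Eventually.of_forall fun ω => φ.norm_coe_le_norm _) ?_
    · exact (φ.continuous.measurable.comp (measurable_pi_lambda _ fun m => meas_W h.meas _ _)).aestronglyMeasurable
    · filter_upwards [H] with ω hω
      exact (φ.continuous.tendsto _).comp (tendsto_pi_nhds.2 fun m => (hω m).comp hms.tendsto_atTop)
  have c2 : Tendsto (fun i => ∫ ω, φ (fun m => trW Xd' m (ns (ms i)) ω) ∂P') atTop (nhds (∫ ω, φ (fun m => T' m ω) ∂P')) := by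
    refine tendsto_integral_of_dominated_convergence (fun _ => ‖φ‖) (fun i => ?_) (integrable_const _)
      (fun i => Eventually.of_forall fun ω => φ.norm_coe_le_norm _) ?_
    · exact (φ.continuous.measurable.comp (measurable_pi_lambda _ fun m => meas_W h'.meas _ _)).aestronglyMeasurable
    · filter_upwards [H'] with ω hω
      exact (φ.continuous.tendsto _).comp (tendsto_pi_nhds.2 fun m => hω m)
  refine tendsto_nhds_unique c1 (c2.congr fun i => ?_)
  simp only [trW_eq]
  have a1 := integral_map (μ := P) (vecN_meas h.meas (ns (ms i))).aemeasurable
    (f := fun v => φ (PhiN _ v)) (φ.continuous.comp (PhiN_cont _)).aestronglyMeasurable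
  have a2 := integral_map (μ := P') (vecN_meas h'.meas (ns (ms i))).aemeasurable
    (f := fun v => φ (PhiN _ v)) (φ.continuous.comp (PhiN_cont _)).aestronglyMeasurable
  rw [← a1, ← a2, vec_law h h']
end

theorem statement6 {Ω : Type} [MeasurableSpace Ω] (P : Measure Ω)
    [IsProbabilityMeasure P] (X : ℤ → ℤ → Ω → ℝ) (ν νd : Measure (ℝ × ℝ))
    (f : ℝ × ℝ → ℝ) (hX : StatGauss P X) (hν : SpectralDecomp P X ν νd f) :
    ∃ ξ : Ω → PtCfg, AEMeasurable ξ P ∧ (∀ᵐ ω ∂P, MemC 2 (ξ ω)) ∧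
      (∀ ε > 0, Tendsto
        (fun N => P {ω | ε ≤ dPt 4 (EMcfg (scaledW1 X N ω)) (ξ ω)})
        atTop (nhds 0)) ∧
      ∀ {Ω' : Type} [MeasurableSpace Ω'] (P' : Measure Ω')
        [IsProbabilityMeasure P'] (X' : ℤ → ℤ → Ω' → ℝ)
        (ν' : Measure (ℝ × ℝ)) (f' : ℝ × ℝ → ℝ),
        StatGauss P' X' → SpectralDecomp P' X' ν' νd f' →
        ∀ ξ' : Ω' → PtCfg, AEMeasurable ξ' P' → (∀ᵐ ω ∂P', MemC 2 (ξ' ω)) →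
          (∀ ε > 0, Tendsto
            (fun N => P' {ω | ε ≤ dPt 4 (EMcfg (scaledW1 X' N ω)) (ξ' ω)})
            atTop (nhds 0)) →
          P'.map ξ' = P.map ξ := by
  obtain ⟨g, hgm, hg⟩ := exists_inv
  obtain ⟨Xd, hD⟩ := Dec_exists hX hν
  obtain ⟨T, hT, hTd, hTc⟩ := T_exists hX hD
  have H := MomConv_X hX hT hTc
  obtain ⟨K, hK0, hK⟩ := S2_X hX
  refine ⟨xig g T, (xig_meas hgm hT).aemeasurable, memC_ae (xig_meas hgm hT) (H.fatou hgm hg hK),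
    fun ε hε => H.dconv hgm hg hK0 hK hε, ?_⟩
  intro Ω' _ P' _ X' ν' f' hX' hν' ξ' _ h2' hcv'
  obtain ⟨Xd', hD'⟩ := Dec_exists hX' hν'
  obtain ⟨T', hT', hTd', hTc'⟩ := T_exists hX' hD'
  have e := xi_unique hX' hT' hTc' hgm hg h2' hcv'
  rw [Measure.map_congr e]
  have hG : Measurable fun (t : ℕ → ℝ) => g (fun j => t (j + 4)) :=
    hgm.comp (measurable_pi_lambda _ fun j => measurable_pi_apply _)
  have e1 : P.map (xig g T) = (P.map (fun ω m => T m ω)).map (fun t => g (fun j => t (j + 4))) :=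
    (Measure.map_map hG (measurable_pi_lambda _ hT)).symm
  have e2 : P'.map (xig g T') = (P'.map (fun ω m => T' m ω)).map (fun t => g (fun j => t (j + 4))) :=
    (Measure.map_map hG (measurable_pi_lambda _ hT')).symm
  rw [e1, e2, T_law hD hD' hT hT' hTd hTd']

end
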